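/- Let (W,W',G) be a g-Stein coupling, i.e., E(G·f(W') − G·f(W)) = E(f(W)g(W)) for all absolutely continuous functions f for which both expectations exist, with |W'−W| ≤ δ, where g satisfies (A1)–(A4). Set K̂₁ = ∫_{|t|≤δ} G(I(0≤t≤W'−W)−I(W'−W≤t<0)) dt and assume K̂₁ ≥ 0. Assume there exist τ₁>0 and δ₁>0 with |E(K̂₁|W)−1| ≤ δ₁(|g(W)|^{τ₁}+1), and constants d₀≥1, d₁>0 with E(K̂₁|W) ≤ d₀ and δ|g(W)| ≤ d₁. Then there is a finite constant C, depending only on d₀, d₁, c₁, c₂, c₃, τ₁ and max(g(1),|g(−1)|), such that for every z ≥ 0 with δ·z·g(z)² + δ₁·z·g(z)^{τ₁+1} ≤ 1, |P(W>z)/P(Y>z) − 1| ≤ C·( δ(1+z·g(z)²) + δ₁(1+z·g(z)^{τ₁+1}) ). -/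

import Mathlib

open MeasureTheory Real

/-- Conditions (A1)–(A4) on the function `g`. -/
structure GCond (g : ℝ → ℝ) (c₂ c₃ : ℝ) : Prop where
  diff : Differentiable ℝ g
  mono : Monotone g
  zero : g 0 = 0
  sign : ∀ y : ℝ, y ≠ 0 → 0 < y * g y
  c₂pos : 0 < c₂
  subadd : ∀ x y : ℝ, |g (x + y)| ≤ c₂ * (|g x| + |g y| + 1)
  c₃ge : 1 ≤ c₃
  derivBound : ∀ y : ℝ, |deriv g y| ≤ c₃ * (1 + |g y|) / (1 + |y|)

/-- `G(y) = ∫₀^y g`. -/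
noncomputable def Gfun (g : ℝ → ℝ) (y : ℝ) : ℝ := ∫ t in (0:ℝ)..y, g t

/-- The density `p(y) = c₁ e^{-G(y)}`. -/
noncomputable def pfun (g : ℝ → ℝ) (c₁ y : ℝ) : ℝ := c₁ * Real.exp (-(Gfun g y))

/-- `(W, W', G)` is a `g`-Stein coupling:
`E(G f(W') - G f(W)) = E(f(W) g(W))` for all absolutely continuous `f`
for which both expectations exist. -/
def SteinCoupling {Ω : Type} [MeasurableSpace Ω] (μ : Measure Ω)
    (W W' Gv : Ω → ℝ) (g : ℝ → ℝ) : Prop :=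
  ∀ f : ℝ → ℝ, Differentiable ℝ f →
    Integrable (fun ω => Gv ω * f (W' ω) - Gv ω * f (W ω)) μ →
    Integrable (fun ω => f (W ω) * g (W ω)) μ →
    ∫ ω, (Gv ω * f (W' ω) - Gv ω * f (W ω)) ∂μ = ∫ ω, f (W ω) * g (W ω) ∂μ

/-- `K̂₁ = ∫_{|t|≤δ} G (I(0 ≤ t ≤ W'-W) - I(W'-W ≤ t < 0)) dt` for Stein couplings. -/
noncomputable def KhatOneSC {Ω : Type} (W W' Gv : Ω → ℝ) (δ : ℝ) (ω : Ω) : ℝ :=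
  ∫ t in (-δ)..δ,
    Gv ω * ((if 0 ≤ t ∧ t ≤ W' ω - W ω then (1:ℝ) else 0)
      - (if W' ω - W ω ≤ t ∧ t < 0 then (1:ℝ) else 0))

/-! ### Part A : facts about `g`, `G` and the Mills ratio -/

structure GC (g : ℝ → ℝ) (c₁ c₂ c₃ : ℝ) : Prop where
  gc : GCond g c₂ c₃
  c1 : 0 < c₁
  nrm : (∫ y : ℝ, pfun g c₁ y) = 1

namespace GC

variable {g : ℝ → ℝ} {c₁ c₂ c₃ : ℝ}

lemma cont (H : GC g c₁ c₂ c₃) : Continuous g := H.gc.diff.continuous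

lemma nonneg (H : GC g c₁ c₂ c₃) {x : ℝ} (hx : 0 ≤ x) : 0 ≤ g x := by
  have := H.gc.mono hx
  rwa [H.gc.zero] at this

lemma nonpos (H : GC g c₁ c₂ c₃) {x : ℝ} (hx : x ≤ 0) : g x ≤ 0 := by
  have := H.gc.mono hx
  rwa [H.gc.zero] at this

lemma c3pos (H : GC g c₁ c₂ c₃) : 0 < c₃ := by linarith [H.gc.c₃ge]

lemma deriv_le (H : GC g c₁ c₂ c₃) {x : ℝ} (hx : 0 ≤ x) :
    |deriv g x| ≤ c₃ * (1 + g x) / (1 + x) := by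
  have := H.gc.derivBound x
  rwa [abs_of_nonneg (H.nonneg hx), abs_of_nonneg hx] at this

lemma deriv_le' (H : GC g c₁ c₂ c₃) {x : ℝ} (hx : 0 ≤ x) :
    |deriv g x| ≤ c₃ * (1 + g x) := by
  refine (H.deriv_le hx).trans ?_
  have h1 := H.nonneg hx
  have h2 := H.c3pos
  rw [div_le_iff₀ (by linarith)]
  nlinarith [mul_nonneg (mul_nonneg h2.le (by linarith : 0 ≤ 1 + g x)) hx]

lemma growth (H : GC g c₁ c₂ c₃) {x y : ℝ} (hx : 0 ≤ x) (hxy : x ≤ y) :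
    1 + g y ≤ exp (c₃ * (y - x)) * (1 + g x) := by
  have hd : ∀ t : ℝ, HasDerivAt (fun t => (1 + g t) * exp (-(c₃ * t)))
      (deriv g t * exp (-(c₃ * t)) + (1 + g t) * (exp (-(c₃ * t)) * (-(c₃ * 1)))) t := by
    intro t
    refine HasDerivAt.mul ?_ ?_
    · exact ((H.gc.diff t).hasDerivAt).const_add 1
    · exact (((hasDerivAt_id t).const_mul c₃).neg).exp
  have hanti : AntitoneOn (fun t => (1 + g t) * exp (-(c₃ * t))) (Set.Ici 0) := by
    apply antitoneOn_of_deriv_nonpos (convex_Ici 0)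
    · exact fun t _ => (hd t).continuousAt.continuousWithinAt
    · exact fun t _ => (hd t).differentiableAt.differentiableWithinAt
    · intro t ht
      rw [interior_Ici] at ht
      rw [(hd t).deriv]
      have h1 := H.deriv_le' (le_of_lt ht)
      have h2 := le_abs_self (deriv g t)
      have h3 := exp_pos (-(c₃ * t))
      nlinarith
  have := hanti (Set.mem_Ici.2 hx) (Set.mem_Ici.2 (hx.trans hxy)) hxy
  simp only at this
  have e : exp (c₃ * (y - x)) = exp (-(c₃ * x)) * exp (c₃ * y) := by
    rw [← exp_add]; ring_nf
  have e2 : exp (-(c₃ * y)) * exp (c₃ * y) = 1 := by rw [← exp_add]; simp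
  rw [e]
  have h3 := exp_pos (c₃ * y)
  calc 1 + g y = ((1 + g y) * exp (-(c₃ * y))) * exp (c₃ * y) := by
        rw [mul_assoc, e2, mul_one]
    _ ≤ ((1 + g x) * exp (-(c₃ * x))) * exp (c₃ * y) := by gcongr
    _ = _ := by ring

lemma growth0 (H : GC g c₁ c₂ c₃) {y : ℝ} (hy : 0 ≤ y) : 1 + g y ≤ exp (c₃ * y) := by
  have := H.growth le_rfl hy
  simpa [H.gc.zero] using this

lemma Gderiv (H : GC g c₁ c₂ c₃) (x : ℝ) : HasDerivAt (Gfun g) (g x) x := by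
  unfold Gfun
  exact intervalIntegral.integral_hasDerivAt_right (H.cont.intervalIntegrable _ _)
    (H.cont.stronglyMeasurableAtFilter _ _) H.cont.continuousAt

lemma Gcont (H : GC g c₁ c₂ c₃) : Continuous (Gfun g) :=
  continuous_iff_continuousAt.2 fun x => (H.Gderiv x).continuousAt

lemma G0 : Gfun g 0 = 0 := by simp [Gfun]

lemma Gdiff (H : GC g c₁ c₂ c₃) (x y : ℝ) : Gfun g y - Gfun g x = ∫ t in x..y, g t := by
  unfold Gfun
  rw [intervalIntegral.integral_interval_sub_left] <;> exact H.cont.intervalIntegrable _ _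

lemma Gup (H : GC g c₁ c₂ c₃) {x y : ℝ} (h : x ≤ y) :
    Gfun g y - Gfun g x ≤ g y * (y - x) := by
  rw [H.Gdiff]
  have := intervalIntegral.integral_mono_on h (H.cont.intervalIntegrable x y)
    (intervalIntegrable_const (μ := volume) (c := g y)) (fun t ht => H.gc.mono ht.2)
  simp at this
  linarith

lemma Glow (H : GC g c₁ c₂ c₃) {x y : ℝ} (h : x ≤ y) :
    g x * (y - x) ≤ Gfun g y - Gfun g x := by
  rw [H.Gdiff]
  have := intervalIntegral.integral_mono_on h 
    (intervalIntegrable_const (μ := volume) (c := g x)) (H.cont.intervalIntegrable x y) (fun t ht => H.gc.mono ht.1)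
  simp at this
  linarith

lemma Gmono (H : GC g c₁ c₂ c₃) {x y : ℝ} (hx : 0 ≤ x) (h : x ≤ y) : Gfun g x ≤ Gfun g y := by
  have := H.Glow h
  have := mul_nonneg (H.nonneg hx) (sub_nonneg.2 h)
  linarith

lemma Gnonneg (H : GC g c₁ c₂ c₃) {x : ℝ} (hx : 0 ≤ x) : 0 ≤ Gfun g x := by
  have := H.Gmono le_rfl hx
  rwa [G0] at this

lemma Gle (H : GC g c₁ c₂ c₃) {x : ℝ} (hx : 0 ≤ x) : Gfun g x ≤ x * g x := by
  have := H.Gup hx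
  rw [G0] at this
  linarith

lemma expInt (H : GC g c₁ c₂ c₃) : Integrable (fun y => exp (-(Gfun g y))) := by
  by_contra hn
  have h := H.nrm
  unfold pfun at h
  rw [integral_const_mul, integral_undef hn] at h
  simp at h

lemma expTot (H : GC g c₁ c₂ c₃) : ∫ y, exp (-(Gfun g y)) = 1 / c₁ := by
  have h := H.nrm
  unfold pfun at h
  rw [integral_const_mul] at h
  have := H.c1
  field_simp
  linarith

/-- lower bound on `g` away from the origin -/
lemma glow (H : GC g c₁ c₂ c₃) {x : ℝ} (hx : exp 1 / c₁ ≤ x) : 1 ≤ exp 1 / c₁ * g x := by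
  have hc := H.c1
  set z := exp 1 / c₁ with hz
  have hz0 : 0 < z := by positivity
  have h1 : z * exp (-(Gfun g z)) ≤ 1 / c₁ := by
    rw [← H.expTot]
    calc z * exp (-(Gfun g z)) = ∫ y in Set.Ioc 0 z, exp (-(Gfun g z)) := by
          simp [hz0.le]
      _ ≤ ∫ y in Set.Ioc 0 z, exp (-(Gfun g y)) := by
          apply setIntegral_mono_on (integrableOn_const (by simp)) H.expInt.integrableOn measurableSet_Ioc
          intro y hy
          apply exp_le_exp.2
          have := H.Gmono hy.1.le hy.2
          linarith
      _ ≤ _ := setIntegral_le_integral H.expInt (Filter.Eventually.of_forall fun y => (exp_pos _).le)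
  have h2 : exp (1 - Gfun g z) ≤ 1 := by
    have : exp (1 - Gfun g z) = c₁ * (z * exp (-(Gfun g z))) := by
      rw [sub_eq_add_neg, exp_add, hz]; field_simp
    rw [this]
    calc c₁ * (z * exp (-(Gfun g z))) ≤ c₁ * (1 / c₁) := by gcongr
      _ = 1 := by field_simp
  have h3 : 1 ≤ Gfun g z := by
    have := exp_le_one_iff.1 h2
    linarith
  have h4 := H.Gle hz0.le
  have h5 := H.gc.mono hx
  nlinarith

end GC

/-- Mills ratio -/
noncomputable def mills (g : ℝ → ℝ) (w : ℝ) : ℝ :=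
  exp (Gfun g w) * ∫ y in Set.Ioi w, exp (-(Gfun g y))

namespace GC

variable {g : ℝ → ℝ} {c₁ c₂ c₃ : ℝ}

lemma mills_deriv (H : GC g c₁ c₂ c₃) (w : ℝ) :
    HasDerivAt (mills g) (g w * mills g w - 1) w := by
  have hc : Continuous (fun y => exp (-(Gfun g y))) := (H.Gcont.neg).rexp
  have e : (fun w => ∫ y in Set.Ioi w, exp (-(Gfun g y))) =
      fun w => (∫ y in Set.Ioi 0, exp (-(Gfun g y))) - ∫ y in (0:ℝ)..w, exp (-(Gfun g y)) := by
    funext w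
    have := intervalIntegral.integral_Ioi_sub_Ioi' (f := fun y => exp (-(Gfun g y))) (a := 0) (b := w)
      (μ := volume) H.expInt.integrableOn H.expInt.integrableOn
    linarith
  have h1 : HasDerivAt (fun w => ∫ y in Set.Ioi w, exp (-(Gfun g y))) (- exp (-(Gfun g w))) w := by
    rw [e]
    exact (intervalIntegral.integral_hasDerivAt_right (hc.intervalIntegrable _ _)
      (hc.stronglyMeasurableAtFilter _ _) hc.continuousAt).const_sub _
  have h2 := (H.Gderiv w).exp.mul h1
  refine HasDerivAt.congr_deriv (f := mills g) h2 ?_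
  have : exp (Gfun g w) * exp (-(Gfun g w)) = 1 := by rw [← exp_add]; simp
  unfold mills
  linear_combination -this

lemma mills_nonneg (g : ℝ → ℝ) (w : ℝ) : 0 ≤ mills g w := by
  unfold mills
  have : 0 ≤ ∫ y in Set.Ioi w, exp (-(Gfun g y)) :=
    integral_nonneg fun y => (exp_pos _).le
  positivity

lemma mills_eq (g : ℝ → ℝ) (c₁ w : ℝ) :
    (∫ y in Set.Ioi w, pfun g c₁ y) = c₁ * exp (-(Gfun g w)) * mills g w := by
  unfold mills pfun
  rw [integral_const_mul]
  have : exp (Gfun g w) * exp (-(Gfun g w)) = 1 := by rw [← exp_add]; simp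
  linear_combination (- c₁ * ∫ y in Set.Ioi w, exp (-(Gfun g y))) * this

lemma mills_g (H : GC g c₁ c₂ c₃) {w : ℝ} (hw : 0 ≤ w) : g w * mills g w ≤ 1 := by
  rcases (H.nonneg hw).eq_or_lt with h | h
  · rw [← h]; simp
  have hi : IntegrableOn (fun y => exp (-(g w) * y)) (Set.Ioi w) := exp_neg_integrableOn_Ioi w h
  have h1 : ∫ y in Set.Ioi w, exp (-(Gfun g y)) ≤
      ∫ y in Set.Ioi w, exp (g w * w - Gfun g w) * exp (-(g w) * y) := by
    apply setIntegral_mono_on H.expInt.integrableOn (hi.const_mul _) measurableSet_Ioi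
    intro y hy
    rw [← exp_add]
    apply exp_le_exp.2
    have := H.Glow (le_of_lt hy)
    linarith
  rw [integral_const_mul, integral_exp_mul_Ioi (by linarith)] at h1
  unfold mills
  calc g w * (exp (Gfun g w) * ∫ y in Set.Ioi w, exp (-(Gfun g y)))
      ≤ g w * (exp (Gfun g w) * (exp (g w * w - Gfun g w) * (-exp (-g w * w) / -g w))) := by gcongr
    _ = exp (Gfun g w) * exp (g w * w - Gfun g w) * exp (-g w * w) := by field_simp
    _ = 1 := by rw [← exp_add, ← exp_add]; simp
    _ ≤ 1 := le_rfl

lemma mills_lower (H : GC g c₁ c₂ c₃) {w : ℝ} (hw : 0 ≤ w) :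
    exp (-exp c₃) ≤ (1 + g w) * mills g w := by
  have hg := H.nonneg hw
  have hpos : 0 < 1 + g w := by linarith
  set ℓ := 1 / (1 + g w) with hℓ
  have hℓ0 : 0 < ℓ := by positivity
  have hℓ1 : ℓ ≤ 1 := by rw [hℓ, div_le_one hpos]; linarith
  have key : ∀ y ∈ Set.Ioc w (w + ℓ), exp (-(Gfun g w) - exp c₃) ≤ exp (-(Gfun g y)) := by
    intro y hy
    apply exp_le_exp.2
    have h1 := H.Gup hy.1.le
    have h2 := H.growth hw hy.1.le
    have h3 : exp (c₃ * (y - w)) ≤ exp c₃ := by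
      apply exp_le_exp.2
      have := H.c3pos
      nlinarith [hy.2]
    have h4 : g y * (y - w) ≤ exp c₃ := by
      calc g y * (y - w) ≤ (exp c₃ * (1 + g w)) * ℓ := by
            apply mul_le_mul _ (by linarith [hy.2]) (by linarith [hy.1]) (by positivity)
            have := mul_le_mul_of_nonneg_right h3 hpos.le
            linarith
        _ = exp c₃ := by rw [hℓ]; field_simp
    linarith
  have h1 : ℓ * exp (-(Gfun g w) - exp c₃) ≤ ∫ y in Set.Ioi w, exp (-(Gfun g y)) := by
    calc ℓ * exp (-(Gfun g w) - exp c₃) = ∫ y in Set.Ioc w (w + ℓ), exp (-(Gfun g w) - exp c₃) := by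
          simp [hℓ0.le]
      _ ≤ ∫ y in Set.Ioc w (w + ℓ), exp (-(Gfun g y)) :=
          setIntegral_mono_on (integrableOn_const (by simp)) H.expInt.integrableOn measurableSet_Ioc key
      _ ≤ _ := setIntegral_mono_set H.expInt.integrableOn
          (Filter.Eventually.of_forall fun y => (exp_pos _).le)
          (Set.Ioc_subset_Ioi_self.eventuallyLE)
  unfold mills
  calc exp (-exp c₃) = (1 + g w) * (exp (Gfun g w) * (ℓ * exp (-(Gfun g w) - exp c₃))) := by
        rw [sub_eq_add_neg, exp_add, hℓ]
        have : exp (Gfun g w) * exp (-(Gfun g w)) = 1 := by rw [← exp_add]; simp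
        field_simp
        exact this.symm
    _ ≤ _ := by gcongr

lemma mills_le (H : GC g c₁ c₂ c₃) {w : ℝ} (hw : 0 ≤ w) :
    mills g w ≤ exp 1 / c₁ + exp (exp 1 / c₁ * exp (c₃ * (exp 1 / c₁))) / c₁ := by
  have hc := H.c1
  set z := exp 1 / c₁ with hz
  have hz0 : 0 < z := by positivity
  rcases le_total z w with h | h
  · have h1 := H.glow h
    have h2 := H.mills_g hw
    have h3 := mills_nonneg g w
    have : mills g w ≤ z := by
      calc mills g w = mills g w * 1 := by ring
        _ ≤ mills g w * (z * g w) := by gcongr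
        _ = z * (g w * mills g w) := by ring
        _ ≤ z * 1 := by gcongr
        _ = z := by ring
    have : 0 ≤ exp (z * exp (c₃ * z)) / c₁ := by positivity
    linarith
  · unfold mills
    have h1 : Gfun g w ≤ z * exp (c₃ * z) := by
      calc Gfun g w ≤ Gfun g z := H.Gmono hw h
        _ ≤ z * g z := H.Gle hz0.le
        _ ≤ _ := by
          have := H.growth0 hz0.le
          gcongr
          linarith
    have h2 : ∫ y in Set.Ioi w, exp (-(Gfun g y)) ≤ 1 / c₁ := by
      rw [← H.expTot]
      exact setIntegral_le_integral H.expInt (Filter.Eventually.of_forall fun y => (exp_pos _).le)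
    have h3 : 0 ≤ ∫ y in Set.Ioi w, exp (-(Gfun g y)) :=
      integral_nonneg fun y => (exp_pos _).le
    have : exp (Gfun g w) * (∫ y in Set.Ioi w, exp (-(Gfun g y))) ≤ exp (z * exp (c₃ * z)) * (1 / c₁) := by
      gcongr
    rw [mul_one_div] at this
    linarith

/-- comparison of `(1+z)(1+g)^s` and `1 + z g^s`. -/
lemma compare (H : GC g c₁ c₂ c₃) {s z : ℝ} (hs : 0 ≤ s) (hz : 0 ≤ z) :
    (1 + z) * (1 + g z) ^ s ≤
      ((1 + c₁) * (1 + exp 1 / c₁) ^ s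
        + (1 + exp 1 / c₁) * (exp (c₃ * (exp 1 / c₁))) ^ s) * (1 + z * g z ^ s) := by
  have hc := H.c1
  set z0 := exp 1 / c₁ with hz0
  have hz0p : 0 < z0 := by positivity
  have hg := H.nonneg hz
  have hgs : 0 ≤ g z ^ s := rpow_nonneg hg s
  have hA : 0 ≤ (1 + c₁) * (1 + z0) ^ s := by positivity
  have hB : 0 ≤ (1 + z0) * (exp (c₃ * z0)) ^ s := by positivity
  have hzg : 0 ≤ z * g z ^ s := by positivity
  rcases le_total z0 z with h | h
  · have h1 := H.glow h
    have h2 : 1 + g z ≤ (1 + z0) * g z := by linarith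
    have h3 : 1 + z ≤ (1 + c₁) * z := by
      have : 1 ≤ c₁ * z := by
        have e1 : 1 ≤ exp 1 := one_le_exp (by norm_num)
        calc 1 ≤ exp 1 := e1
          _ = c₁ * z0 := by rw [hz0]; field_simp
          _ ≤ c₁ * z := by gcongr
      linarith
    calc (1 + z) * (1 + g z) ^ s ≤ ((1 + c₁) * z) * ((1 + z0) * g z) ^ s := by
          gcongr
      _ = ((1 + c₁) * (1 + z0) ^ s) * (z * g z ^ s) := by
          rw [mul_rpow (by positivity) hg]; ring
      _ ≤ _ := by nlinarith
  · have h1 : 1 + g z ≤ exp (c₃ * z0) := by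
      refine (H.growth0 hz).trans (exp_le_exp.2 ?_)
      have := H.c3pos
      gcongr
    calc (1 + z) * (1 + g z) ^ s ≤ (1 + z0) * (exp (c₃ * z0)) ^ s := by gcongr
      _ ≤ _ := by nlinarith

end GC


/-! ### Part B : abstract set-up on the real line -/

structure SD (g κ : ℝ → ℝ) (c₁ c₂ c₃ d₀ d₁ τ δ δ₁ : ℝ) (P ν : Measure ℝ) : Prop where
  G : GC g c₁ c₂ c₃
  hd₀ : 1 ≤ d₀
  hd₁ : 0 < d₁
  hτ : 0 < τ
  hδ : 0 < δ
  hδ4 : δ ≤ 1 / 4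
  hδ₁ : 0 < δ₁
  pP : IsProbabilityMeasure P
  fν : IsFiniteMeasure ν
  κm : Measurable κ
  κ0 : ∀ᵐ w ∂P, 0 ≤ κ w
  κd : ∀ᵐ w ∂P, κ w ≤ d₀
  κ1 : ∀ᵐ w ∂P, |κ w - 1| ≤ δ₁ * (|g w| ^ τ + 1)
  gd : ∀ᵐ w ∂P, δ * |g w| ≤ d₁
  mean : ∫ w, g w ∂P = 0
  gw : Integrable (fun w => g w * w) P
  id : ∀ ψ : ℝ → ℝ, Measurable ψ → (∃ M, ∀ x, |ψ x| ≤ M) →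
    ∫ x, ψ x ∂ν = ∫ w, g w * (∫ x in (0:ℝ)..w, ψ x) ∂P
  up : ∀ (ψ φ : ℝ → ℝ) (M : ℝ), Measurable ψ → Measurable φ → (∀ x, |ψ x| ≤ M) →
    (∀ x, |φ x| ≤ M) → (∀ w t, |t| ≤ δ → ψ (w + t) ≤ φ w) →
    ∫ x, ψ x ∂ν ≤ ∫ w, φ w * κ w ∂P

noncomputable def rr (g : ℝ → ℝ) (P : Measure ℝ) (x : ℝ) : ℝ := ∫ w in Set.Ioi x, g w ∂P

lemma ind_zero {φ : ℝ → ℝ} {α w : ℝ} (hα : 0 ≤ α) (hw : w ≤ α) :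
    ∫ x in (0:ℝ)..w, (Set.Ioi α).indicator φ x = 0 := by
  have : ∫ x in (0:ℝ)..w, (Set.Ioi α).indicator φ x = ∫ x in (0:ℝ)..w, (0:ℝ) := by
    apply intervalIntegral.integral_congr_ae
    filter_upwards with x hx
    have h1 : x ≤ α := by
      have := hx.2
      exact this.trans (max_le hα hw)
    simp [h1]
  simpa using this

lemma ind_Ioi {φ F : ℝ → ℝ} {α w : ℝ} (hα : 0 ≤ α) (hw : α < w)
    (hF : ∀ x, α ≤ x → HasDerivAt F (φ x) x)
    (hi : IntervalIntegrable φ volume α w) :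
    ∫ x in (0:ℝ)..w, (Set.Ioi α).indicator φ x = F w - F α := by
  have h1 : ∫ x in α..w, (Set.Ioi α).indicator φ x = ∫ x in α..w, φ x := by
    apply intervalIntegral.integral_congr_ae
    filter_upwards with x hx
    rw [Set.uIoc_of_le hw.le] at hx
    simp [hx.1]
  have h2 : ∫ x in α..w, φ x = F w - F α := by
    apply intervalIntegral.integral_eq_sub_of_hasDerivAt _ hi
    intro x hx
    rw [Set.uIcc_of_le hw.le] at hx
    exact hF x hx.1
  have i1 : IntervalIntegrable ((Set.Ioi α).indicator φ) volume α w := by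
    rw [intervalIntegrable_iff] at hi ⊢
    exact hi.indicator measurableSet_Ioi
  have i0 : IntervalIntegrable ((Set.Ioi α).indicator φ) volume 0 α := by
    rw [intervalIntegrable_iff]
    apply IntegrableOn.congr_fun (f := fun _ => (0:ℝ)) integrableOn_zero _ measurableSet_uIoc
    intro x hx
    rw [Set.uIoc_of_le hα] at hx
    simp [hx.2]
  rw [← intervalIntegral.integral_add_adjacent_intervals i0 i1, ind_zero hα le_rfl, h1, h2, zero_add]

lemma ind_Ioc {φ F : ℝ → ℝ} {α β w : ℝ} (hα : 0 ≤ α) (hαβ : α ≤ β) (hw : α < w)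
    (hF : ∀ x, α ≤ x → HasDerivAt F (φ x) x)
    (hi : ∀ b, IntervalIntegrable φ volume α b) :
    ∫ x in (0:ℝ)..w, (Set.Ioc α β).indicator φ x = F (min w β) - F α := by
  have key : ∀ v, 0 ≤ v → v ≤ β → ∫ x in (0:ℝ)..v, (Set.Ioc α β).indicator φ x
      = ∫ x in (0:ℝ)..v, (Set.Ioi α).indicator φ x := by
    intro v hv0 hv
    apply intervalIntegral.integral_congr_ae
    filter_upwards with x hx
    rw [Set.uIoc_of_le hv0] at hx
    by_cases h : α < x
    · simp [h, hx.2.trans hv]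
    · simp [h]
  rcases le_or_gt w β with h | h
  · rw [min_eq_left h, key w (by linarith) h, ind_Ioi hα hw hF (hi w)]
  · rw [min_eq_right h.le]
    have hβ0 : 0 ≤ β := hα.trans hαβ
    have z : ∀ x ∈ Set.uIoc β w, (0:ℝ) = (Set.Ioc α β).indicator φ x := by
      intro x hx
      rw [Set.uIoc_of_le h.le] at hx
      have : ¬ x ≤ β := not_le.2 hx.1
      simp [this]
    have i1 : IntervalIntegrable ((Set.Ioc α β).indicator φ) volume β w := by
      rw [intervalIntegrable_iff]
      exact IntegrableOn.congr_fun (f := fun _ => (0:ℝ)) integrableOn_zero z measurableSet_uIoc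
    have z1 : ∫ x in β..w, (Set.Ioc α β).indicator φ x = 0 := by
      have : ∫ x in β..w, (Set.Ioc α β).indicator φ x = ∫ x in β..w, (0:ℝ) := by
        apply intervalIntegral.integral_congr_ae
        filter_upwards with x hx
        exact (z x hx).symm
      simpa using this
    have i0 : IntervalIntegrable ((Set.Ioc α β).indicator φ) volume 0 β := by
      rw [intervalIntegrable_iff, Set.uIoc_of_le hβ0]
      have := hi β
      rw [intervalIntegrable_iff, Set.uIoc_of_le hαβ] at this
      exact ((integrable_indicator_iff measurableSet_Ioc).2 this).integrableOn
    rw [← intervalIntegral.integral_add_adjacent_intervals i0 i1, z1, add_zero, key β hβ0 le_rfl]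
    rcases hαβ.eq_or_lt with e | e
    · rw [← e, ind_zero hα le_rfl]; simp
    · exact ind_Ioi hα e hF (hi β)

namespace SD

variable {g κ : ℝ → ℝ} {c₁ c₂ c₃ d₀ d₁ τ δ δ₁ : ℝ} {P ν : Measure ℝ}

lemma gmeas (S : SD g κ c₁ c₂ c₃ d₀ d₁ τ δ δ₁ P ν) : Measurable g := S.G.cont.measurable

lemma gbd (S : SD g κ c₁ c₂ c₃ d₀ d₁ τ δ δ₁ P ν) : ∀ᵐ w ∂P, |g w| ≤ d₁ / δ := by
  filter_upwards [S.gd] with w hw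
  rw [le_div_iff₀ S.hδ]
  linarith

lemma gint (S : SD g κ c₁ c₂ c₃ d₀ d₁ τ δ δ₁ P ν) : Integrable g P := by
  have := S.pP
  refine Integrable.of_bound S.gmeas.aestronglyMeasurable (d₁ / δ) ?_
  filter_upwards [S.gbd] with w hw
  simpa using hw

lemma bint (S : SD g κ c₁ c₂ c₃ d₀ d₁ τ δ δ₁ P ν) {φ : ℝ → ℝ} (hm : Measurable φ) {M : ℝ}
    (hb : ∀ x, |φ x| ≤ M) : Integrable φ P := by
  have := S.pP
  exact Integrable.of_bound hm.aestronglyMeasurable M (Filter.Eventually.of_forall (by simpa using hb))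

lemma bintν (S : SD g κ c₁ c₂ c₃ d₀ d₁ τ δ δ₁ P ν) {φ : ℝ → ℝ} (hm : Measurable φ) {M : ℝ}
    (hb : ∀ x, |φ x| ≤ M) : Integrable φ ν := by
  have := S.fν
  exact Integrable.of_bound hm.aestronglyMeasurable M (Filter.Eventually.of_forall (by simpa using hb))

lemma κabs (S : SD g κ c₁ c₂ c₃ d₀ d₁ τ δ δ₁ P ν) : ∀ᵐ w ∂P, ‖κ w‖ ≤ d₀ := by
  filter_upwards [S.κ0, S.κd] with w h1 h2
  rw [Real.norm_eq_abs, abs_of_nonneg h1]; exact h2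

lemma κ1abs (S : SD g κ c₁ c₂ c₃ d₀ d₁ τ δ δ₁ P ν) : ∀ᵐ w ∂P, |κ w - 1| ≤ d₀ := by
  filter_upwards [S.κ0, S.κd] with w h1 h2
  rw [abs_le]
  constructor <;> linarith [S.hd₀]

lemma κint (S : SD g κ c₁ c₂ c₃ d₀ d₁ τ δ δ₁ P ν) {φ : ℝ → ℝ} (hφ : Integrable φ P) :
    Integrable (fun w => φ w * κ w) P :=
  hφ.mul_bdd (c := d₀) S.κm.aestronglyMeasurable S.κabs

lemma κ1int (S : SD g κ c₁ c₂ c₃ d₀ d₁ τ δ δ₁ P ν) {φ : ℝ → ℝ} (hφ : Integrable φ P) :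
    Integrable (fun w => φ w * |κ w - 1|) P := by
  refine hφ.mul_bdd (c := d₀) ((S.κm.sub_const 1).abs.aestronglyMeasurable) ?_
  filter_upwards [S.κ1abs] with w h
  simpa using h

lemma r_nonneg (S : SD g κ c₁ c₂ c₃ d₀ d₁ τ δ δ₁ P ν) {x : ℝ} (hx : 0 ≤ x) : 0 ≤ rr g P x :=
  setIntegral_nonneg measurableSet_Ioi fun w hw => S.G.nonneg (hx.trans (le_of_lt hw))

lemma r_anti (S : SD g κ c₁ c₂ c₃ d₀ d₁ τ δ δ₁ P ν) {x y : ℝ} (hx : 0 ≤ x) (hxy : x ≤ y) :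
    rr g P y ≤ rr g P x := by
  unfold rr
  apply setIntegral_mono_set S.gint.integrableOn
  · filter_upwards [ae_restrict_mem measurableSet_Ioi] with w hw
    exact S.G.nonneg (hx.trans (le_of_lt hw))
  · exact (Set.Ioi_subset_Ioi hxy).eventuallyLE

lemma absg (S : SD g κ c₁ c₂ c₃ d₀ d₁ τ δ δ₁ P ν) : ∫ w, |g w| ∂P = 2 * rr g P 0 := by
  have h1 := integral_add_compl (measurableSet_Ioi (a := (0:ℝ))) S.gint
  have h2 := integral_add_compl (measurableSet_Ioi (a := (0:ℝ))) S.gint.abs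
  rw [S.mean] at h1
  have h3 : ∫ w in Set.Ioi 0, |g w| ∂P = ∫ w in Set.Ioi 0, g w ∂P :=
    setIntegral_congr_fun measurableSet_Ioi fun w hw => abs_of_nonneg (S.G.nonneg (le_of_lt hw))
  have h4 : ∫ w in (Set.Ioi 0)ᶜ, |g w| ∂P = ∫ w in (Set.Ioi 0)ᶜ, -g w ∂P :=
    setIntegral_congr_fun measurableSet_Ioi.compl fun w hw => abs_of_nonpos (S.G.nonpos (by simpa using hw))
  rw [integral_neg] at h4
  unfold rr
  linarith

/-- the Stein identity on a half line -/
lemma idF (S : SD g κ c₁ c₂ c₃ d₀ d₁ τ δ δ₁ P ν) {ψ F : ℝ → ℝ} {α M : ℝ} (hm : Measurable ψ)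
    (hb : ∀ x, |ψ x| ≤ M) (h0 : ∀ w, w ≤ α → ∫ x in (0:ℝ)..w, ψ x = 0)
    (h1 : ∀ w, α < w → |g w| ≤ d₁ / δ → ∫ x in (0:ℝ)..w, ψ x = F w) :
    ∫ x, ψ x ∂ν = ∫ w in Set.Ioi α, g w * F w ∂P := by
  rw [S.id ψ hm ⟨M, hb⟩, ← integral_indicator measurableSet_Ioi]
  apply integral_congr_ae
  filter_upwards [S.gbd] with w hw
  by_cases h : α < w
  · simp [h, h1 w h hw]
  · simp [h, h0 w (not_lt.1 h)]

lemma idint (S : SD g κ c₁ c₂ c₃ d₀ d₁ τ δ δ₁ P ν) {ψ : ℝ → ℝ} {M : ℝ} (hm : Measurable ψ)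
    (hb : ∀ x, |ψ x| ≤ M) : Integrable (fun w => g w * (∫ x in (0:ℝ)..w, ψ x)) P := by
  have hc : Continuous (fun w => ∫ x in (0:ℝ)..w, ψ x) := by
    apply intervalIntegral.continuous_primitive
    intro a b
    rw [intervalIntegrable_iff]
    exact Measure.integrableOn_of_bounded (M := M) (by simp) hm.aestronglyMeasurable
      (Filter.Eventually.of_forall (by simpa using hb))
  refine (S.gw.const_mul M).mono (S.gmeas.mul hc.measurable).aestronglyMeasurable ?_
  filter_upwards with w
  have h1 : ‖∫ x in (0:ℝ)..w, ψ x‖ ≤ M * |w - 0| :=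
    intervalIntegral.norm_integral_le_of_norm_le_const (fun x _ => by simpa using hb x)
  have hM : 0 ≤ M := (abs_nonneg _).trans (hb 0)
  rw [norm_mul, norm_mul, norm_mul]
  rw [sub_zero, ← Real.norm_eq_abs] at h1
  rw [Real.norm_eq_abs M, abs_of_nonneg hM]
  calc ‖g w‖ * ‖∫ x in (0:ℝ)..w, ψ x‖ ≤ ‖g w‖ * (M * ‖w‖) := by gcongr
    _ = _ := by ring

lemma nuIoc (S : SD g κ c₁ c₂ c₃ d₀ d₁ τ δ δ₁ P ν) {x y : ℝ} (h : x ≤ y) :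
    ν.real (Set.Ioc x y) ≤ (y - x) * (2 * rr g P 0) := by
  have hm : Measurable ((Set.Ioc x y).indicator (fun _ => (1:ℝ))) :=
    measurable_const.indicator measurableSet_Ioc
  have hb : ∀ t, |(Set.Ioc x y).indicator (fun _ => (1:ℝ)) t| ≤ 1 := by
    intro t; by_cases ht : t ∈ Set.Ioc x y <;> simp [Set.indicator, ht]
  have e := S.id _ hm ⟨1, hb⟩
  rw [integral_indicator measurableSet_Ioc] at e
  simp only [integral_const, smul_eq_mul, mul_one, Measure.real, Measure.restrict_apply MeasurableSet.univ,
    Set.univ_inter] at e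
  rw [Measure.real, e, ← S.absg, ← integral_const_mul]
  apply integral_mono (S.idint hm hb) (S.gint.abs.const_mul _)
  intro w
  have : |∫ t in (0:ℝ)..w, (Set.Ioc x y).indicator (fun _ => (1:ℝ)) t| ≤ y - x := by
    have i1 : Integrable ((Set.Ioc x y).indicator (fun _ => (1:ℝ))) :=
      (integrable_indicator_iff measurableSet_Ioc).2 (integrableOn_const (by simp))
    have h0 : 0 ≤ (Set.Ioc x y).indicator (fun _ => (1:ℝ)) := fun t => by
      by_cases ht : t ∈ Set.Ioc x y <;> simp [Set.indicator, ht]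
    calc |∫ t in (0:ℝ)..w, (Set.Ioc x y).indicator (fun _ => (1:ℝ)) t|
        ≤ ∫ t in Set.uIoc 0 w, ‖(Set.Ioc x y).indicator (fun _ => (1:ℝ)) t‖ :=
          by rw [← Real.norm_eq_abs]; exact intervalIntegral.norm_integral_le_integral_norm_uIoc
      _ ≤ ∫ t, ‖(Set.Ioc x y).indicator (fun _ => (1:ℝ)) t‖ :=
          setIntegral_le_integral i1.norm (Filter.Eventually.of_forall fun t => norm_nonneg _)
      _ = ∫ t, (Set.Ioc x y).indicator (fun _ => (1:ℝ)) t := by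
          congr 1; funext t; exact Real.norm_of_nonneg (h0 t)
      _ = y - x := by
          rw [integral_indicator measurableSet_Ioc]; simp [h]
  calc g w * ∫ t in (0:ℝ)..w, (Set.Ioc x y).indicator (fun _ => (1:ℝ)) t
      ≤ |g w * ∫ t in (0:ℝ)..w, (Set.Ioc x y).indicator (fun _ => (1:ℝ)) t| := le_abs_self _
    _ = |g w| * |∫ t in (0:ℝ)..w, (Set.Ioc x y).indicator (fun _ => (1:ℝ)) t| := abs_mul _ _
    _ ≤ |g w| * (y - x) := by gcongr
    _ = _ := by ring

lemma nuIoc_eq (S : SD g κ c₁ c₂ c₃ d₀ d₁ τ δ δ₁ P ν) {x y : ℝ} (hx : 0 ≤ x) (h : x ≤ y) :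
    ν.real (Set.Ioc x y) = ∫ w in Set.Ioi x, g w * (min w y - x) ∂P := by
  have hm : Measurable ((Set.Ioc x y).indicator (fun _ => (1:ℝ))) :=
    measurable_const.indicator measurableSet_Ioc
  have hb : ∀ t, |(Set.Ioc x y).indicator (fun _ => (1:ℝ)) t| ≤ 1 := by
    intro t; by_cases ht : t ∈ Set.Ioc x y <;> simp [Set.indicator, ht]
  have e := S.idF (F := fun w => min w y - x) (α := x) hm hb ?_ ?_
  · rw [integral_indicator measurableSet_Ioc] at e
    simp only [integral_const, smul_eq_mul, mul_one, Measure.real,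
      Measure.restrict_apply MeasurableSet.univ, Set.univ_inter] at e
    rw [Measure.real, e]
  · intro w hw
    have := ind_zero (φ := (Set.Iic y).indicator (fun _ => (1:ℝ))) hx hw
    rw [← this]
    congr 1
    funext t
    by_cases h1 : x < t <;> by_cases h2 : t ≤ y <;> simp [h1, h2]
  · intro w hw _
    exact ind_Ioc (F := fun t => t) hx h hw (fun t _ => hasDerivAt_id t) (fun b => intervalIntegrable_const)

lemma nuIoc' (S : SD g κ c₁ c₂ c₃ d₀ d₁ τ δ δ₁ P ν) {x y : ℝ} (hx : 0 ≤ x) (h : x ≤ y) :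
    ν.real (Set.Ioc x y) ≤ (y - x) * rr g P x := by
  rw [S.nuIoc_eq hx h, rr, ← integral_const_mul]
  apply setIntegral_mono_on
  · refine (S.gint.norm.mul_const (y - x)).integrableOn.mono' ?_ ?_
    · exact (S.gmeas.mul ((measurable_id.min measurable_const).sub_const x)).aestronglyMeasurable
    · filter_upwards [ae_restrict_mem measurableSet_Ioi] with w hw
      have : |min w y - x| ≤ y - x := by
        rw [abs_of_nonneg (by have := le_min (le_of_lt hw) h; linarith)]
        linarith [min_le_right w y]
      rw [norm_mul]
      simp only [Real.norm_eq_abs]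
      gcongr
  · exact (S.gint.const_mul _).integrableOn
  · exact measurableSet_Ioi
  · intro w hw
    have h1 := S.G.nonneg (hx.trans (le_of_lt hw))
    have : min w y - x ≤ y - x := by linarith [min_le_right w y]
    nlinarith

lemma nutot (S : SD g κ c₁ c₂ c₃ d₀ d₁ τ δ δ₁ P ν) : ν.real Set.univ ≤ d₀ := by
  have := S.pP
  have h := S.up (fun _ => 1) (fun _ => 1) 1 measurable_const measurable_const (by simp) (by simp)
    (by simp)
  simp only [integral_const, smul_eq_mul, mul_one, one_mul] at h
  refine h.trans ?_
  have : ∫ w, κ w ∂P ≤ ∫ w, d₀ ∂P := by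
    apply integral_mono_ae _ (integrable_const _) S.κd
    have := S.κint (integrable_const 1)
    simpa using this
  simpa using this

lemma r0_le (S : SD g κ c₁ c₂ c₃ d₀ d₁ τ δ δ₁ P ν) : rr g P 0 ≤ d₀ + exp c₃ := by
  have := S.pP
  have := S.fν
  have h1 : rr g P 1 ≤ d₀ := by
    calc rr g P 1 ≤ ∫ w in Set.Ioi 0, g w * (min w 1 - 0) ∂P := by
          unfold rr
          have i1 : IntegrableOn (fun w => g w * (min w 1 - 0)) (Set.Ioi 0) P := by
            refine S.gint.norm.integrableOn.mono' ?_ ?_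
            · exact (S.gmeas.mul ((measurable_id.min measurable_const).sub_const 0)).aestronglyMeasurable
            · filter_upwards [ae_restrict_mem measurableSet_Ioi] with w hw
              have hw' : (0:ℝ) < w := hw
              have : |min w 1 - 0| ≤ 1 := by
                rw [sub_zero, abs_of_nonneg (le_min hw'.le zero_le_one)]
                exact min_le_right _ _
              rw [norm_mul]
              simp only [Real.norm_eq_abs]
              exact mul_le_of_le_one_right (abs_nonneg _) this
          calc ∫ w in Set.Ioi 1, g w ∂P = ∫ w in Set.Ioi 1, g w * (min w 1 - 0) ∂P := by
                apply setIntegral_congr_fun measurableSet_Ioi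
                intro w hw
                have : (1:ℝ) < w := hw
                simp [min_eq_right this.le]
            _ ≤ _ := by
                apply setIntegral_mono_set i1
                · filter_upwards [ae_restrict_mem measurableSet_Ioi] with w hw
                  have hw' : (0:ℝ) < w := hw
                  have := S.G.nonneg hw'.le
                  have : 0 ≤ min w 1 - 0 := by rw [sub_zero]; exact le_min hw'.le zero_le_one
                  simp only [Pi.zero_apply]
                  positivity
                · exact (Set.Ioi_subset_Ioi zero_le_one).eventuallyLE
      _ = ν.real (Set.Ioc 0 1) := (S.nuIoc_eq le_rfl zero_le_one).symm
      _ ≤ ν.real Set.univ := measureReal_mono (Set.subset_univ _)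
      _ ≤ d₀ := S.nutot
  have h2 : rr g P 0 = (∫ w in Set.Ioc 0 1, g w ∂P) + rr g P 1 := by
    unfold rr
    rw [← setIntegral_union _ measurableSet_Ioi S.gint.integrableOn S.gint.integrableOn,
      Set.Ioc_union_Ioi_eq_Ioi zero_le_one]
    rw [Set.disjoint_left]
    intro a ha hb
    exact absurd ha.2 (not_le.2 hb)
  have h3 : ∫ w in Set.Ioc 0 1, g w ∂P ≤ exp c₃ := by
    have hg1 : g 1 ≤ exp c₃ := by
      have := S.G.growth0 zero_le_one
      simp at this
      linarith
    calc ∫ w in Set.Ioc 0 1, g w ∂P ≤ ∫ w in Set.Ioc 0 1, exp c₃ ∂P := by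
          apply setIntegral_mono_on S.gint.integrableOn (integrableOn_const (by simp)) measurableSet_Ioc
          intro w hw
          exact (S.G.gc.mono hw.2).trans hg1
      _ = P.real (Set.Ioc 0 1) * exp c₃ := by simp
      _ ≤ 1 * exp c₃ := by
          gcongr
          exact measureReal_le_one
      _ = exp c₃ := one_mul _
  linarith

/-- upper bound without smallness -/
lemma up1 (S : SD g κ c₁ c₂ c₃ d₀ d₁ τ δ δ₁ P ν) {ψ φ : ℝ → ℝ} {M : ℝ} (hψ : Measurable ψ)
    (hφ : Measurable φ) (hψb : ∀ x, |ψ x| ≤ M) (hφ0 : ∀ x, 0 ≤ φ x) (hφi : Integrable φ P)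
    (h : ∀ w t, |t| ≤ δ → ψ (w + t) ≤ φ w) : ∫ x, ψ x ∂ν ≤ d₀ * ∫ w, φ w ∂P := by
  have hM : 0 ≤ M := (abs_nonneg _).trans (hψb 0)
  have hb : ∀ x, |min (φ x) M| ≤ M := by
    intro x
    rw [abs_of_nonneg (le_min (hφ0 x) hM)]
    exact min_le_right _ _
  have hm : Measurable (fun w => min (φ w) M) := hφ.min measurable_const
  refine (S.up ψ (fun w => min (φ w) M) M hψ hm hψb hb ?_).trans ?_
  · intro w t ht
    exact le_min (h w t ht) ((le_abs_self _).trans (hψb _))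
  · rw [← integral_const_mul]
    apply integral_mono_ae (S.κint (S.bint hm hb)) (hφi.const_mul _)
    filter_upwards [S.κ0, S.κd] with w h0 hd
    have h1 := min_le_left (φ w) M
    have h2 := le_min (hφ0 w) hM
    calc min (φ w) M * κ w ≤ φ w * d₀ := by
          apply mul_le_mul h1 hd h0 (hφ0 w)
      _ = _ := mul_comm _ _

/-- the comparison lemma -/
lemma comp (S : SD g κ c₁ c₂ c₃ d₀ d₁ τ δ δ₁ P ν) {Φ b : ℝ → ℝ} {M : ℝ} (hΦ : Measurable Φ)
    (hb : Measurable b) (hΦ0 : ∀ x, 0 ≤ Φ x) (hΦM : ∀ x, Φ x ≤ M) (hb0 : ∀ x, 0 ≤ b x)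
    (hbi : Integrable b P) (h : ∀ w t, |t| ≤ δ → |Φ (w + t) - Φ w| ≤ b w) :
    |∫ x, Φ x ∂ν - ∫ w, Φ w ∂P| ≤ (∫ w, Φ w * |κ w - 1| ∂P) + d₀ * ∫ w, b w ∂P := by
  have hM : 0 ≤ M := (hΦ0 0).trans (hΦM 0)
  have hΦb : ∀ x, |Φ x| ≤ M := fun x => by rw [abs_of_nonneg (hΦ0 x)]; exact hΦM x
  have iΦ := S.bint hΦ hΦb
  rw [abs_le]
  constructor
  · have hm : Measurable (fun w => -max (Φ w - b w) 0) := ((hΦ.sub hb).max measurable_const).neg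
    have hbd : ∀ w, |-max (Φ w - b w) 0| ≤ M := by
      intro w
      rw [abs_neg, abs_of_nonneg (le_max_right _ _)]
      exact max_le (by linarith [hΦM w, hb0 w]) hM
    have key := S.up (fun w => -Φ w) (fun w => -max (Φ w - b w) 0) M hΦ.neg hm
      (by simpa using hΦb) hbd ?_
    · rw [integral_neg] at key
      have : (∫ w, Φ w ∂P) + ∫ w, -max (Φ w - b w) 0 * κ w ∂P ≤
          (∫ w, Φ w * |κ w - 1| ∂P) + d₀ * ∫ w, b w ∂P := by
        rw [← integral_const_mul, ← integral_add iΦ (S.κint (S.bint hm hbd)),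
          ← integral_add (S.κ1int iΦ) (hbi.const_mul _)]
        apply integral_mono_ae (iΦ.add (S.κint (S.bint hm hbd))) ((S.κ1int iΦ).add (hbi.const_mul _))
        filter_upwards [S.κ0, S.κd] with w h0 hd
        have h1 := le_max_left (Φ w - b w) 0
        have h2 := mul_le_mul_of_nonneg_right h1 h0
        have h3 := mul_le_mul_of_nonneg_left hd (hb0 w)
        have h4 := mul_le_mul_of_nonneg_left (neg_abs_le (κ w - 1)) (hΦ0 w)
        show Φ w + -max (Φ w - b w) 0 * κ w ≤ Φ w * |κ w - 1| + d₀ * b w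
        nlinarith
      linarith
    · intro w t ht
      have := (abs_le.1 (h w t ht)).1
      have : max (Φ w - b w) 0 ≤ Φ (w + t) := max_le (by linarith) (hΦ0 _)
      linarith
  · have hm : Measurable (fun w => min (Φ w + b w) M) := (hΦ.add hb).min measurable_const
    have hbd : ∀ w, |min (Φ w + b w) M| ≤ M := by
      intro w
      rw [abs_of_nonneg (le_min (by linarith [hΦ0 w, hb0 w]) hM)]
      exact min_le_right _ _
    have key := S.up Φ (fun w => min (Φ w + b w) M) M hΦ hm hΦb hbd ?_
    · have : (∫ w, min (Φ w + b w) M * κ w ∂P) - ∫ w, Φ w ∂P ≤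
          (∫ w, Φ w * |κ w - 1| ∂P) + d₀ * ∫ w, b w ∂P := by
        rw [← integral_const_mul, ← integral_sub (S.κint (S.bint hm hbd)) iΦ,
          ← integral_add (S.κ1int iΦ) (hbi.const_mul _)]
        apply integral_mono_ae ((S.κint (S.bint hm hbd)).sub iΦ) ((S.κ1int iΦ).add (hbi.const_mul _))
        filter_upwards [S.κ0, S.κd] with w h0 hd
        have h1 := min_le_left (Φ w + b w) M
        have h2 := mul_le_mul_of_nonneg_right h1 h0
        have h3 := mul_le_mul_of_nonneg_left hd (hb0 w)
        have h4 := mul_le_mul_of_nonneg_left (le_abs_self (κ w - 1)) (hΦ0 w)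
        show min (Φ w + b w) M * κ w - Φ w ≤ Φ w * |κ w - 1| + d₀ * b w
        nlinarith
      linarith
    · intro w t ht
      have := (abs_le.1 (h w t ht)).2
      exact le_min (by linarith) (hΦM _)

lemma conc (S : SD g κ c₁ c₂ c₃ d₀ d₁ τ δ δ₁ P ν) {x y : ℝ}
    (hs : ∀ w ∈ Set.Ioc x y, δ₁ * (|g w| ^ τ + 1) ≤ 1 / 2) :
    P.real (Set.Ioc x y) ≤ 2 * ν.real (Set.Ioc (x - δ) (y + δ)) := by
  have hm : ∀ a b : ℝ, Measurable (fun t => -(Set.Ioc a b).indicator (fun _ => (1:ℝ)) t) := fun a b =>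
    (measurable_const.indicator measurableSet_Ioc).neg
  have hb : ∀ a b t : ℝ, |-(Set.Ioc a b).indicator (fun _ => (1:ℝ)) t| ≤ 1 := by
    intro a b t; by_cases ht : t ∈ Set.Ioc a b <;> simp [Set.indicator, ht]
  have key := S.up _ _ 1 (hm (x - δ) (y + δ)) (hm x y) (hb _ _) (hb _ _) ?_
  · rw [integral_neg, integral_indicator measurableSet_Ioc] at key
    simp only [integral_const, smul_eq_mul, mul_one, MeasurableSet.univ, measureReal_restrict_apply,
      Set.univ_inter] at key
    have h2 : ∫ w, -(Set.Ioc x y).indicator (fun _ => (1:ℝ)) w * κ w ∂P ≤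
        ∫ w, -(Set.Ioc x y).indicator (fun _ => (1/2:ℝ)) w ∂P := by
      have := S.pP
      apply integral_mono_ae (S.κint (S.bint (hm x y) (hb x y)))
      · exact ((integrable_const _).indicator measurableSet_Ioc).neg
      · filter_upwards [S.κ1] with w hw
        by_cases h : w ∈ Set.Ioc x y
        · have := hs w h
          have := (abs_le.1 hw).1
          simp only [Set.indicator_of_mem h]
          linarith
        · simp [Set.indicator_of_notMem h]
    rw [integral_neg, integral_indicator measurableSet_Ioc] at h2
    simp only [integral_const, smul_eq_mul, mul_one, MeasurableSet.univ, measureReal_restrict_apply,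
      Set.univ_inter] at h2
    linarith
  · intro w t ht
    rw [abs_le] at ht
    simp only [neg_le_neg_iff]
    by_cases h : w ∈ Set.Ioc x y
    · have : w + t ∈ Set.Ioc (x - δ) (y + δ) := ⟨by linarith [h.1], by linarith [h.2]⟩
      simp [Set.indicator_of_mem, h, this]
    · rw [Set.indicator_of_notMem h]
      exact Set.indicator_nonneg (fun _ _ => zero_le_one) _

end SD


/-! ### Part C : reflection, regime, Gronwall bound -/

namespace GC

variable {g : ℝ → ℝ} {c₁ c₂ c₃ : ℝ}

lemma Grefl (g : ℝ → ℝ) (y : ℝ) : Gfun (fun x => -g (-x)) y = Gfun g (-y) := by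
  unfold Gfun
  rw [intervalIntegral.integral_neg, intervalIntegral.integral_comp_neg, neg_zero,
    intervalIntegral.integral_symm, neg_neg]

lemma refl (H : GC g c₁ c₂ c₃) : GC (fun x => -g (-x)) c₁ c₂ c₃ where
  gc :=
    { diff := (H.gc.diff.comp differentiable_neg).neg
      mono := fun x y h => neg_le_neg (H.gc.mono (neg_le_neg h))
      zero := by simp [H.gc.zero]
      sign := fun y hy => by
        have := H.gc.sign (-y) (neg_ne_zero.2 hy)
        linarith
      c₂pos := H.gc.c₂pos
      subadd := fun x y => by
        have := H.gc.subadd (-x) (-y)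
        simp only [abs_neg]
        rwa [neg_add]
      c₃ge := H.gc.c₃ge
      derivBound := fun y => by
        have := H.gc.derivBound (-y)
        have e : deriv (fun x => -g (-x)) y = deriv g (-y) := by
          rw [deriv.fun_neg, deriv_comp_neg]; simp
        rw [e]
        simpa using this }
  c1 := H.c1
  nrm := by
    have : ∀ y, pfun (fun x => -g (-x)) c₁ y = pfun g c₁ (-y) := fun y => by
      unfold pfun; rw [Grefl]
    simp only [this]
    rw [integral_neg_eq_self (fun y => pfun g c₁ y)]
    exact H.nrm

lemma growth_neg (H : GC g c₁ c₂ c₃) {y : ℝ} (hy : y ≤ 0) : 1 + |g y| ≤ exp (c₃ * (-y)) := by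
  have := H.refl.growth0 (y := -y) (by linarith)
  simp only [neg_neg] at this
  rw [abs_of_nonpos (H.nonpos hy)]
  exact this

end GC

structure Reg (g : ℝ → ℝ) (c₃ τ δ δ₁ A z : ℝ) : Prop where
  z0 : 0 ≤ z
  a1 : δ * ((1 + z) * (1 + g z) ^ 2) ≤ A
  a2 : δ₁ * ((1 + z) * (1 + g z) ^ (τ + 1)) ≤ A
  sm : δ₁ * (4 * exp (2 * c₃) ^ τ * (1 + g z) ^ τ) ≤ 1

namespace SD

variable {g κ : ℝ → ℝ} {c₁ c₂ c₃ d₀ d₁ τ δ δ₁ : ℝ} {P ν : Measure ℝ} {A z : ℝ}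

lemma reg_mono (S : SD g κ c₁ c₂ c₃ d₀ d₁ τ δ δ₁ P ν) (R : Reg g c₃ τ δ δ₁ A z) {y : ℝ}
    (hy : 0 ≤ y) (hyz : y ≤ z) : Reg g c₃ τ δ δ₁ A y := by
  have h1 := S.G.gc.mono hyz
  have h2 := S.G.nonneg hy
  have hτ := S.hτ
  have hδ := S.hδ
  have hδ₁ := S.hδ₁
  have hz := R.z0
  refine ⟨hy, le_trans ?_ R.a1, le_trans ?_ R.a2, le_trans ?_ R.sm⟩
  · gcongr
  · gcongr
  · gcongr

lemma reg_gbd (S : SD g κ c₁ c₂ c₃ d₀ d₁ τ δ δ₁ P ν) (hz : 0 ≤ z) {w : ℝ}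
    (h1 : -2 ≤ w) (h2 : w ≤ z + 2) : 1 + |g w| ≤ exp (2 * c₃) * (1 + g z) := by
  have hc := S.G.c3pos
  have hg := S.G.nonneg hz
  have he : 1 ≤ exp (2 * c₃) := one_le_exp (by linarith)
  rcases le_total w 0 with h | h
  · calc 1 + |g w| ≤ exp (c₃ * (-w)) := S.G.growth_neg h
      _ ≤ exp (2 * c₃) := exp_le_exp.2 (by nlinarith)
      _ ≤ _ := by nlinarith
  · rw [abs_of_nonneg (S.G.nonneg h)]
    rcases le_total w z with h' | h'
    · have := S.G.gc.mono h'
      nlinarith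
    · refine (S.G.growth hz h').trans ?_
      exact mul_le_mul_of_nonneg_right (exp_le_exp.2 (by nlinarith)) (by linarith)

lemma reg_small (S : SD g κ c₁ c₂ c₃ d₀ d₁ τ δ δ₁ P ν) (R : Reg g c₃ τ δ δ₁ A z) {w : ℝ}
    (h1 : -2 ≤ w) (h2 : w ≤ z + 2) :
    δ₁ * (|g w| ^ τ + 1) ≤ δ₁ * (2 * exp (2 * c₃) ^ τ * (1 + g z) ^ τ) ∧
    δ₁ * (|g w| ^ τ + 1) ≤ 1 / 2 := by
  have hτ := S.hτ
  have hδ₁ := S.hδ₁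
  have h := S.reg_gbd R.z0 h1 h2
  have hg := S.G.nonneg R.z0
  have hb : 1 ≤ exp (2 * c₃) * (1 + g z) := by linarith [abs_nonneg (g w)]
  have e1 : |g w| ^ τ ≤ (exp (2 * c₃) * (1 + g z)) ^ τ := by
    apply rpow_le_rpow (abs_nonneg _) (by linarith) hτ.le
  have e2 : 1 ≤ (exp (2 * c₃) * (1 + g z)) ^ τ := one_le_rpow hb hτ.le
  rw [mul_rpow (exp_pos _).le (by linarith)] at e1 e2
  have e3 : δ₁ * (|g w| ^ τ + 1) ≤ δ₁ * (2 * exp (2 * c₃) ^ τ * (1 + g z) ^ τ) := by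
    gcongr
    linarith
  refine ⟨e3, ?_⟩
  have := R.sm
  linarith

set_option maxHeartbeats 4000000 in
lemma gron (S : SD g κ c₁ c₂ c₃ d₀ d₁ τ δ δ₁ P ν) (R : Reg g c₃ τ δ δ₁ A z) :
    rr g P (z + δ) ≤
      ((d₀ + exp c₃ + (exp c₃ * exp (exp c₃) + exp A * (c₃ * exp c₃ * (1 + exp 1 / c₁))
        * exp (exp 1 / c₁ * exp (c₃ * (exp 1 / c₁)))) * d₀) *
        exp (A + (c₃ * exp c₃ * (1 + exp 1 / c₁)) * A + 2 * exp (2 * c₃) ^ τ * A)) *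
        exp (-(Gfun g z)) := by
  have hPr := S.pP
  have hτ := S.hτ
  have hδ := S.hδ
  have hδ4 := S.hδ4
  have hδ₁ := S.hδ₁
  have hz := R.z0
  have hc1 := S.G.c1
  have hc3 := S.G.c3pos
  have hd0 := S.hd₀
  have hgz := S.G.nonneg hz
  set z0 := exp 1 / c₁ with hz0
  have hz0p : 0 < z0 := by positivity
  set Ca := c₃ * exp c₃ * (1 + z0) with hCa
  have hCap : 0 < Ca := by positivity
  set Cb := 2 * exp (2 * c₃) ^ τ with hCb
  have hCbp : 0 < Cb := by positivity
  set B := exp c₃ * exp (exp c₃) + exp A * Ca * exp (z0 * exp (c₃ * z0)) with hB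
  have hBp : 0 < B := by positivity
  set h := 1 + g z with hh
  have hh1 : 1 ≤ h := by linarith
  have hhτ : 0 < h ^ τ := by positivity
  -- bounds from the regime
  have b1 : δ * h * ((1 + z) * h) ≤ A := by
    refine le_trans (le_of_eq ?_) R.a1
    rw [hh]; ring
  have b2 : δ₁ * h ^ τ * ((1 + z) * h) ≤ A := by
    have := R.a2
    rw [rpow_add (by linarith), rpow_one] at this
    linarith
  have hzh : 1 ≤ (1 + z) * h := one_le_mul_of_one_le_of_one_le (by linarith) hh1
  have b1' : δ * h ≤ A := by
    refine le_trans ?_ b1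
    exact le_mul_of_one_le_right (by positivity) hzh
  set ρ := δ * h + Ca * δ + Cb * (δ₁ * h ^ τ) with hρ
  have hρ0 : 0 ≤ ρ := by positivity
  set lam := exp (-ρ) with hlam
  have hl0 : 0 < lam := exp_pos _
  have hl1 : lam ≤ 1 := exp_le_one_iff.2 (by linarith)
  have hl2 : 1 - ρ ≤ lam := by have := add_one_le_exp (-ρ); linarith
  -- the test function
  let a : ℝ → ℝ := fun x => g x * exp (lam * Gfun g x)
  have ac : Continuous a := S.G.cont.mul ((S.G.Gcont.const_mul lam).rexp)
  have a0 : ∀ x, 0 ≤ x → 0 ≤ a x := fun x hx => mul_nonneg (S.G.nonneg hx) (exp_pos _).le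
  have amono : ∀ x y, 0 ≤ x → x ≤ y → a x ≤ a y := by
    intro x y hx hxy
    have h1 := S.G.gc.mono hxy
    have h2 := S.G.Gmono hx hxy
    have h3 := S.G.nonneg hx
    have h4 := S.G.nonneg (hx.trans hxy)
    show g x * exp (lam * Gfun g x) ≤ g y * exp (lam * Gfun g y)
    gcongr
  let ψ : ℝ → ℝ := (Set.Ioc 0 z).indicator (fun x => lam * a x)
  have ψm : Measurable ψ := (ac.measurable.const_mul lam).indicator measurableSet_Ioc
  have ψ0 : ∀ x, 0 ≤ ψ x := fun x =>
    Set.indicator_nonneg (fun x hx => mul_nonneg hl0.le (a0 x hx.1.le)) x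
  have FD : ∀ x, HasDerivAt (fun x => exp (lam * Gfun g x)) (lam * a x) x := by
    intro x
    have := ((S.G.Gderiv x).const_mul lam).exp
    refine this.congr_deriv ?_
    show _ = lam * (g x * exp (lam * Gfun g x))
    ring
  set K := lam * exp (δ * h) * (1 + Ca * δ) with hK
  have hK0 : 0 ≤ K := by positivity
  let χ : ℝ → ℝ := (Set.Ioc 0 (z + δ)).indicator (fun w => a (min w z))
  have χm : Measurable χ :=
    (ac.measurable.comp (measurable_id.min measurable_const)).indicator measurableSet_Ioc
  have χ0 : ∀ x, 0 ≤ χ x := fun x =>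
    Set.indicator_nonneg (fun x hx => a0 _ (le_min hx.1.le hz)) x
  have χle : ∀ x, χ x ≤ a z := by
    intro x
    apply Set.indicator_le' (fun x hx => amono _ _ (le_min hx.1.le hz) (min_le_right _ _))
      (fun x _ => a0 z hz)
  let φ : ℝ → ℝ := fun w => B + K * χ w
  have φm : Measurable φ := (χm.const_mul K).const_add B
  have φ0 : ∀ x, 0 ≤ φ x := fun x => add_nonneg hBp.le (mul_nonneg hK0 (χ0 x))
  have φb : ∀ x, |φ x| ≤ B + K * a z := by
    intro x
    rw [abs_of_nonneg (φ0 x)]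
    show B + K * χ x ≤ _
    have := χle x
    gcongr
  have dom : ∀ w t, |t| ≤ δ → ψ (w + t) ≤ φ w := by
    intro w t ht
    rw [abs_le] at ht
    by_cases hx : w + t ∈ Set.Ioc 0 z
    swap
    · show (Set.Ioc 0 z).indicator (fun x => lam * a x) (w + t) ≤ _
      rw [Set.indicator_of_notMem hx]; exact φ0 w
    show (Set.Ioc 0 z).indicator (fun x => lam * a x) (w + t) ≤ B + K * χ w
    rw [Set.indicator_of_mem hx]
    set x := w + t with hxdef
    have hx0 := hx.1
    have hxz := hx.2
    rcases le_or_gt w 0 with hw | hw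
    · have hx1 : x ≤ 1 := by linarith
      have hg1 : g 1 ≤ exp c₃ := by
        have := S.G.growth0 zero_le_one
        simp at this; linarith
      have : a x ≤ exp c₃ * exp (exp c₃) := by
        refine (amono x 1 hx0.le hx1).trans ?_
        have h1 : Gfun g 1 ≤ exp c₃ := by
          have := S.G.Gle zero_le_one; linarith
        have h0 := S.G.Gnonneg zero_le_one
        have h0' := S.G.nonneg zero_le_one
        show g 1 * exp (lam * Gfun g 1) ≤ _
        gcongr
        exact (mul_le_of_le_one_left h0 hl1).trans h1
      have h2 : 0 ≤ K * χ w := mul_nonneg hK0 (χ0 w)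
      have h3 : 0 ≤ exp A * Ca * exp (z0 * exp (c₃ * z0)) := by positivity
      have h4 := a0 x hx0.le
      have : lam * a x ≤ a x := mul_le_of_le_one_left h4 hl1
      linarith
    · have hwm : w ∈ Set.Ioc 0 (z + δ) := ⟨hw, by linarith⟩
      have hχ : χ w = a (min w z) := Set.indicator_of_mem hwm _
      rw [hχ]
      set v := min w z with hv
      have hv0 : 0 ≤ v := le_min hw.le hz
      have hvz : v ≤ z := min_le_right _ _
      have hxv : x ≤ v + δ := by
        rcases min_choice w z with e | e <;> rw [hv, e] <;> linarith
      have hgv := S.G.nonneg hv0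
      have hgx := S.G.nonneg hx0.le
      -- bound on g x
      have G1 : g x ≤ g v + c₃ * exp c₃ * δ * (1 + g v) := by
        have h1 := S.G.gc.mono hxv
        have h2 := S.G.growth hv0 (show v ≤ v + δ by linarith)
        have h3 : exp (c₃ * δ) ≤ 1 + c₃ * δ * exp c₃ := by
          have e1 := add_one_le_exp (-(c₃ * δ))
          have e2 : exp (-(c₃ * δ)) * exp (c₃ * δ) = 1 := by rw [← exp_add]; simp
          have e3 : exp (c₃ * δ) ≤ exp c₃ :=
            exp_le_exp.2 (mul_le_of_le_one_right hc3.le (by linarith))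
          have e4 := exp_pos (c₃ * δ)
          have e5 : 0 < c₃ * δ := by positivity
          have m1 := mul_le_mul_of_nonneg_right e1 e4.le
          have m2 := mul_le_mul_of_nonneg_left e3 e5.le
          linarith
        rw [add_sub_cancel_left] at h2
        have m := mul_le_mul_of_nonneg_right h3 (show 0 ≤ 1 + g v by linarith)
        linarith
      have G2 : c₃ * exp c₃ * δ * (1 + g v) ≤ Ca * δ * g v + (if v ≤ z0 then Ca * δ else 0) := by
        have hp : 0 < c₃ * exp c₃ * δ := by positivity
        have hCaδ : Ca * δ = c₃ * exp c₃ * δ * (1 + z0) := by rw [hCa]; ring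
        split_ifs with hif
        · have : c₃ * exp c₃ * δ ≤ Ca * δ := by
            rw [hCaδ]; exact le_mul_of_one_le_right hp.le (by linarith)
          have m := mul_le_mul_of_nonneg_right this (show 0 ≤ 1 + g v by linarith)
          linarith
        · have h1 := S.G.glow (x := v) (not_le.1 hif).le
          rw [hCaδ]
          have : 1 + g v ≤ (1 + z0) * g v := by linarith
          have m := mul_le_mul_of_nonneg_left this hp.le
          linarith
      have G3 : Gfun g x ≤ Gfun g v + δ * h := by
        rcases le_total x v with hc | hc
        · have := S.G.Gmono hx0.le hc
          have : 0 ≤ δ * h := by positivity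
          linarith
        · have h1 := S.G.Gup hc
          have h2 := S.G.gc.mono hxz
          have : g x * (x - v) ≤ h * δ := by
            apply mul_le_mul <;> linarith
          linarith
      have hGv := S.G.Gnonneg hv0
      have E1 : exp (lam * Gfun g x) ≤ exp (δ * h) * exp (lam * Gfun g v) := by
        rw [← exp_add]
        apply exp_le_exp.2
        have p0 : 0 ≤ δ * h := by positivity
        have m1 := mul_le_mul_of_nonneg_left G3 hl0.le
        have m2 := mul_le_of_le_one_left p0 hl1
        linarith
      have E2 : (if v ≤ z0 then Ca * δ else 0) * exp (lam * Gfun g v)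
          ≤ Ca * exp (z0 * exp (c₃ * z0)) := by
        split_ifs with hif
        · have : lam * Gfun g v ≤ z0 * exp (c₃ * z0) := by
            have h1 := S.G.Gle hv0
            have h2 := S.G.growth0 hv0
            have h3 : exp (c₃ * v) ≤ exp (c₃ * z0) := 
              exp_le_exp.2 (mul_le_mul_of_nonneg_left hif hc3.le)
            have h4 : v * g v ≤ z0 * exp (c₃ * z0) := by
              apply mul_le_mul hif (by linarith) hgv hz0p.le
            have h5 := mul_le_of_le_one_left hGv hl1
            linarith
          have h5 := exp_le_exp.2 this
          have h6 : Ca * δ ≤ Ca := mul_le_of_le_one_right hCap.le (by linarith)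
          exact mul_le_mul h6 h5 (exp_pos _).le hCap.le
        · rw [zero_mul]; positivity
      have E3 : exp (δ * h) ≤ exp A := exp_le_exp.2 b1'
      have hif0 : 0 ≤ (if v ≤ z0 then Ca * δ else 0) := by split_ifs <;> positivity
      show lam * (g x * exp (lam * Gfun g x)) ≤ B + K * (g v * exp (lam * Gfun g v))
      calc lam * (g x * exp (lam * Gfun g x))
          ≤ lam * ((g v + (Ca * δ * g v + (if v ≤ z0 then Ca * δ else 0)))
              * (exp (δ * h) * exp (lam * Gfun g v))) := by
            gcongr
            linarith
        _ = K * (g v * exp (lam * Gfun g v)) +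
            lam * exp (δ * h) * ((if v ≤ z0 then Ca * δ else 0) * exp (lam * Gfun g v)) := by
            rw [hK]; ring
        _ ≤ K * (g v * exp (lam * Gfun g v)) + 1 * exp A * (Ca * exp (z0 * exp (c₃ * z0))) := by
            gcongr
        _ ≤ _ := by
            have : 0 < exp c₃ * exp (exp c₃) := by positivity
            rw [hB]; linarith
  have ψb : ∀ x, |ψ x| ≤ B + K * a z := by
    intro x
    rw [abs_of_nonneg (ψ0 x)]
    have h1 := dom x 0 (by simpa using hδ.le)
    rw [add_zero] at h1
    exact h1.trans ((le_abs_self _).trans (φb x))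
  have key := S.up ψ φ _ ψm φm ψb φb dom
  have iχ : Integrable χ P := S.bint χm (M := a z) (fun x => by rw [abs_of_nonneg (χ0 x)]; exact χle x)
  have key2 : ∫ w, φ w * κ w ∂P ≤ B * d₀ + ∫ w, χ w ∂P := by
    have e : B * d₀ + ∫ w, χ w ∂P = ∫ w, (B * d₀ + χ w) ∂P := by
      rw [integral_add (integrable_const _) iχ]; simp
    rw [e]
    apply integral_mono_ae (S.κint (S.bint φm φb)) ((integrable_const _).add iχ)
    filter_upwards [S.κ0, S.κd, S.κ1] with w h0 hd h1
    show (B + K * χ w) * κ w ≤ B * d₀ + χ w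
    have e1 : B * κ w ≤ B * d₀ := by gcongr
    have e2 : K * χ w * κ w ≤ χ w := by
      by_cases hw : w ∈ Set.Ioc 0 (z + δ)
      · have s1 := (S.reg_small R (w := w) (by linarith [hw.1]) (by linarith [hw.2])).1
        have s2 : κ w ≤ 1 + Cb * (δ₁ * h ^ τ) := by
          have := (abs_le.1 h1).2
          have e : δ₁ * (2 * exp (2 * c₃) ^ τ * (1 + g z) ^ τ) = Cb * (δ₁ * h ^ τ) := by
            rw [hCb, hh]; ring
          linarith
        have s3 : K * κ w ≤ 1 := by
          have t1 : 1 + Ca * δ ≤ exp (Ca * δ) := by linarith [add_one_le_exp (Ca * δ)]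
          have t2 : κ w ≤ exp (Cb * (δ₁ * h ^ τ)) := by
            linarith [add_one_le_exp (Cb * (δ₁ * h ^ τ))]
          calc K * κ w ≤ (lam * exp (δ * h) * exp (Ca * δ)) * exp (Cb * (δ₁ * h ^ τ)) := by
                rw [hK]; gcongr
            _ = 1 := by
                rw [hlam, ← exp_add, ← exp_add, ← exp_add, hρ, exp_eq_one_iff]; ring
        have := mul_le_mul_of_nonneg_right s3 (χ0 w)
        linarith
      · have : χ w = 0 := Set.indicator_of_notMem hw _
        rw [this]; simp
    linarith
  have hmin : Measurable (fun w => exp (lam * Gfun g (min w z)) - 1) :=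
    ((((S.G.Gcont.comp (continuous_id.min continuous_const)).const_mul lam).rexp).sub continuous_const).measurable
  have idd := S.idF (F := fun w => exp (lam * Gfun g (min w z)) - 1) (α := 0) ψm ψb ?_ ?_
  · -- final estimate
    set E := exp (lam * Gfun g z) with hE
    have hbdE : ∀ w, 0 < w → 0 ≤ exp (lam * Gfun g (min w z)) - 1 ∧
        exp (lam * Gfun g (min w z)) ≤ E := by
      intro w hw
      have h1 := S.G.Gnonneg (le_min hw.le hz)
      have h2 := S.G.Gmono (le_min hw.le hz) (min_le_right w z)
      constructor
      · have : 1 ≤ exp (lam * Gfun g (min w z)) := one_le_exp (by positivity)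
        linarith
      · rw [hE]; gcongr
    have i1 : IntegrableOn (fun w => g w * (exp (lam * Gfun g (min w z)) - 1)) (Set.Ioi 0) P := by
      refine (S.gint.norm.mul_const E).integrableOn.mono' (S.gmeas.mul hmin).aestronglyMeasurable ?_
      filter_upwards [ae_restrict_mem measurableSet_Ioi] with w hw
      have := hbdE w hw
      rw [norm_mul]
      gcongr
      rw [Real.norm_eq_abs, abs_of_nonneg this.1]
      linarith
    have i2 : Integrable ((Set.Ioi (z + δ)).indicator g) P := S.gint.indicator measurableSet_Ioi
    have fin : E * rr g P (z + δ) + ∫ w, χ w ∂P ≤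
        (∫ w in Set.Ioi 0, g w * (exp (lam * Gfun g (min w z)) - 1) ∂P) + rr g P 0 := by
      unfold rr
      rw [← integral_add i1 S.gint.integrableOn, ← integral_indicator measurableSet_Ioi,
        ← integral_indicator measurableSet_Ioi, ← integral_const_mul, 
        ← integral_add (i2.const_mul E) iχ]
      apply integral_mono ((i2.const_mul E).add iχ)
        ((integrable_indicator_iff measurableSet_Ioi).2 (i1.add S.gint.integrableOn))
      intro w
      show E * (Set.Ioi (z + δ)).indicator g w + χ w ≤ (Set.Ioi 0).indicator
        (fun w => g w * (exp (lam * Gfun g (min w z)) - 1) + g w) w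
      rcases le_or_gt w 0 with hw | hw
      · have n1 : w ∉ Set.Ioi (z + δ) := by simp; linarith
        have n2 : χ w = 0 := Set.indicator_of_notMem (by simp [hw]) _
        have n3 : w ∉ Set.Ioi (0:ℝ) := by simpa using hw
        rw [Set.indicator_of_notMem n1, n2, Set.indicator_of_notMem n3]; simp
      · rw [Set.indicator_of_mem (show w ∈ Set.Ioi (0:ℝ) from hw)]
        rcases le_or_gt w (z + δ) with hw2 | hw2
        · have n1 : w ∉ Set.Ioi (z + δ) := by simp [hw2]
          have n2 : χ w = a (min w z) := Set.indicator_of_mem (show w ∈ Set.Ioc 0 (z + δ) from ⟨hw, hw2⟩) _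
          rw [Set.indicator_of_notMem n1, n2]
          have := S.G.gc.mono (min_le_left w z)
          have e := exp_pos (lam * Gfun g (min w z))
          show E * 0 + g (min w z) * exp (lam * Gfun g (min w z)) ≤ _
          have m := mul_le_mul_of_nonneg_right this e.le
          linarith
        · have n2 : χ w = 0 := Set.indicator_of_notMem (by simp [hw2]) _
          have e : min w z = z := min_eq_right (by linarith)
          rw [Set.indicator_of_mem (show w ∈ Set.Ioi (z + δ) from hw2), n2, e]
          apply le_of_eq
          rw [hE]; ring
    have r0 := S.r0_le
    have hr : E * rr g P (z + δ) ≤ d₀ + exp c₃ + B * d₀ := by linarith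
    have D : Gfun g z ≤ lam * Gfun g z + (A + Ca * A + Cb * A) := by
      have hG0 := S.G.Gnonneg hz
      have hG1 := S.G.Gle hz
      have hG2 : Gfun g z ≤ (1 + z) * h := by
        have : (1 + z) * h = 1 + z + g z + z * g z := by rw [hh]; ring
        linarith
      have : ρ * ((1 + z) * h) ≤ A + Ca * A + Cb * A := by
        have e1 : δ * ((1 + z) * h) ≤ A := by
          refine le_trans ?_ b1
          have : δ ≤ δ * h := le_mul_of_one_le_right hδ.le hh1
          gcongr
        have e2 := mul_le_mul_of_nonneg_left e1 hCap.le
        have e3 := mul_le_mul_of_nonneg_left b2 hCbp.le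
        rw [hρ]
        linarith
      have m1 := mul_le_mul_of_nonneg_right hl2 hG0
      have m2 := mul_le_mul_of_nonneg_left hG2 hρ0
      linarith
    calc rr g P (z + δ) = (E * rr g P (z + δ)) * exp (-(lam * Gfun g z)) := by
          rw [hE]
          have : exp (lam * Gfun g z) * exp (-(lam * Gfun g z)) = 1 := by rw [← exp_add]; simp
          linear_combination (-rr g P (z + δ)) * this
      _ ≤ (d₀ + exp c₃ + B * d₀) * exp (-(lam * Gfun g z)) := by gcongr
      _ ≤ (d₀ + exp c₃ + B * d₀) * (exp (A + Ca * A + Cb * A) * exp (-(Gfun g z))) := by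
          rw [← exp_add]
          gcongr
          linarith
      _ = _ := by ring
  · intro w hw
    have := ind_zero (φ := (Set.Iic z).indicator (fun x => lam * a x)) (le_refl (0:ℝ)) hw
    rw [← this]
    congr 1
    funext t
    show (Set.Ioc 0 z).indicator (fun x => lam * a x) t = _
    by_cases h1 : 0 < t <;> by_cases h2 : t ≤ z <;> simp [h1, h2]
  · intro w hw _
    have := ind_Ioc (F := fun x => exp (lam * Gfun g x)) le_rfl hz hw (fun t _ => FD t)
      (fun b => (ac.const_mul lam).intervalIntegrable _ _)
    simp only [GC.G0, mul_zero, exp_zero] at this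
    exact this

end SD


/-! ### Part D : tail bound, windows, first exponential moment -/

namespace SD

section basic
variable {g κ : ℝ → ℝ} {c₁ c₂ c₃ d₀ d₁ τ δ δ₁ : ℝ} {P ν : Measure ℝ} {A z : ℝ}

lemma reg_δh (S : SD g κ c₁ c₂ c₃ d₀ d₁ τ δ δ₁ P ν) (R : Reg g c₃ τ δ δ₁ A z) :
    δ * (1 + g z) ≤ A := by
  refine le_trans ?_ R.a1
  have hg := S.G.nonneg R.z0
  have hz := R.z0
  have hδ := S.hδ
  gcongr
  calc 1 + g z ≤ 1 * (1 + g z) ^ 2 := by nlinarith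
    _ ≤ (1 + z) * (1 + g z) ^ 2 := by gcongr; linarith

lemma reg_A (S : SD g κ c₁ c₂ c₃ d₀ d₁ τ δ δ₁ P ν) (R : Reg g c₃ τ δ δ₁ A z) : 0 < A := by
  have := S.reg_δh R
  have hg := S.G.nonneg R.z0
  have := mul_pos S.hδ (show 0 < 1 + g z by linarith)
  linarith

end basic

lemma r_bd (c₁ c₃ d₀ τ A : ℝ) (hc₁ : 0 < c₁) (hd₀ : 1 ≤ d₀) (hc₃ : 0 < c₃) : ∃ C, 0 < C ∧
    ∀ (g κ : ℝ → ℝ) (c₂ d₁ δ δ₁ : ℝ) (P ν : Measure ℝ) (z : ℝ),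
    SD g κ c₁ c₂ c₃ d₀ d₁ τ δ δ₁ P ν → Reg g c₃ τ δ δ₁ A z →
    ∀ x, 0 ≤ x → z - 4 * δ ≤ x → rr g P x ≤ C * exp (-(Gfun g z)) := by
  set C0 := (d₀ + exp c₃ + (exp c₃ * exp (exp c₃) + exp A * (c₃ * exp c₃ * (1 + exp 1 / c₁))
        * exp (exp 1 / c₁ * exp (c₃ * (exp 1 / c₁)))) * d₀) *
        exp (A + (c₃ * exp c₃ * (1 + exp 1 / c₁)) * A + 2 * exp (2 * c₃) ^ τ * A) with hC0
  have hC0p : 0 < C0 := by positivity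
  refine ⟨(C0 + (d₀ + exp c₃)) * exp (5 * A), by positivity, ?_⟩
  intro g κ c₂ d₁ δ δ₁ P ν z S R x hx hzx
  have hδ := S.hδ
  have hz := R.z0
  have hgz := S.G.nonneg hz
  have hδg : δ * g z ≤ A := by
    have := S.reg_δh R
    linarith
  have hE : ∀ D : ℝ, Gfun g z ≤ D + 5 * A → exp (-D) ≤ exp (5 * A) * exp (-(Gfun g z)) := by
    intro D h
    rw [← exp_add]
    exact exp_le_exp.2 (by linarith)
  rcases le_or_gt δ x with h | h
  · set y := min (x - δ) z with hy
    have hy0 : 0 ≤ y := le_min (by linarith) hz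
    have hyz : y ≤ z := min_le_right _ _
    have hyx : y + δ ≤ x := by linarith [min_le_left (x - δ) z]
    have hyz5 : z - y ≤ 5 * δ := by
      have : z - 5 * δ ≤ y := le_min (by linarith) (by linarith)
      linarith
    have h1 := S.gron (S.reg_mono R hy0 hyz)
    have h2 := S.r_anti (by linarith) hyx
    have h3 := S.G.Gup hyz
    have h4 : g z * (z - y) ≤ g z * (5 * δ) := by gcongr
    have h5 := hE (Gfun g y) (by linarith)
    calc rr g P x ≤ C0 * exp (-(Gfun g y)) := h2.trans h1
      _ ≤ C0 * (exp (5 * A) * exp (-(Gfun g z))) := by gcongr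
      _ ≤ (C0 + (d₀ + exp c₃)) * (exp (5 * A) * exp (-(Gfun g z))) := by
          gcongr; have := exp_pos c₃; linarith
      _ = _ := by ring
  · have h1 := S.r_anti le_rfl hx
    have h2 := S.r0_le
    have h3 := S.G.Gle hz
    have h4 : z * g z ≤ (5 * δ) * g z := by gcongr; linarith
    have h5 := hE 0 (by linarith)
    rw [neg_zero, exp_zero] at h5
    calc rr g P x ≤ (d₀ + exp c₃) * 1 := by linarith
      _ ≤ (d₀ + exp c₃) * (exp (5 * A) * exp (-(Gfun g z))) := by gcongr
      _ ≤ (C0 + (d₀ + exp c₃)) * (exp (5 * A) * exp (-(Gfun g z))) := by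
          apply mul_le_mul_of_nonneg_right _ (by positivity); linarith
      _ = _ := by ring

lemma window (c₁ c₃ d₀ τ A : ℝ) (hc₁ : 0 < c₁) (hd₀ : 1 ≤ d₀) (hc₃ : 0 < c₃) : ∃ C, 0 < C ∧
    ∀ (g κ : ℝ → ℝ) (c₂ d₁ δ δ₁ : ℝ) (P ν : Measure ℝ) (z : ℝ),
    SD g κ c₁ c₂ c₃ d₀ d₁ τ δ δ₁ P ν → Reg g c₃ τ δ δ₁ A z →
    P.real (Set.Ioc (z - δ) (z + δ)) ≤ C * (δ * exp (-(Gfun g z))) := by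
  obtain ⟨C, hC, H⟩ := r_bd c₁ c₃ d₀ τ A hc₁ hd₀ hc₃
  refine ⟨16 * C, by positivity, ?_⟩
  intro g κ c₂ d₁ δ δ₁ P ν z S R
  have hδ := S.hδ
  have hδ4 := S.hδ4
  have hz := R.z0
  have h1 := S.conc (x := z - δ) (y := z + δ) (fun w hw =>
    (S.reg_small R (by linarith [hw.1]) (by linarith [hw.2])).2)
  have hp := exp_pos (-(Gfun g z))
  rcases le_or_gt 0 (z - δ - δ) with h | h
  · have h2 := S.nuIoc' h (show z - δ - δ ≤ z + δ + δ by linarith)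
    have h3 := H g κ c₂ d₁ δ δ₁ P ν z S R _ h (by linarith)
    have h4 : (z + δ + δ - (z - δ - δ)) * rr g P (z - δ - δ) ≤ (4 * δ) * (C * exp (-(Gfun g z))) := by
      have : z + δ + δ - (z - δ - δ) = 4 * δ := by ring
      rw [this]; gcongr
    have : 0 < δ * (C * exp (-(Gfun g z))) := by positivity
    linarith
  · have h2 := S.nuIoc (show z - δ - δ ≤ z + δ + δ by linarith)
    have h3 := H g κ c₂ d₁ δ δ₁ P ν z S R 0 le_rfl (by linarith)
    have h4 : (z + δ + δ - (z - δ - δ)) * (2 * rr g P 0) ≤ (4 * δ) * (2 * (C * exp (-(Gfun g z)))) := by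
      have : z + δ + δ - (z - δ - δ) = 4 * δ := by ring
      rw [this]; gcongr
    linarith

lemma expmom (c₁ c₃ d₀ τ A : ℝ) (hc₁ : 0 < c₁) (hd₀ : 1 ≤ d₀) (hc₃ : 0 < c₃) : ∃ C, 0 < C ∧
    ∀ (g κ : ℝ → ℝ) (c₂ d₁ δ δ₁ : ℝ) (P ν : Measure ℝ) (z : ℝ),
    SD g κ c₁ c₂ c₃ d₀ d₁ τ δ δ₁ P ν → Reg g c₃ τ δ δ₁ A z →
    ∫ w in Set.Ioc 0 z, exp (Gfun g w) ∂P ≤ C * (1 + z) := by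
  obtain ⟨C, hC, H⟩ := r_bd c₁ c₃ d₀ τ A hc₁ hd₀ hc₃
  refine ⟨1 + C, by positivity, ?_⟩
  intro g κ c₂ d₁ δ δ₁ P ν z S R
  have := S.pP
  have hδ := S.hδ
  have hz := R.z0
  have hc : Continuous (fun t => g t * exp (Gfun g t)) := S.G.cont.mul S.G.Gcont.rexp
  have hD : ∀ x, HasDerivAt (fun x => exp (Gfun g x)) (g x * exp (Gfun g x)) x := fun x => by
    have := (S.G.Gderiv x).exp
    rwa [mul_comm] at this
  have hI : ∀ v, ∫ t in (0:ℝ)..v, g t * exp (Gfun g t) = exp (Gfun g v) - 1 := by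
    intro v
    rw [intervalIntegral.integral_eq_sub_of_hasDerivAt (fun x _ => hD x) (hc.intervalIntegrable _ _)]
    simp [GC.G0]
  have L := lintegral_comp_eq_lintegral_meas_lt_mul P (f := fun w => max 0 (min w z))
    (g := fun t => g t * exp (Gfun g t)) (Filter.Eventually.of_forall fun w => le_max_left _ _)
    (by fun_prop) (fun t _ => hc.intervalIntegrable _ _)
    (by
      filter_upwards [ae_restrict_mem measurableSet_Ioi] with t ht
      exact mul_nonneg (S.G.nonneg (le_of_lt ht)) (exp_pos _).le)
  have U : ∫⁻ w, ENNReal.ofReal (∫ t in (0:ℝ)..(max 0 (min w z)), g t * exp (Gfun g t)) ∂P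
      ≤ ENNReal.ofReal (C * z) := by
    rw [L]
    calc _ ≤ ∫⁻ t in Set.Ioi 0, (Set.Ioc 0 z).indicator (fun _ => ENNReal.ofReal C) t := by
          apply setLIntegral_mono (measurable_const.indicator measurableSet_Ioc)
          intro t ht
          have ht0 : 0 < t := ht
          rcases lt_or_ge t z with h | h
          · rw [Set.indicator_of_mem (show t ∈ Set.Ioc 0 z from ⟨ht, h.le⟩)]
            have e : {a : ℝ | t < max 0 (min a z)} = Set.Ioi t := by
              ext a
              simp [ht0.not_gt, h]
            rw [e]
            have h1 := H g κ c₂ d₁ δ δ₁ P ν t S (S.reg_mono R ht0.le h.le) t ht0.le (by linarith)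
            have h2 : P.real (Set.Ioi t) * g t ≤ rr g P t := by
              unfold rr
              have : P.real (Set.Ioi t) * g t = ∫ w in Set.Ioi t, g t ∂P := by simp
              rw [this]
              apply setIntegral_mono_on (integrableOn_const (by simp)) S.gint.integrableOn measurableSet_Ioi
              intro w hw
              exact S.G.gc.mono (le_of_lt hw)
            have h3 : P.real (Set.Ioi t) * (g t * exp (Gfun g t)) ≤ C := by
              have := mul_le_mul_of_nonneg_right (h2.trans h1) (exp_pos (Gfun g t)).le
              have e2 : exp (-(Gfun g t)) * exp (Gfun g t) = 1 := by rw [← exp_add]; simp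
              rw [mul_assoc, mul_assoc, e2] at this
              linarith
            rw [← ENNReal.ofReal_toReal (measure_ne_top P (Set.Ioi t)),
              ← ENNReal.ofReal_mul ENNReal.toReal_nonneg]
            exact ENNReal.ofReal_le_ofReal h3
          · have e : {a : ℝ | t < max 0 (min a z)} = ∅ := by
              ext a
              simp [ht0.le, h]
            rw [e]; simp
      _ ≤ ∫⁻ t, (Set.Ioc 0 z).indicator (fun _ => ENNReal.ofReal C) t := setLIntegral_le_lintegral _ _
      _ = ENNReal.ofReal (C * z) := by
          rw [lintegral_indicator measurableSet_Ioc]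
          simp [ENNReal.ofReal_mul hC.le]
  simp only [hI] at U
  have hm : Measurable (fun w => exp (Gfun g (max 0 (min w z))) - 1) := by
    have := S.G.Gcont
    fun_prop
  have hn : ∀ w, 0 ≤ exp (Gfun g (max 0 (min w z))) - 1 := by
    intro w
    have := one_le_exp (S.G.Gnonneg (le_max_left 0 (min w z)))
    linarith
  have hup : ∀ w, exp (Gfun g (max 0 (min w z))) - 1 ≤ exp (Gfun g z) := by
    intro w
    have := exp_le_exp.2 (S.G.Gmono (le_max_left 0 (min w z)) (max_le hz (min_le_right w z)))
    linarith
  have hi : Integrable (fun w => exp (Gfun g (max 0 (min w z))) - 1) P :=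
    S.bint hm (M := exp (Gfun g z)) (fun x => by rw [abs_of_nonneg (hn x)]; exact hup x)
  have I1 : ∫ w, (exp (Gfun g (max 0 (min w z))) - 1) ∂P ≤ C * z := by
    rw [integral_eq_lintegral_of_nonneg_ae (Filter.Eventually.of_forall hn) hm.aestronglyMeasurable]
    exact ENNReal.toReal_le_of_le_ofReal (by positivity) U
  have I2 : ∫ w in Set.Ioc 0 z, exp (Gfun g w) ∂P ≤
      ∫ w, ((exp (Gfun g (max 0 (min w z))) - 1) + 1) ∂P := by
    rw [← integral_indicator measurableSet_Ioc]
    apply integral_mono_of_nonneg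
    · exact Filter.Eventually.of_forall fun w => Set.indicator_nonneg (fun _ _ => (exp_pos _).le) w
    · exact hi.add (integrable_const _)
    · apply Filter.Eventually.of_forall
      intro w
      show (Set.Ioc 0 z).indicator (fun w => exp (Gfun g w)) w ≤ (exp (Gfun g (max 0 (min w z))) - 1) + 1
      by_cases h : w ∈ Set.Ioc 0 z
      · rw [Set.indicator_of_mem h, min_eq_left h.2, max_eq_right h.1.le]; simp
      · rw [Set.indicator_of_notMem h]; linarith [hn w]
  rw [integral_add hi (integrable_const _)] at I2
  simp only [integral_const, smul_eq_mul, mul_one, probReal_univ] at I2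
  have : 0 ≤ C + z := by positivity
  linarith

end SD


/-! ### Part E : comparison of the tail of g with its value at zero -/

lemma mvt_abs {f f' : ℝ → ℝ} {x y D : ℝ} (hf : ∀ t ∈ Set.uIcc x y, HasDerivAt f (f' t) t)
    (hb : ∀ t ∈ Set.uIcc x y, |f' t| ≤ D) : |f y - f x| ≤ D * |y - x| := by
  have := Convex.norm_image_sub_le_of_norm_hasDerivWithin_le (f := f) (f' := f') (C := D)
    (s := Set.uIcc x y) (x := x) (y := y) (fun t ht => (hf t ht).hasDerivWithinAt)
    (fun t ht => by simpa using hb t ht) (convex_uIcc x y) Set.left_mem_uIcc Set.right_mem_uIcc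
  simpa using this

namespace SD

lemma r_eq_dom {g κ : ℝ → ℝ} {c₁ c₂ c₃ d₀ d₁ τ δ δ₁ : ℝ} {P ν : Measure ℝ} {A z : ℝ}
    (S : SD g κ c₁ c₂ c₃ d₀ d₁ τ δ δ₁ P ν) (R : Reg g c₃ τ δ δ₁ A z) (w t : ℝ) (ht : |t| ≤ δ) :
    |(Set.Ioc 0 z).indicator (fun x => g x * exp (Gfun g x)) (w + t) -
      (Set.Ioc 0 z).indicator (fun x => g x * exp (Gfun g x)) w| ≤
    ((c₃ + 1) * exp A * (δ * (1 + g z) ^ 2)) * (Set.Ioc 0 z).indicator (fun x => exp (Gfun g x)) w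
      + exp c₃ * exp (exp c₃) * (Set.Ioc (0 - δ) (0 + δ)).indicator (fun _ => 1) w
      + g z * exp (Gfun g z) * (Set.Ioc (z - δ) (z + δ)).indicator (fun _ => 1) w := by
  have hδ := S.hδ
  have hδ4 := S.hδ4
  have hz := R.z0
  have hc3 := S.G.c3pos
  have hgz := S.G.nonneg hz
  have hδh := S.reg_δh R
  have ht' := abs_le.1 ht
  have hG1 : Gfun g 1 ≤ exp c₃ ∧ g 1 ≤ exp c₃ := by
    have h1 := S.G.growth0 zero_le_one
    have h2 := S.G.Gle zero_le_one
    simp at h1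
    constructor <;> linarith
  have amono : ∀ x y, 0 ≤ x → x ≤ y → g x * exp (Gfun g x) ≤ g y * exp (Gfun g y) := by
    intro x y hx hxy
    have h1 := S.G.gc.mono hxy
    have h2 := S.G.Gmono hx hxy
    have h3 := S.G.nonneg hx
    have h4 := S.G.nonneg (hx.trans hxy)
    gcongr
  have a1 : g 1 * exp (Gfun g 1) ≤ exp c₃ * exp (exp c₃) := by
    have := S.G.nonneg zero_le_one
    have h1 := hG1.1
    have h2 := hG1.2
    gcongr
  have t1 : 0 ≤ ((c₃ + 1) * exp A * (δ * (1 + g z) ^ 2)) *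
      (Set.Ioc 0 z).indicator (fun x => exp (Gfun g x)) w :=
    mul_nonneg (by positivity) (Set.indicator_nonneg (fun _ _ => (exp_pos _).le) _)
  have t2 : 0 ≤ exp c₃ * exp (exp c₃) * (Set.Ioc (0 - δ) (0 + δ)).indicator (fun _ => (1:ℝ)) w :=
    mul_nonneg (by positivity) (Set.indicator_nonneg (fun _ _ => zero_le_one) _)
  have t3 : 0 ≤ g z * exp (Gfun g z) * (Set.Ioc (z - δ) (z + δ)).indicator (fun _ => (1:ℝ)) w :=
    mul_nonneg (by positivity) (Set.indicator_nonneg (fun _ _ => zero_le_one) _)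
  have lowcase : ∀ x, 0 < x → x ≤ z → w ∈ Set.Ioc (0 - δ) (0 + δ) → x ≤ 1 →
      g x * exp (Gfun g x) ≤ ((c₃ + 1) * exp A * (δ * (1 + g z) ^ 2)) *
        (Set.Ioc 0 z).indicator (fun x => exp (Gfun g x)) w
      + exp c₃ * exp (exp c₃) * (Set.Ioc (0 - δ) (0 + δ)).indicator (fun _ => 1) w
      + g z * exp (Gfun g z) * (Set.Ioc (z - δ) (z + δ)).indicator (fun _ => 1) w := by
    intro x hx0 hxz hw hx1
    have := amono x 1 hx0.le hx1
    rw [Set.indicator_of_mem hw] at *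
    linarith
  have highcase : ∀ x, 0 < x → x ≤ z → w ∈ Set.Ioc (z - δ) (z + δ) →
      g x * exp (Gfun g x) ≤ ((c₃ + 1) * exp A * (δ * (1 + g z) ^ 2)) *
        (Set.Ioc 0 z).indicator (fun x => exp (Gfun g x)) w
      + exp c₃ * exp (exp c₃) * (Set.Ioc (0 - δ) (0 + δ)).indicator (fun _ => 1) w
      + g z * exp (Gfun g z) * (Set.Ioc (z - δ) (z + δ)).indicator (fun _ => 1) w := by
    intro x hx0 hxz hw
    have := amono x z hx0.le hxz
    rw [Set.indicator_of_mem hw] at *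
    linarith
  have apos : ∀ x, 0 < x → 0 ≤ g x * exp (Gfun g x) := fun x hx =>
    mul_nonneg (S.G.nonneg hx.le) (exp_pos _).le
  by_cases hx : w + t ∈ Set.Ioc 0 z <;> by_cases hw : w ∈ Set.Ioc 0 z
  · rw [Set.indicator_of_mem hx, Set.indicator_of_mem hw]
    have M := mvt_abs (f := fun x => g x * exp (Gfun g x))
      (f' := fun x => deriv g x * exp (Gfun g x) + g x * (exp (Gfun g x) * g x)) (x := w) (y := w + t)
      (D := (c₃ + 1) * exp A * (1 + g z) ^ 2 * exp (Gfun g w))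
      (fun s _ => (S.G.gc.diff s).hasDerivAt.mul ((S.G.Gderiv s).exp)) ?_
    · refine M.trans ?_
      rw [add_sub_cancel_left]
      have : (c₃ + 1) * exp A * (1 + g z) ^ 2 * exp (Gfun g w) * |t| ≤
          (c₃ + 1) * exp A * (1 + g z) ^ 2 * exp (Gfun g w) * δ := by gcongr
      rw [Set.indicator_of_mem hw] at *
      linarith
    · intro s hs
      have hs0 : 0 < s := lt_of_lt_of_le (lt_min hw.1 hx.1) hs.1
      have hsz : s ≤ z := hs.2.trans (max_le hw.2 hx.2)
      have hsw : s ≤ w + δ := hs.2.trans (max_le (by linarith) (by linarith))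
      have d1 := S.G.deriv_le' hs0.le
      have d2 := S.G.gc.mono hsz
      have d0 := S.G.nonneg hs0.le
      have d3 : Gfun g s ≤ Gfun g w + A := by
        rcases le_total s w with h | h
        · have := S.G.Gmono hs0.le h
          have := S.reg_A R
          linarith
        · have h1 := S.G.Gup h
          have h2 : g s * (s - w) ≤ (1 + g z) * δ := by
            apply mul_le_mul <;> linarith
          linarith
      have d4 : exp (Gfun g s) ≤ exp A * exp (Gfun g w) := by
        rw [← exp_add]; exact exp_le_exp.2 (by linarith)
      have d5 : |deriv g s| + g s * g s ≤ (c₃ + 1) * (1 + g z) ^ 2 := by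
        have e1 : c₃ * (1 + g s) ≤ c₃ * (1 + g z) ^ 2 := by
          apply mul_le_mul_of_nonneg_left _ hc3.le
          calc 1 + g s ≤ 1 + g z := by linarith
            _ ≤ (1 + g z) ^ 2 := le_self_pow₀ (by linarith) (by norm_num)
        have e2 : g s * g s ≤ (1 + g z) * (1 + g z) := by
          apply mul_le_mul <;> linarith
        linarith
      calc |deriv g s * exp (Gfun g s) + g s * (exp (Gfun g s) * g s)|
          = |(deriv g s + g s * g s)| * exp (Gfun g s) := by
            rw [← abs_of_pos (exp_pos (Gfun g s)), ← abs_mul, abs_of_pos (exp_pos (Gfun g s))]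
            congr 1; ring
        _ ≤ ((c₃ + 1) * (1 + g z) ^ 2) * (exp A * exp (Gfun g w)) := by
            apply mul_le_mul _ d4 (exp_pos _).le (by positivity)
            refine (abs_add_le _ _).trans ?_
            rw [abs_of_nonneg (mul_nonneg d0 d0)]
            exact d5
        _ = _ := by ring
  · rw [Set.indicator_of_mem hx, Set.indicator_of_notMem hw, sub_zero, abs_of_nonneg (apos _ hx.1)]
    rcases le_or_gt w 0 with h | h
    · exact lowcase _ hx.1 hx.2 ⟨by linarith [hx.1], by linarith⟩ (by linarith)
    · have : z < w := by
        by_contra hh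
        exact hw ⟨h, not_lt.1 hh⟩
      exact highcase _ hx.1 hx.2 ⟨by linarith, by linarith [hx.2]⟩
  · rw [Set.indicator_of_notMem hx, Set.indicator_of_mem hw, zero_sub, abs_neg,
      abs_of_nonneg (apos _ hw.1)]
    rcases le_or_gt (w + t) 0 with h | h
    · exact lowcase _ hw.1 hw.2 ⟨by linarith [hw.1], by linarith⟩ (by linarith)
    · have : z < w + t := by
        by_contra hh
        exact hx ⟨h, not_lt.1 hh⟩
      exact highcase _ hw.1 hw.2 ⟨by linarith, by linarith [hw.2]⟩
  · rw [Set.indicator_of_notMem hx, Set.indicator_of_notMem hw, sub_zero, abs_zero]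
    linarith

lemma r_eq (c₁ c₃ d₀ τ A : ℝ) (hc₁ : 0 < c₁) (hd₀ : 1 ≤ d₀) (hc₃ : 0 < c₃) : ∃ C, 0 < C ∧
    ∀ (g κ : ℝ → ℝ) (c₂ d₁ δ δ₁ : ℝ) (P ν : Measure ℝ) (z : ℝ),
    SD g κ c₁ c₂ c₃ d₀ d₁ τ δ δ₁ P ν → Reg g c₃ τ δ δ₁ A z →
    |exp (Gfun g z) * rr g P z - rr g P 0| ≤
      C * (δ * ((1 + z) * (1 + g z) ^ 2) + δ₁ * ((1 + z) * (1 + g z) ^ (τ + 1))) := by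
  obtain ⟨Cw, hCw, Hw⟩ := window c₁ c₃ d₀ τ A hc₁ hd₀ hc₃
  obtain ⟨Cm, hCm, Hm⟩ := expmom c₁ c₃ d₀ τ A hc₁ hd₀ hc₃
  set B1 := (c₃ + 1) * exp A with hB1
  set B2 := exp c₃ * exp (exp c₃) with hB2
  have hB1p : 0 < B1 := by positivity
  have hB2p : 0 < B2 := by positivity
  refine ⟨d₀ * (B1 * Cm + B2 * Cw + Cw) + 2 * Cm, by positivity, ?_⟩
  intro g κ c₂ d₁ δ δ₁ P ν z S R
  have := S.pP
  have hδ := S.hδ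
  have hδ₁ := S.hδ₁
  have hτ := S.hτ
  have hz := R.z0
  have hgz := S.G.nonneg hz
  have hw := Hw g κ c₂ d₁ δ δ₁ P ν z S R
  have hw0 := Hw g κ c₂ d₁ δ δ₁ P ν 0 S (S.reg_mono R le_rfl hz)
  have hm := Hm g κ c₂ d₁ δ δ₁ P ν z S R
  rw [GC.G0, neg_zero, exp_zero, mul_one] at hw0
  set h := 1 + g z with hh
  have hh1 : 1 ≤ h := by linarith
  have hc : Continuous (fun t => g t * exp (Gfun g t)) := S.G.cont.mul S.G.Gcont.rexp
  set Φ : ℝ → ℝ := (Set.Ioc 0 z).indicator (fun x => g x * exp (Gfun g x)) with hΦ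
  set b : ℝ → ℝ := fun w =>
    (B1 * (δ * h ^ 2)) * (Set.Ioc 0 z).indicator (fun x => exp (Gfun g x)) w
      + B2 * (Set.Ioc (0 - δ) (0 + δ)).indicator (fun _ => 1) w
      + g z * exp (Gfun g z) * (Set.Ioc (z - δ) (z + δ)).indicator (fun _ => 1) w with hb
  have Φm : Measurable Φ := hc.measurable.indicator measurableSet_Ioc
  have Φ0 : ∀ x, 0 ≤ Φ x := fun x => Set.indicator_nonneg
    (fun x hx => mul_nonneg (S.G.nonneg hx.1.le) (exp_pos _).le) x
  have ΦM : ∀ x, Φ x ≤ g z * exp (Gfun g z) := by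
    intro x
    apply Set.indicator_le' _ (fun _ _ => by positivity)
    intro x hx
    have h1 := S.G.gc.mono hx.2
    have h2 := S.G.Gmono hx.1.le hx.2
    gcongr
  have Φb : ∀ x, |Φ x| ≤ g z * exp (Gfun g z) := fun x => by rw [abs_of_nonneg (Φ0 x)]; exact ΦM x
  have bm : Measurable b := by
    have m1 : Measurable ((Set.Ioc 0 z).indicator (fun x => exp (Gfun g x))) :=
      S.G.Gcont.rexp.measurable.indicator measurableSet_Ioc
    have m2 : ∀ x y : ℝ, Measurable ((Set.Ioc x y).indicator (fun _ => (1:ℝ))) := fun x y =>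
      measurable_const.indicator measurableSet_Ioc
    exact ((m1.const_mul _).add ((m2 _ _).const_mul _)).add ((m2 _ _).const_mul _)
  have i1 : Integrable ((Set.Ioc 0 z).indicator (fun x => exp (Gfun g x))) P := by
    apply S.bint (S.G.Gcont.rexp.measurable.indicator measurableSet_Ioc) (M := exp (Gfun g z))
    intro x
    rw [abs_of_nonneg (Set.indicator_nonneg (fun _ _ => (exp_pos _).le) _)]
    apply Set.indicator_le' _ (fun _ _ => (exp_pos _).le)
    intro x hx
    exact exp_le_exp.2 (S.G.Gmono hx.1.le hx.2)
  have i2 : ∀ x y : ℝ, Integrable ((Set.Ioc x y).indicator (fun _ => (1:ℝ))) P := fun x y =>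
    (integrable_const _).indicator measurableSet_Ioc
  have j1 := i1.const_mul (B1 * (δ * h ^ 2))
  have j2 := (i2 (0 - δ) (0 + δ)).const_mul B2
  have j3 := (i2 (z - δ) (z + δ)).const_mul (g z * exp (Gfun g z))
  have bi : Integrable b P := (j1.add j2).add j3
  have b0 : ∀ w, 0 ≤ b w := by
    intro w
    have t1 : 0 ≤ (B1 * (δ * h ^ 2)) * (Set.Ioc 0 z).indicator (fun x => exp (Gfun g x)) w :=
      mul_nonneg (by positivity) (Set.indicator_nonneg (fun _ _ => (exp_pos _).le) _)
    have t2 : 0 ≤ B2 * (Set.Ioc (0 - δ) (0 + δ)).indicator (fun _ => (1:ℝ)) w :=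
      mul_nonneg (by positivity) (Set.indicator_nonneg (fun _ _ => zero_le_one) _)
    have t3 : 0 ≤ g z * exp (Gfun g z) * (Set.Ioc (z - δ) (z + δ)).indicator (fun _ => (1:ℝ)) w :=
      mul_nonneg (by positivity) (Set.indicator_nonneg (fun _ _ => zero_le_one) _)
    exact add_nonneg (add_nonneg t1 t2) t3
  have key := S.comp Φm bm Φ0 ΦM b0 bi (fun w t ht => S.r_eq_dom R w t ht)
  -- integral of b
  have Ib : ∫ w, b w ∂P ≤ (B1 * Cm + B2 * Cw + Cw) * (δ * ((1 + z) * h ^ 2)) := by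
    have e : ∫ w, b w ∂P = (B1 * (δ * h ^ 2)) * (∫ w in Set.Ioc 0 z, exp (Gfun g w) ∂P)
        + B2 * P.real (Set.Ioc (0 - δ) (0 + δ)) + g z * exp (Gfun g z) * P.real (Set.Ioc (z - δ) (z + δ)) := by
      have j12 : Integrable (fun w => (B1 * (δ * h ^ 2)) *
          (Set.Ioc 0 z).indicator (fun x => exp (Gfun g x)) w
          + B2 * (Set.Ioc (0 - δ) (0 + δ)).indicator (fun _ => 1) w) P := j1.add j2
      simp only [hb]
      rw [integral_add j12 j3, integral_add j1 j2, integral_const_mul, integral_const_mul,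
        integral_const_mul, integral_indicator measurableSet_Ioc, integral_indicator measurableSet_Ioc,
        integral_indicator measurableSet_Ioc]
      simp
    rw [e]
    have e1 : (B1 * (δ * h ^ 2)) * (∫ w in Set.Ioc 0 z, exp (Gfun g w) ∂P) ≤
        (B1 * (δ * h ^ 2)) * (Cm * (1 + z)) := by gcongr
    have e2 : B2 * P.real (Set.Ioc (0 - δ) (0 + δ)) ≤ B2 * (Cw * δ) := by gcongr
    have e3 : g z * exp (Gfun g z) * P.real (Set.Ioc (z - δ) (z + δ)) ≤
        g z * exp (Gfun g z) * (Cw * (δ * exp (-(Gfun g z)))) := by gcongr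
    have e4 : g z * exp (Gfun g z) * (Cw * (δ * exp (-(Gfun g z)))) = Cw * (δ * g z) := by
      have : exp (Gfun g z) * exp (-(Gfun g z)) = 1 := by rw [← exp_add]; simp
      linear_combination (g z * Cw * δ) * this
    have q1 : 1 ≤ (1 + z) * h ^ 2 := one_le_mul_of_one_le_of_one_le (by linarith) (one_le_pow₀ hh1)
    have q2 : g z ≤ (1 + z) * h ^ 2 := by
      calc g z ≤ 1 * h := by linarith
        _ ≤ (1 + z) * h ^ 2 := by
          apply mul_le_mul (by linarith) (le_self_pow₀ hh1 (by norm_num)) (by linarith) (by linarith)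
    have e5 : B2 * (Cw * δ) ≤ B2 * Cw * (δ * ((1 + z) * h ^ 2)) := by
      have := mul_le_mul_of_nonneg_left q1 (show 0 ≤ B2 * Cw * δ by positivity)
      linarith
    have e6 : Cw * (δ * g z) ≤ Cw * (δ * ((1 + z) * h ^ 2)) := by gcongr
    linarith
  -- integral against kappa - 1
  have Ik : ∫ w, Φ w * |κ w - 1| ∂P ≤ 2 * Cm * (δ₁ * ((1 + z) * h ^ (τ + 1))) := by
    have : ∫ w, Φ w * |κ w - 1| ∂P ≤ ∫ w, (2 * (δ₁ * h ^ (τ + 1))) *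
        (Set.Ioc 0 z).indicator (fun x => exp (Gfun g x)) w ∂P := by
      apply integral_mono_ae (S.κ1int (S.bint Φm Φb)) (i1.const_mul _)
      filter_upwards [S.κ1] with w hw
      by_cases hx : w ∈ Set.Ioc 0 z
      · have e : Φ w = g w * exp (Gfun g w) := Set.indicator_of_mem hx _
        show Φ w * |κ w - 1| ≤ _
        rw [e, Set.indicator_of_mem hx]
        have g0 := S.G.nonneg hx.1.le
        have g1 := S.G.gc.mono hx.2
        rw [abs_of_nonneg g0] at hw
        have p1 : g w ^ τ ≤ h ^ τ := rpow_le_rpow g0 (by linarith) hτ.le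
        have p2 : 1 ≤ h ^ τ := one_le_rpow hh1 hτ.le
        have p3 : |κ w - 1| ≤ δ₁ * (2 * h ^ τ) := by
          refine hw.trans ?_
          apply mul_le_mul_of_nonneg_left _ hδ₁.le; linarith
        have p4 : h ^ (τ + 1) = h ^ τ * h := by rw [rpow_add (by linarith), rpow_one]
        rw [p4]
        calc g w * exp (Gfun g w) * |κ w - 1| ≤ (h * exp (Gfun g w)) * (δ₁ * (2 * h ^ τ)) := by
              apply mul_le_mul _ p3 (abs_nonneg _) (by positivity)
              apply mul_le_mul_of_nonneg_right _ (exp_pos _).le; linarith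
          _ = _ := by ring
      · have e : Φ w = 0 := Set.indicator_of_notMem hx _
        show Φ w * |κ w - 1| ≤ _
        rw [e, Set.indicator_of_notMem hx]; simp
    rw [integral_const_mul, integral_indicator measurableSet_Ioc] at this
    refine this.trans ?_
    calc _ ≤ 2 * (δ₁ * h ^ (τ + 1)) * (Cm * (1 + z)) := by gcongr
      _ = _ := by ring
  -- the identity
  have hD : ∀ x, HasDerivAt (fun x => exp (Gfun g x)) (g x * exp (Gfun g x)) x := fun x => by
    have := (S.G.Gderiv x).exp
    rwa [mul_comm] at this
  have idd := S.idF (F := fun w => exp (Gfun g (min w z)) - 1) (α := 0) Φm Φb ?_ ?_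
  · have hmin : Measurable (fun w => exp (Gfun g (min w z)) - 1) := by
      have := S.G.Gcont
      fun_prop
    have iΦ := S.bint Φm Φb
    have hid : ∫ w in Set.Ioi 0, g w * (exp (Gfun g (min w z)) - 1) ∂P =
        (∫ w, Φ w ∂P) + (exp (Gfun g z) * rr g P z - rr g P 0) := by
      have i3 : Integrable ((Set.Ioi z).indicator g) P := S.gint.indicator measurableSet_Ioi
      have i4 : Integrable ((Set.Ioi 0).indicator g) P := S.gint.indicator measurableSet_Ioi
      have i5 : Integrable (fun a => exp (Gfun g z) * (Set.Ioi z).indicator g a -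
          (Set.Ioi 0).indicator g a) P := (i3.const_mul _).sub i4
      unfold rr
      rw [← integral_indicator measurableSet_Ioi, ← integral_indicator measurableSet_Ioi,
        ← integral_indicator measurableSet_Ioi, ← integral_const_mul, 
        ← integral_sub (i3.const_mul _) i4, ← integral_add iΦ i5]
      congr 1
      funext w
      rcases le_or_gt w 0 with hw0 | hw0
      · have n1 : w ∉ Set.Ioi (0:ℝ) := by simpa using hw0
        have n2 : w ∉ Set.Ioi z := by simp; linarith
        have n3 : Φ w = 0 := Set.indicator_of_notMem (fun hx => n1 hx.1) _
        rw [Set.indicator_of_notMem n1, Set.indicator_of_notMem n2, Set.indicator_of_notMem n1, n3]; simp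
      · have n1 : w ∈ Set.Ioi (0:ℝ) := hw0
        rw [Set.indicator_of_mem n1, Set.indicator_of_mem n1]
        rcases le_or_gt w z with hwz | hwz
        · have n2 : w ∉ Set.Ioi z := by simpa using hwz
          have n3 : Φ w = g w * exp (Gfun g w) := Set.indicator_of_mem (show w ∈ Set.Ioc 0 z from ⟨hw0, hwz⟩) _
          rw [Set.indicator_of_notMem n2, n3, min_eq_left hwz]; ring
        · have n2 : w ∈ Set.Ioi z := hwz
          have n3 : Φ w = 0 := Set.indicator_of_notMem (fun hx => absurd hx.2 (not_le.2 hwz)) _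
          rw [Set.indicator_of_mem n2, n3, min_eq_right hwz.le]; ring
    rw [idd, hid, add_sub_cancel_left] at key
    have Ib' := mul_le_mul_of_nonneg_left Ib (show 0 ≤ d₀ by linarith)
    have y1 : 0 ≤ δ * ((1 + z) * h ^ 2) := by positivity
    have y2 : 0 ≤ δ₁ * ((1 + z) * h ^ (τ + 1)) := by positivity
    have y3 : 0 ≤ d₀ * (B1 * Cm + B2 * Cw + Cw) := by positivity
    have y4 := mul_nonneg y3 y2
    have y5 := mul_nonneg hCm.le y1
    linarith
  · intro w hw
    have := ind_zero (φ := (Set.Iic z).indicator (fun x => g x * exp (Gfun g x))) (le_refl (0:ℝ)) hw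
    rw [← this]
    congr 1
    funext t
    rw [hΦ]
    by_cases h1 : 0 < t <;> by_cases h2 : t ≤ z <;> simp [h1, h2]
  · intro w hw _
    have := ind_Ioc (F := fun x => exp (Gfun g x)) le_rfl hz hw (fun t _ => hD t)
      (fun b => hc.intervalIntegrable _ _)
    simp only [GC.G0, exp_zero] at this
    exact this

end SD


/-! ### Part F : tail moments -/

namespace SD

section basic
variable {g κ : ℝ → ℝ} {c₁ c₂ c₃ d₀ d₁ τ δ δ₁ : ℝ} {P ν : Measure ℝ} {A z : ℝ}

lemma onint (S : SD g κ c₁ c₂ c₃ d₀ d₁ τ δ δ₁ P ν) {f : ℝ → ℝ} {a M : ℝ} (hf : Measurable f)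
    (hb : ∀ w, a < w → |g w| ≤ d₁ / δ → |f w| ≤ M) : IntegrableOn f (Set.Ioi a) P := by
  have := S.pP
  refine Measure.integrableOn_of_bounded (M := M) (by simp) hf.aestronglyMeasurable ?_
  filter_upwards [ae_restrict_mem measurableSet_Ioi, ae_restrict_of_ae S.gbd] with w h1 h2
  exact hb w h1 h2

lemma hmeas (S : SD g κ c₁ c₂ c₃ d₀ d₁ τ δ δ₁ P ν) (m : ℝ) : Measurable (fun w => (1 + g w) ^ m) :=
  (S.gmeas.const_add 1).pow_const m

lemma hbd (S : SD g κ c₁ c₂ c₃ d₀ d₁ τ δ δ₁ P ν) {m w : ℝ} (hm : 0 ≤ m) (hw : 0 ≤ w)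
    (h : |g w| ≤ d₁ / δ) : (1 + g w) ^ m ≤ (1 + d₁ / δ) ^ m := by
  have h0 := S.G.nonneg hw
  rw [abs_of_nonneg h0] at h
  exact rpow_le_rpow (by linarith) (by linarith) hm

lemma hmint (S : SD g κ c₁ c₂ c₃ d₀ d₁ τ δ δ₁ P ν) {m a : ℝ} (hm : 0 ≤ m) (ha : 0 ≤ a) :
    IntegrableOn (fun w => (1 + g w) ^ m) (Set.Ioi a) P := by
  refine S.onint (S.hmeas m) (M := (1 + d₁ / δ) ^ m) fun w hw h => ?_
  have h0 := S.G.nonneg (ha.trans hw.le)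
  rw [abs_of_nonneg (by positivity)]
  exact S.hbd hm (ha.trans hw.le) h

lemma ghmint (S : SD g κ c₁ c₂ c₃ d₀ d₁ τ δ δ₁ P ν) {m a : ℝ} (hm : 0 ≤ m) (ha : 0 ≤ a) :
    IntegrableOn (fun w => g w * (1 + g w) ^ m) (Set.Ioi a) P := by
  refine S.onint (S.gmeas.mul (S.hmeas m)) (M := d₁ / δ * (1 + d₁ / δ) ^ m) fun w hw h => ?_
  have h0 := S.G.nonneg (ha.trans hw.le)
  have := S.hd₁
  have := S.hδ
  rw [abs_mul, abs_of_nonneg (show 0 ≤ (1 + g w) ^ m by positivity)]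
  exact mul_le_mul h (S.hbd hm (ha.trans hw.le) h) (by positivity) (by positivity)

lemma hmdint (S : SD g κ c₁ c₂ c₃ d₀ d₁ τ δ δ₁ P ν) {m a : ℝ} (hm : 0 ≤ m) (ha : 0 ≤ a) :
    IntegrableOn (fun w => (1 + g w) ^ m / (1 + w)) (Set.Ioi a) P := by
  refine S.onint ((S.hmeas m).div (measurable_id.const_add 1)) (M := (1 + d₁ / δ) ^ m) fun w hw h => ?_
  have h0 := S.G.nonneg (ha.trans hw.le)
  have hw0 := ha.trans hw.le
  rw [abs_of_nonneg (by positivity)]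
  refine le_trans ?_ (S.hbd hm (ha.trans hw.le) h)
  exact div_le_self (by positivity) (by linarith)

lemma mom1 (S : SD g κ c₁ c₂ c₃ d₀ d₁ τ δ δ₁ P ν) {m : ℝ} (hm : 0 < m) (hz : 1 ≤ z) :
    ∫ w in Set.Ioi z, g w * (1 + g w) ^ m ∂P ≤ (1 + g z) ^ m * rr g P z +
      d₀ * ((2 * m * c₃ * exp c₃ ^ m) * ∫ w in Set.Ioi (z - δ), (1 + g w) ^ m / (1 + w) ∂P) := by
  have hδ := S.hδ
  have hδ4 := S.hδ4
  have hd1 := S.hd₁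
  have hc3 := S.G.c3pos
  have hz0 : 0 ≤ z := by linarith
  set K := 2 * m * c₃ * exp c₃ ^ m with hK
  have hKp : 0 < K := by positivity
  let ψ1 : ℝ → ℝ := fun x => m * (1 + g x) ^ (m - 1) * deriv g x
  have ψ1m : Measurable ψ1 := ((S.hmeas (m - 1)).const_mul m).mul (measurable_deriv g)
  have ψ1n : ∀ x, 0 ≤ x → 0 ≤ ψ1 x := by
    intro x hx
    have h1 := S.G.nonneg hx
    have h2 := S.G.gc.mono.deriv_nonneg (x := x)
    show 0 ≤ m * (1 + g x) ^ (m - 1) * deriv g x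
    positivity
  have ψ1b : ∀ x, 0 ≤ x → ψ1 x ≤ m * c₃ * ((1 + g x) ^ m / (1 + x)) := by
    intro x hx
    have h1 := S.G.nonneg hx
    have h2 := (le_abs_self _).trans (S.G.deriv_le hx)
    have e : (1 + g x) ^ m = (1 + g x) ^ (m - 1) * (1 + g x) := by
      rw [← rpow_add_one (by linarith), sub_add_cancel]
    show m * (1 + g x) ^ (m - 1) * deriv g x ≤ _
    rw [e]
    calc m * (1 + g x) ^ (m - 1) * deriv g x ≤ m * (1 + g x) ^ (m - 1) * (c₃ * (1 + g x) / (1 + x)) := by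
          gcongr
      _ = _ := by ring
  let s : Set ℝ := {x | z < x ∧ g x ≤ d₁ / δ}
  have sm : MeasurableSet s :=
    measurableSet_Ioi.inter (measurableSet_le S.gmeas measurable_const)
  let ψ : ℝ → ℝ := s.indicator ψ1
  have ψm : Measurable ψ := ψ1m.indicator sm
  have ψ0 : ∀ x, 0 ≤ ψ x := fun x => Set.indicator_nonneg (fun x hx => ψ1n x (hz0.trans hx.1.le)) x
  have ψM : ∀ x, |ψ x| ≤ m * c₃ * (1 + d₁ / δ) ^ m := by
    intro x
    rw [abs_of_nonneg (ψ0 x)]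
    apply Set.indicator_le' _ (fun _ _ => by positivity)
    intro x hx
    have hx0 := hz0.trans hx.1.le
    have h0 := S.G.nonneg hx0
    refine (ψ1b x hx0).trans ?_
    have h1 : (1 + g x) ^ m / (1 + x) ≤ (1 + g x) ^ m := div_le_self (by positivity) (by linarith)
    have h2 := S.hbd hm.le hx0 (by rw [abs_of_nonneg h0]; exact hx.2)
    exact mul_le_mul_of_nonneg_left (h1.trans h2) (by positivity)
  let φ : ℝ → ℝ := fun w => K * (Set.Ioi (z - δ)).indicator (fun w => (1 + g w) ^ m / (1 + w)) w
  have φi : Integrable φ P := (((integrable_indicator_iff measurableSet_Ioi).2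
    (S.hmdint hm.le (show 0 ≤ z - δ by linarith))).const_mul K)
  have φm : Measurable φ := (((S.hmeas m).div (measurable_id.const_add 1)).indicator
    measurableSet_Ioi).const_mul K
  have φ0 : ∀ x, 0 ≤ φ x := fun x => mul_nonneg hKp.le (Set.indicator_nonneg (fun x hx => by
    have hx' : z - δ < x := hx
    have hx0 : 0 ≤ x := by linarith
    have := S.G.nonneg hx0
    positivity) x)
  have dom : ∀ w t, |t| ≤ δ → ψ (w + t) ≤ φ w := by
    intro w t ht
    have ht' := abs_le.1 ht
    by_cases hx : w + t ∈ s
    · have e1 : ψ (w + t) = ψ1 (w + t) := Set.indicator_of_mem hx _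
      have hxz : z < w + t := hx.1
      have hw : w ∈ Set.Ioi (z - δ) := by show z - δ < w; linarith
      have hw0 : 0 ≤ w := by linarith
      have hx0 : 0 ≤ w + t := by linarith
      rw [e1]
      refine (ψ1b _ hx0).trans ?_
      show _ ≤ K * (Set.Ioi (z - δ)).indicator (fun w => (1 + g w) ^ m / (1 + w)) w
      rw [Set.indicator_of_mem hw]
      have gw := S.G.nonneg hw0
      have gx := S.G.nonneg hx0
      have h1 : 1 + g (w + t) ≤ exp c₃ * (1 + g w) := by
        have a := S.G.gc.mono (show w + t ≤ w + δ by linarith)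
        have b := S.G.growth hw0 (show w ≤ w + δ by linarith)
        rw [add_sub_cancel_left] at b
        have c : exp (c₃ * δ) ≤ exp c₃ := exp_le_exp.2 (mul_le_of_le_one_right hc3.le (by linarith))
        have d := mul_le_mul_of_nonneg_right c (show 0 ≤ 1 + g w by linarith)
        linarith
      have h2 : (1 + g (w + t)) ^ m ≤ exp c₃ ^ m * (1 + g w) ^ m := by
        rw [← mul_rpow (exp_pos _).le (by linarith)]
        exact rpow_le_rpow (by linarith) h1 hm.le
      have h3 : (1 + (w + t))⁻¹ ≤ 2 * (1 + w)⁻¹ := by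
        rw [← div_eq_mul_inv, inv_eq_one_div, div_le_div_iff₀ (by linarith) (by linarith)]
        linarith
      calc m * c₃ * ((1 + g (w + t)) ^ m / (1 + (w + t)))
          = m * c₃ * ((1 + g (w + t)) ^ m * (1 + (w + t))⁻¹) := by rw [div_eq_mul_inv]
        _ ≤ m * c₃ * ((exp c₃ ^ m * (1 + g w) ^ m) * (2 * (1 + w)⁻¹)) := by gcongr
        _ = _ := by rw [hK, div_eq_mul_inv]; ring
    · have e1 : ψ (w + t) = 0 := Set.indicator_of_notMem hx _
      rw [e1]; exact φ0 w
  have key := S.up1 ψm φm ψM φ0 φi dom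
  have e2 : ∫ w, φ w ∂P = K * ∫ w in Set.Ioi (z - δ), (1 + g w) ^ m / (1 + w) ∂P := by
    show ∫ w, K * _ ∂P = _
    rw [integral_const_mul, integral_indicator measurableSet_Ioi]
  rw [e2] at key
  have idd := S.idF (F := fun w => (1 + g w) ^ m - (1 + g z) ^ m) (α := z) ψm ψM ?_ ?_
  · rw [idd] at key
    have e3 : ∫ w in Set.Ioi z, g w * ((1 + g w) ^ m - (1 + g z) ^ m) ∂P =
        (∫ w in Set.Ioi z, g w * (1 + g w) ^ m ∂P) - (1 + g z) ^ m * rr g P z := by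
      unfold rr
      rw [← integral_const_mul, ← integral_sub (S.ghmint hm.le hz0) (S.gint.const_mul _).integrableOn]
      congr 1
      funext w
      ring
    rw [e3] at key
    linarith
  · intro w hw
    have := ind_zero (φ := {x | g x ≤ d₁ / δ}.indicator ψ1) hz0 hw
    rw [← this]
    congr 1
    funext x
    show s.indicator ψ1 x = _
    by_cases h1 : z < x <;> by_cases h2 : g x ≤ d₁ / δ <;> simp [s, Set.indicator, h1, h2]
  · intro w hw hgw
    have hw0 : 0 ≤ w := by linarith
    rw [abs_of_nonneg (S.G.nonneg hw0)] at hgw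
    have e : ∫ x in (0:ℝ)..w, ψ x = ∫ x in (0:ℝ)..w, (Set.Ioi z).indicator ψ1 x := by
      apply intervalIntegral.integral_congr
      intro x hx
      rw [Set.uIcc_of_le hw0] at hx
      have h2 : g x ≤ d₁ / δ := (S.G.gc.mono hx.2).trans hgw
      show s.indicator ψ1 x = _
      by_cases h1 : z < x <;> simp [s, Set.indicator, h1, h2]
    rw [e]
    have hF : ∀ x, z ≤ x → HasDerivAt (fun x => (1 + g x) ^ m) (ψ1 x) x := by
      intro x hx
      have h0 := S.G.nonneg (hz0.trans hx)
      have := ((S.G.gc.diff x).hasDerivAt.const_add 1).rpow_const (p := m) (Or.inl (by linarith))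
      refine this.congr_deriv ?_
      show _ = m * (1 + g x) ^ (m - 1) * deriv g x
      ring
    apply ind_Ioi (F := fun x => (1 + g x) ^ m) hz0 hw hF
    rw [intervalIntegrable_iff, Set.uIoc_of_le hw.le]
    refine Measure.integrableOn_of_bounded (M := m * c₃ * (1 + d₁ / δ) ^ m) (by simp)
      ψ1m.aestronglyMeasurable ?_
    filter_upwards [ae_restrict_mem measurableSet_Ioc] with x hx
    have h2 : g x ≤ d₁ / δ := (S.G.gc.mono hx.2).trans hgw
    have := ψM x
    have e4 : ψ x = ψ1 x := Set.indicator_of_mem (show x ∈ s from ⟨hx.1, h2⟩) _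
    rwa [e4] at this

lemma mom2 (S : SD g κ c₁ c₂ c₃ d₀ d₁ τ δ δ₁ P ν) {m : ℝ} (hm : 0 < m)
    (hz : 1 + exp 1 / c₁ + 2 * d₀ * (2 * m * c₃ * exp c₃ ^ m) * (exp 1 / c₁) ≤ z) :
    ∫ w in Set.Ioi z, (1 + g w) ^ m ∂P ≤ 2 * (exp 1 / c₁) * ((1 + g z) ^ m *
      (rr g P z + d₀ * (2 * m * c₃ * exp c₃ ^ m) * P.real (Set.Ioc (z - δ) z))) := by
  have := S.pP
  have hc1 := S.G.c1
  have hc3 := S.G.c3pos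
  have hd0 := S.hd₀
  have hδ := S.hδ
  have hδ4 := S.hδ4
  set z0 := exp 1 / c₁ with hz0
  have hz0p : 0 < z0 := by positivity
  set K := 2 * m * c₃ * exp c₃ ^ m with hK
  have hKp : 0 < K := by positivity
  have hdK : 0 < 2 * d₀ * K * z0 := by positivity
  have hz1 : 1 ≤ z := by linarith
  have hzz : z0 ≤ z := by linarith
  have hzn : 0 ≤ z := by linarith
  have h1 := S.mom1 hm hz1
  have hgz := S.G.nonneg hzn
  set I := ∫ w in Set.Ioi z, g w * (1 + g w) ^ m ∂P with hI
  have glow : ∀ w, z < w → 1 ≤ z0 * g w := fun w hw => S.G.glow (hzz.trans hw.le)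
  -- split the integral
  have h2 : ∫ w in Set.Ioi (z - δ), (1 + g w) ^ m / (1 + w) ∂P =
      (∫ w in Set.Ioc (z - δ) z, (1 + g w) ^ m / (1 + w) ∂P) +
        ∫ w in Set.Ioi z, (1 + g w) ^ m / (1 + w) ∂P := by
    have hi := S.hmdint hm.le (show 0 ≤ z - δ by linarith)
    rw [← setIntegral_union _ measurableSet_Ioi (hi.mono_set Set.Ioc_subset_Ioi_self)
      (hi.mono_set (Set.Ioi_subset_Ioi (by linarith))), Set.Ioc_union_Ioi_eq_Ioi (by linarith)]
    rw [Set.disjoint_left]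
    intro a ha hb
    exact absurd ha.2 (not_le.2 hb)
  have h3 : ∫ w in Set.Ioc (z - δ) z, (1 + g w) ^ m / (1 + w) ∂P ≤
      (1 + g z) ^ m * P.real (Set.Ioc (z - δ) z) := by
    have hi := S.hmdint hm.le (show 0 ≤ z - δ by linarith)
    have : (1 + g z) ^ m * P.real (Set.Ioc (z - δ) z) = ∫ w in Set.Ioc (z - δ) z, (1 + g z) ^ m ∂P := by
      simp [mul_comm]
    rw [this]
    apply setIntegral_mono_on (hi.mono_set Set.Ioc_subset_Ioi_self) (integrableOn_const (by simp))
      measurableSet_Ioc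
    intro w hw
    have hw0 : 0 ≤ w := by linarith [hw.1]
    have hg0 := S.G.nonneg hw0
    have hg1 := S.G.gc.mono hw.2
    calc (1 + g w) ^ m / (1 + w) ≤ (1 + g w) ^ m := div_le_self (by positivity) (by linarith)
      _ ≤ _ := rpow_le_rpow (by linarith) (by linarith) hm.le
  have h4 : d₀ * (K * ∫ w in Set.Ioi z, (1 + g w) ^ m / (1 + w) ∂P) ≤ 1 / 2 * I := by
    rw [hI, ← integral_const_mul, ← integral_const_mul, ← integral_const_mul]
    apply setIntegral_mono_on (((S.hmdint hm.le hzn).const_mul _).const_mul _)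
      ((S.ghmint hm.le hzn).const_mul _) measurableSet_Ioi
    intro w hw
    have hw' : z < w := hw
    have hg0 := S.G.nonneg (hzn.trans hw'.le)
    have hgl := glow w hw
    have e1 : d₀ * K / (1 + w) ≤ 1 / 2 * g w := by
      rw [div_le_iff₀ (by linarith)]
      have e2 : d₀ * K ≤ d₀ * K * (z0 * g w) := le_mul_of_one_le_right (by positivity) hgl
      have e3 : 2 * d₀ * K * z0 * g w ≤ (1 + w) * g w := by
        apply mul_le_mul_of_nonneg_right _ hg0; linarith
      linarith
    have hp : 0 ≤ (1 + g w) ^ m := by positivity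
    have e5 := mul_le_mul_of_nonneg_right e1 hp
    calc d₀ * (K * ((1 + g w) ^ m / (1 + w))) = d₀ * K / (1 + w) * (1 + g w) ^ m := by ring
      _ ≤ _ := e5
      _ = _ := by ring
  have h5 : ∫ w in Set.Ioi z, (1 + g w) ^ m ∂P ≤ z0 * I := by
    rw [hI, ← integral_const_mul]
    apply setIntegral_mono_on (S.hmint hm.le hzn) ((S.ghmint hm.le hzn).const_mul _) measurableSet_Ioi
    intro w hw
    have hw' : z < w := hw
    have hg0 := S.G.nonneg (hzn.trans hw'.le)
    have hp : 0 ≤ (1 + g w) ^ m := by positivity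
    have := mul_le_mul_of_nonneg_right (glow w hw) hp
    linarith
  rw [h2] at h1
  have h6 := mul_le_mul_of_nonneg_left h3 (show 0 ≤ d₀ * K by positivity)
  have h7 : I ≤ 2 * ((1 + g z) ^ m * (rr g P z + d₀ * K * P.real (Set.Ioc (z - δ) z))) := by linarith
  have h8 := mul_le_mul_of_nonneg_left h7 hz0p.le
  linarith

end basic

lemma tail (c₁ c₃ d₀ τ A m : ℝ) (hc₁ : 0 < c₁) (hd₀ : 1 ≤ d₀) (hc₃ : 0 < c₃) (hm : 0 < m) :
    ∃ C, 0 < C ∧ ∀ (g κ : ℝ → ℝ) (c₂ d₁ δ δ₁ : ℝ) (P ν : Measure ℝ) (z : ℝ),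
    SD g κ c₁ c₂ c₃ d₀ d₁ τ δ δ₁ P ν → Reg g c₃ τ δ δ₁ A z →
    ∫ w in Set.Ioi z, (1 + g w) ^ m ∂P ≤ C * ((1 + g z) ^ m * exp (-(Gfun g z))) := by
  obtain ⟨Cw, hCw, Hw⟩ := window c₁ c₃ d₀ τ A hc₁ hd₀ hc₃
  obtain ⟨Cr, hCr, Hr⟩ := r_bd c₁ c₃ d₀ τ A hc₁ hd₀ hc₃
  set z0 := exp 1 / c₁ with hz0
  have hz0p : 0 < z0 := by positivity
  set K := 2 * m * c₃ * exp c₃ ^ m with hK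
  have hKp : 0 < K := by positivity
  set Z := 1 + z0 + 2 * d₀ * K * z0 with hZ
  have hZp : 0 < Z := by positivity
  set B := exp (c₃ * Z) ^ m * (1 + 2 * z0 * (d₀ + exp c₃ + d₀ * K)) * exp (Z * exp (c₃ * Z)) with hB
  have hBp : 0 < B := by positivity
  refine ⟨2 * z0 * (Cr + d₀ * K * Cw) + B, by positivity, ?_⟩
  intro g κ c₂ d₁ δ δ₁ P ν z S R
  have := S.pP
  have hδ := S.hδ
  have hδ4 := S.hδ4
  have hz := R.z0
  have hgz := S.G.nonneg hz
  have hE := exp_pos (-(Gfun g z))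
  have hh : 1 ≤ (1 + g z) ^ m := one_le_rpow (by linarith) hm.le
  have hp : 0 < (1 + g z) ^ m * exp (-(Gfun g z)) := by positivity
  rcases le_or_gt Z z with h | h
  · have h1 := S.mom2 hm h
    have h2 := Hr g κ c₂ d₁ δ δ₁ P ν z S R z hz (by linarith)
    have h3 := Hw g κ c₂ d₁ δ δ₁ P ν z S R
    have h4 : P.real (Set.Ioc (z - δ) z) ≤ Cw * exp (-(Gfun g z)) := by
      calc P.real (Set.Ioc (z - δ) z) ≤ P.real (Set.Ioc (z - δ) (z + δ)) :=
            measureReal_mono (Set.Ioc_subset_Ioc_right (by linarith))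
        _ ≤ _ := h3
        _ ≤ _ := by
          apply mul_le_mul_of_nonneg_left _ hCw.le
          exact mul_le_of_le_one_left hE.le (by linarith)
    refine h1.trans ?_
    calc 2 * z0 * ((1 + g z) ^ m * (rr g P z + d₀ * K * P.real (Set.Ioc (z - δ) z)))
        ≤ 2 * z0 * ((1 + g z) ^ m * (Cr * exp (-(Gfun g z)) + d₀ * K * (Cw * exp (-(Gfun g z))))) := by
          gcongr
      _ = (2 * z0 * (Cr + d₀ * K * Cw)) * ((1 + g z) ^ m * exp (-(Gfun g z))) := by ring
      _ ≤ _ := by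
          apply mul_le_mul_of_nonneg_right _ hp.le; linarith
  · have h1 := S.mom2 hm (le_refl Z)
    have h2 : rr g P Z ≤ d₀ + exp c₃ := (S.r_anti le_rfl hZp.le).trans S.r0_le
    have h3 : P.real (Set.Ioc (Z - δ) Z) ≤ 1 := measureReal_le_one
    have hgZ0 := S.G.nonneg hZp.le
    have hgZ : 1 + g Z ≤ exp (c₃ * Z) := S.G.growth0 hZp.le
    have h4 : (1 + g Z) ^ m ≤ exp (c₃ * Z) ^ m := rpow_le_rpow (by linarith) hgZ hm.le
    have h5 : ∫ w in Set.Ioi z, (1 + g w) ^ m ∂P = (∫ w in Set.Ioc z Z, (1 + g w) ^ m ∂P) +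
        ∫ w in Set.Ioi Z, (1 + g w) ^ m ∂P := by
      have hi := S.hmint hm.le hz
      rw [← setIntegral_union _ measurableSet_Ioi (hi.mono_set Set.Ioc_subset_Ioi_self)
        (hi.mono_set (Set.Ioi_subset_Ioi h.le)), Set.Ioc_union_Ioi_eq_Ioi h.le]
      rw [Set.disjoint_left]
      intro a ha hb
      exact absurd ha.2 (not_le.2 hb)
    have h6 : ∫ w in Set.Ioc z Z, (1 + g w) ^ m ∂P ≤ exp (c₃ * Z) ^ m := by
      have hi := S.hmint hm.le hz
      calc ∫ w in Set.Ioc z Z, (1 + g w) ^ m ∂P ≤ ∫ w in Set.Ioc z Z, exp (c₃ * Z) ^ m ∂P := by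
            apply setIntegral_mono_on (hi.mono_set Set.Ioc_subset_Ioi_self) (integrableOn_const (by simp))
              measurableSet_Ioc
            intro w hw
            have hg0 := S.G.nonneg (hz.trans hw.1.le)
            have hg1 := S.G.gc.mono hw.2
            exact rpow_le_rpow (by linarith) (by linarith) hm.le
        _ = P.real (Set.Ioc z Z) * exp (c₃ * Z) ^ m := by simp
        _ ≤ 1 * exp (c₃ * Z) ^ m := by
            gcongr
            exact measureReal_le_one
        _ = _ := one_mul _
    have h7 : ∫ w in Set.Ioi Z, (1 + g w) ^ m ∂P ≤
        2 * z0 * (exp (c₃ * Z) ^ m * ((d₀ + exp c₃) + d₀ * K * 1)) := by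
      refine h1.trans ?_
      have := S.r_nonneg hZp.le
      gcongr
    have h8 : Gfun g z ≤ Z * exp (c₃ * Z) := by
      have a := S.G.Gmono hz h.le
      have b := S.G.Gle hZp.le
      have c := mul_le_mul_of_nonneg_left (show g Z ≤ exp (c₃ * Z) by linarith) hZp.le
      linarith
    have h9 : 1 ≤ exp (Z * exp (c₃ * Z)) * exp (-(Gfun g z)) := by
      rw [← exp_add]
      exact one_le_exp (by linarith)
    have h10 : 1 ≤ exp (Z * exp (c₃ * Z)) * ((1 + g z) ^ m * exp (-(Gfun g z))) := by
      have := mul_le_mul hh h9 zero_le_one (by linarith)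
      linarith
    set D := exp (c₃ * Z) ^ m * (1 + 2 * z0 * (d₀ + exp c₃ + d₀ * K)) with hD
    have hDp : 0 < D := by positivity
    calc ∫ w in Set.Ioi z, (1 + g w) ^ m ∂P ≤ D := by rw [h5, hD]; linarith
      _ ≤ D * (exp (Z * exp (c₃ * Z)) * ((1 + g z) ^ m * exp (-(Gfun g z)))) :=
          le_mul_of_one_le_right hDp.le h10
      _ = B * ((1 + g z) ^ m * exp (-(Gfun g z))) := by rw [hB]; ring
      _ ≤ _ := by
          apply mul_le_mul_of_nonneg_right _ hp.le
          have : 0 ≤ 2 * z0 * (Cr + d₀ * K * Cw) := by positivity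
          linarith

end SD


/-! ### Part G : tail probability versus Mills ratio -/

lemma GC.gm_deriv_bd {g : ℝ → ℝ} {c₁ c₂ c₃ : ℝ} (H : GC g c₁ c₂ c₃) {Q x : ℝ} (hx : 0 ≤ x)
    (hQ : mills g x ≤ Q) :
    |-(deriv g x * mills g x + g x * (g x * mills g x - 1))| ≤ (c₃ * Q + 1) * (1 + g x) := by
  have h0 := H.nonneg hx
  have h1 := GC.mills_nonneg g x
  have h2 := H.mills_g hx
  have h3 := H.deriv_le' hx
  have h4 := mul_nonneg h0 h1
  have hc := H.c3pos
  rw [abs_neg]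
  calc |deriv g x * mills g x + g x * (g x * mills g x - 1)|
      ≤ |deriv g x * mills g x| + |g x * (g x * mills g x - 1)| := abs_add_le _ _
    _ ≤ c₃ * (1 + g x) * Q + g x * 1 := by
        rw [abs_mul, abs_mul, abs_of_nonneg h1, abs_of_nonneg h0]
        apply add_le_add
        · exact mul_le_mul h3 hQ h1 (by positivity)
        · apply mul_le_mul_of_nonneg_left _ h0
          rw [abs_le]; constructor <;> linarith
    _ ≤ _ := by linarith

namespace SD

variable {g κ : ℝ → ℝ} {c₁ c₂ c₃ d₀ d₁ τ δ δ₁ : ℝ} {P ν : Measure ℝ} {A z : ℝ}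

lemma mill_osc (S : SD g κ c₁ c₂ c₃ d₀ d₁ τ δ δ₁ P ν) {Q : ℝ} (hQ0 : 0 ≤ Q)
    (hQ : ∀ x, 0 ≤ x → mills g x ≤ Q) (hz : 0 ≤ z) (w t : ℝ) (ht : |t| ≤ δ) :
    |(Set.Ioi z).indicator (fun x => 1 - g x * mills g x) (w + t) -
      (Set.Ioi z).indicator (fun x => 1 - g x * mills g x) w| ≤
    (Set.Ioi z).indicator (fun x => (c₃ * Q + 1) * exp c₃ * δ * (1 + g x) ^ (1:ℝ)) w +
      (Set.Ioc (z - δ) (z + δ)).indicator (fun _ => (1:ℝ)) w := by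
  have hδ := S.hδ
  have hδ4 := S.hδ4
  have hc := S.G.c3pos
  have ht' := abs_le.1 ht
  have hb : ∀ x, z < x → |1 - g x * mills g x| ≤ 1 := by
    intro x hx
    have h0 : 0 ≤ x := by linarith
    have h1 := S.G.mills_g h0
    have h2 := mul_nonneg (S.G.nonneg h0) (GC.mills_nonneg g x)
    rw [abs_le]; constructor <;> linarith
  rcases le_or_gt w z with h1 | h1 <;> rcases le_or_gt (w + t) z with h2 | h2
  · have a1 : w ∉ Set.Ioi z := by simpa using h1
    have a2 : w + t ∉ Set.Ioi z := by simpa using h2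
    rw [Set.indicator_of_notMem a1, Set.indicator_of_notMem a2, Set.indicator_of_notMem a1]
    simp only [sub_zero, abs_zero, zero_add]
    exact Set.indicator_nonneg (fun _ _ => zero_le_one) _
  · have a1 : w ∉ Set.Ioi z := by simpa using h1
    have a2 : w + t ∈ Set.Ioi z := h2
    have a3 : w ∈ Set.Ioc (z - δ) (z + δ) := ⟨by linarith, by linarith⟩
    rw [Set.indicator_of_notMem a1, Set.indicator_of_mem a2, Set.indicator_of_notMem a1,
      Set.indicator_of_mem a3, sub_zero, zero_add]
    exact hb _ h2
  · have a1 : w ∈ Set.Ioi z := h1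
    have a2 : w + t ∉ Set.Ioi z := by simpa using h2
    have a3 : w ∈ Set.Ioc (z - δ) (z + δ) := ⟨by linarith, by linarith⟩
    have hg := S.G.nonneg (hz.trans h1.le)
    rw [Set.indicator_of_mem a1, Set.indicator_of_notMem a2, Set.indicator_of_mem a1,
      Set.indicator_of_mem a3, zero_sub, abs_neg]
    have : 0 ≤ (c₃ * Q + 1) * exp c₃ * δ * (1 + g w) ^ (1:ℝ) := by positivity
    linarith [hb _ h1]
  · have a1 : w ∈ Set.Ioi z := h1
    have a2 : w + t ∈ Set.Ioi z := h2
    have hw0 : 0 ≤ w := hz.trans h1.le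
    have hg := S.G.nonneg hw0
    rw [Set.indicator_of_mem a1, Set.indicator_of_mem a2, Set.indicator_of_mem a1, rpow_one]
    have hD : ∀ x ∈ Set.uIcc w (w + t), HasDerivAt (fun x => 1 - g x * mills g x)
        (-(deriv g x * mills g x + g x * (g x * mills g x - 1))) x := by
      intro x _
      exact ((S.G.gc.diff x).hasDerivAt.mul (S.G.mills_deriv x)).const_sub 1
    have hB : ∀ x ∈ Set.uIcc w (w + t),
        |-(deriv g x * mills g x + g x * (g x * mills g x - 1))| ≤
          (c₃ * Q + 1) * (exp c₃ * (1 + g w)) := by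
      intro x hx
      have hx0 : z ≤ x := (le_min h1.le h2.le).trans hx.1
      have hx1 : x ≤ w + δ := hx.2.trans (max_le (by linarith) (by linarith))
      refine (S.G.gm_deriv_bd (hz.trans hx0) (hQ x (hz.trans hx0))).trans ?_
      apply mul_le_mul_of_nonneg_left _ (by positivity)
      have e1 : 1 ≤ exp c₃ := one_le_exp hc.le
      rcases le_total x w with h | h
      · have := S.G.gc.mono h
        calc 1 + g x ≤ 1 * (1 + g w) := by linarith
          _ ≤ _ := mul_le_mul_of_nonneg_right e1 (by linarith)
      · refine (S.G.growth hw0 h).trans ?_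
        apply mul_le_mul_of_nonneg_right _ (by linarith)
        apply exp_le_exp.2
        calc c₃ * (x - w) ≤ c₃ * 1 := mul_le_mul_of_nonneg_left (by linarith) hc.le
          _ = c₃ := mul_one _
    have := mvt_abs hD hB
    have h3 : (c₃ * Q + 1) * (exp c₃ * (1 + g w)) * |w + t - w| ≤
        (c₃ * Q + 1) * (exp c₃ * (1 + g w)) * δ := by
      apply mul_le_mul_of_nonneg_left _ (by positivity)
      rwa [add_sub_cancel_left]
    have h4 : 0 ≤ (Set.Ioc (z - δ) (z + δ)).indicator (fun _ => (1:ℝ)) w :=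
      Set.indicator_nonneg (fun _ _ => zero_le_one) _
    linarith

lemma tail_id (S : SD g κ c₁ c₂ c₃ d₀ d₁ τ δ δ₁ P ν) {Q : ℝ}
    (hQ : ∀ x, 0 ≤ x → mills g x ≤ Q) (hz : 0 ≤ z) :
    ∫ x, (Set.Ioi z).indicator (fun x => 1 - g x * mills g x) x ∂ν -
      ∫ x, (Set.Ioi z).indicator (fun x => 1 - g x * mills g x) x ∂P =
    mills g z * rr g P z - P.real (Set.Ioi z) := by
  have := S.pP
  have hmc : Continuous (mills g) := continuous_iff_continuousAt.2 fun x => (S.G.mills_deriv x).continuousAt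
  have hcont : Continuous (fun x => 1 - g x * mills g x) :=
    continuous_const.sub (S.G.cont.mul hmc)
  have hb : ∀ x, z < x → |1 - g x * mills g x| ≤ 1 := by
    intro x hx
    have h0 : 0 ≤ x := by linarith
    have h1 := S.G.mills_g h0
    have h2 := mul_nonneg (S.G.nonneg h0) (GC.mills_nonneg g x)
    rw [abs_le]; constructor <;> linarith
  have Φm : Measurable ((Set.Ioi z).indicator (fun x => 1 - g x * mills g x)) :=
    hcont.measurable.indicator measurableSet_Ioi
  have Φb : ∀ x, |(Set.Ioi z).indicator (fun x => 1 - g x * mills g x) x| ≤ 1 := by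
    intro x
    by_cases hx : x ∈ Set.Ioi z
    · rw [Set.indicator_of_mem hx]; exact hb x hx
    · rw [Set.indicator_of_notMem hx]; simp
  have idd := S.idF (F := fun w => -mills g w - -mills g z) (α := z) Φm Φb
    (fun w hw => ind_zero hz hw)
    (fun w hw _ => ind_Ioi (F := fun x => -mills g x) hz hw (fun x _ => by
      have := (S.G.mills_deriv x).fun_neg
      exact this.congr_deriv (by ring)) (hcont.intervalIntegrable _ _))
  rw [idd, integral_indicator measurableSet_Ioi]
  have i1 : IntegrableOn (fun w => g w * mills g w) (Set.Ioi z) P := by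
    refine S.onint (S.gmeas.mul hmc.measurable) (M := 1) fun w hw _ => ?_
    have h0 : 0 ≤ w := by linarith
    have h1 := S.G.mills_g h0
    have h2 := mul_nonneg (S.G.nonneg h0) (GC.mills_nonneg g w)
    rw [abs_le]; constructor <;> linarith
  have i2 : IntegrableOn g (Set.Ioi z) P := S.gint.integrableOn
  have i3 : IntegrableOn (fun w => mills g z * g w) (Set.Ioi z) P := i2.const_mul _
  have i4 : IntegrableOn (fun _ : ℝ => (1:ℝ)) (Set.Ioi z) P := integrableOn_const (by simp)
  have e1 : ∫ w in Set.Ioi z, g w * (-mills g w - -mills g z) ∂P =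
      mills g z * rr g P z - ∫ w in Set.Ioi z, g w * mills g w ∂P := by
    unfold rr
    rw [← integral_const_mul, ← integral_sub i3 i1]
    congr 1
    funext w; ring
  have e2 : ∫ w in Set.Ioi z, (1 - g w * mills g w) ∂P = P.real (Set.Ioi z) -
      ∫ w in Set.Ioi z, g w * mills g w ∂P := by
    rw [integral_sub i4 i1]
    simp
  rw [e1, e2]; ring

lemma tail_mills (c₁ c₃ d₀ τ A : ℝ) (hc₁ : 0 < c₁) (hd₀ : 1 ≤ d₀) (hc₃ : 0 < c₃) (hτ : 0 < τ) :
    ∃ C, 0 < C ∧ ∀ (g κ : ℝ → ℝ) (c₂ d₁ δ δ₁ : ℝ) (P ν : Measure ℝ) (z : ℝ),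
    SD g κ c₁ c₂ c₃ d₀ d₁ τ δ δ₁ P ν → Reg g c₃ τ δ δ₁ A z →
    |P.real (Set.Ioi z) - mills g z * rr g P z| ≤
      C * (exp (-(Gfun g z)) * (δ * (1 + g z) + δ₁ * (1 + g z) ^ τ)) := by
  obtain ⟨Cw, hCw, Hw⟩ := window c₁ c₃ d₀ τ A hc₁ hd₀ hc₃
  obtain ⟨C1, hC1, H1⟩ := tail c₁ c₃ d₀ τ A 1 hc₁ hd₀ hc₃ one_pos
  obtain ⟨Ct, hCt, Ht⟩ := tail c₁ c₃ d₀ τ A τ hc₁ hd₀ hc₃ hτ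
  set Q := exp 1 / c₁ + exp (exp 1 / c₁ * exp (c₃ * (exp 1 / c₁))) / c₁ with hQdef
  have hQp : 0 < Q := by positivity
  set D := (c₃ * Q + 1) * exp c₃ with hDdef
  have hDp : 0 < D := by positivity
  refine ⟨2 * Ct + d₀ * (D * C1 + Cw), by positivity, ?_⟩
  intro g κ c₂ d₁ δ δ₁ P ν z S R
  have h1 := H1 g κ c₂ d₁ δ δ₁ P ν z S R
  have hw := Hw g κ c₂ d₁ δ δ₁ P ν z S R
  have ht := Ht g κ c₂ d₁ δ δ₁ P ν z S R
  have := S.pP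
  have hz := R.z0
  have hδ := S.hδ
  have hδ₁ := S.hδ₁
  have hgz := S.G.nonneg hz
  have hE := exp_pos (-(Gfun g z))
  have hQ : ∀ x, 0 ≤ x → mills g x ≤ Q := fun x hx => S.G.mills_le hx
  have hmc : Continuous (mills g) := continuous_iff_continuousAt.2 fun x => (S.G.mills_deriv x).continuousAt
  have hcont : Continuous (fun x => 1 - g x * mills g x) :=
    continuous_const.sub (S.G.cont.mul hmc)
  have Φm : Measurable ((Set.Ioi z).indicator (fun x => 1 - g x * mills g x)) :=
    hcont.measurable.indicator measurableSet_Ioi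
  have hb : ∀ x, z < x → 0 ≤ 1 - g x * mills g x ∧ 1 - g x * mills g x ≤ 1 := by
    intro x hx
    have h0 : 0 ≤ x := by linarith
    have h1 := S.G.mills_g h0
    have h2 := mul_nonneg (S.G.nonneg h0) (GC.mills_nonneg g x)
    constructor <;> linarith
  have i1 : Integrable ((Set.Ioi z).indicator (fun x => D * δ * (1 + g x) ^ (1:ℝ))) P :=
    (integrable_indicator_iff measurableSet_Ioi).2 ((S.hmint zero_le_one hz).const_mul _)
  have i2 : Integrable ((Set.Ioc (z - δ) (z + δ)).indicator (fun _ => (1:ℝ))) P :=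
    (integrable_const (1:ℝ)).indicator measurableSet_Ioc
  have i3 : Integrable ((Set.Ioi z).indicator (fun x => δ₁ * (2 * (1 + g x) ^ τ))) P :=
    (integrable_indicator_iff measurableSet_Ioi).2 (((S.hmint hτ.le hz).const_mul _).const_mul _)
  have key := S.comp (M := 1) (b := fun w => (Set.Ioi z).indicator (fun x => D * δ * (1 + g x) ^ (1:ℝ)) w +
      (Set.Ioc (z - δ) (z + δ)).indicator (fun _ => (1:ℝ)) w) Φm
    ((((S.hmeas 1).const_mul _).indicator measurableSet_Ioi).add
      (measurable_const.indicator measurableSet_Ioc))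
    (fun x => Set.indicator_nonneg (fun y hy => (hb y hy).1) _)
    (fun x => by
      by_cases hx : x ∈ Set.Ioi z
      · rw [Set.indicator_of_mem hx]; exact (hb x hx).2
      · rw [Set.indicator_of_notMem hx]; simp)
    (fun x => add_nonneg (Set.indicator_nonneg (fun y hy => by
        have := S.G.nonneg (hz.trans (le_of_lt hy))
        positivity) _) (Set.indicator_nonneg (fun _ _ => zero_le_one) _))
    (i1.add i2) (fun w t ht => S.mill_osc hQp.le hQ hz w t ht)
  rw [S.tail_id hQ hz, integral_add i1 i2, integral_indicator measurableSet_Ioi,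
    integral_indicator measurableSet_Ioc, integral_const_mul] at key
  have e1 : ∫ w in Set.Ioc (z - δ) (z + δ), (1:ℝ) ∂P = P.real (Set.Ioc (z - δ) (z + δ)) := by simp
  rw [e1] at key
  have e2 : ∫ w, (Set.Ioi z).indicator (fun x => 1 - g x * mills g x) w * |κ w - 1| ∂P ≤
      δ₁ * (2 * ∫ w in Set.Ioi z, (1 + g w) ^ τ ∂P) := by
    rw [← integral_const_mul, ← integral_const_mul, ← integral_indicator measurableSet_Ioi]
    apply integral_mono_of_nonneg _ i3
    · filter_upwards [S.κ1] with w hw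
      by_cases hx : w ∈ Set.Ioi z
      · rw [Set.indicator_of_mem hx, Set.indicator_of_mem hx]
        have hg := S.G.nonneg (hz.trans (le_of_lt hx))
        rw [abs_of_nonneg hg] at hw
        have b1 : g w ^ τ ≤ (1 + g w) ^ τ := rpow_le_rpow hg (by linarith) hτ.le
        have b2 : 1 ≤ (1 + g w) ^ τ := one_le_rpow (by linarith) hτ.le
        calc (1 - g w * mills g w) * |κ w - 1| ≤ 1 * (δ₁ * (g w ^ τ + 1)) :=
              mul_le_mul (hb w hx).2 hw (abs_nonneg _) zero_le_one
          _ ≤ _ := by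
              rw [one_mul]
              apply mul_le_mul_of_nonneg_left _ hδ₁.le
              linarith
      · rw [Set.indicator_of_notMem hx, Set.indicator_of_notMem hx]; simp
    · filter_upwards with w
      exact mul_nonneg (Set.indicator_nonneg (fun y hy => (hb y hy).1) _) (abs_nonneg _)
  rw [rpow_one] at h1
  rw [abs_sub_comm]
  refine key.trans ?_
  have f1 := mul_le_mul_of_nonneg_left ht (show 0 ≤ δ₁ * 2 by positivity)
  have f2 := mul_le_mul_of_nonneg_left h1 (show 0 ≤ d₀ * (D * δ) by positivity)
  have f3 := mul_le_mul_of_nonneg_left hw (show 0 ≤ d₀ by linarith)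
  have f4 : 0 ≤ exp (-(Gfun g z)) * (δ * (1 + g z)) * (2 * Ct) := by positivity
  have f5 : 0 ≤ exp (-(Gfun g z)) * (δ₁ * (1 + g z) ^ τ) * (d₀ * (D * C1 + Cw)) := by positivity
  have f6 : 0 ≤ d₀ * Cw * exp (-(Gfun g z)) * (δ * g z) := by positivity
  linarith

end SD


/-! ### Part H : reflection and the value at zero -/

namespace SD

variable {g κ : ℝ → ℝ} {c₁ c₂ c₃ d₀ d₁ τ δ δ₁ : ℝ} {P ν : Measure ℝ} {A z : ℝ}

lemma neg_map (P : Measure ℝ) (f : ℝ → ℝ) :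
    ∫ x, f x ∂(P.map (fun x => -x)) = ∫ x, f (-x) ∂P :=
  (MeasurableEquiv.neg ℝ).measurableEmbedding.integral_map f

lemma neg_ae {P : Measure ℝ} {p : ℝ → Prop} (h : ∀ᵐ x ∂P, p x) :
    ∀ᵐ x ∂(P.map (fun x => -x)), p (-x) := by
  refine ((MeasurableEquiv.neg ℝ).measurableEmbedding.ae_map_iff (μ := P)).2 ?_
  filter_upwards [h] with x hx
  simpa using hx

lemma srefl (S : SD g κ c₁ c₂ c₃ d₀ d₁ τ δ δ₁ P ν) :
    SD (fun x => -g (-x)) (fun x => κ (-x)) c₁ c₂ c₃ d₀ d₁ τ δ δ₁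
      (P.map (fun x => -x)) (ν.map (fun x => -x)) where
  G := S.G.refl
  hd₀ := S.hd₀
  hd₁ := S.hd₁
  hτ := S.hτ
  hδ := S.hδ
  hδ4 := S.hδ4
  hδ₁ := S.hδ₁
  pP := by
    have := S.pP
    exact Measure.isProbabilityMeasure_map measurable_neg.aemeasurable
  fν := by
    have := S.fν
    exact Measure.isFiniteMeasure_map _ _
  κm := S.κm.comp measurable_neg
  κ0 := neg_ae S.κ0
  κd := neg_ae S.κd
  κ1 := by
    filter_upwards [neg_ae S.κ1] with w hw
    simpa using hw
  gd := by
    filter_upwards [neg_ae S.gd] with w hw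
    simpa using hw
  mean := by
    rw [neg_map]
    simp only [neg_neg]
    rw [integral_neg, S.mean, neg_zero]
  gw := by
    refine ((MeasurableEquiv.neg ℝ).measurableEmbedding.integrable_map_iff (μ := P)).2 ?_
    refine S.gw.congr ?_
    filter_upwards with w
    simp
  id := by
    intro ψ hm hb
    obtain ⟨M, hM⟩ := hb
    rw [neg_map, neg_map, S.id (fun x => ψ (-x)) (hm.comp measurable_neg) ⟨M, fun x => hM _⟩]
    congr 1
    funext w
    rw [intervalIntegral.integral_comp_neg, neg_zero, intervalIntegral.integral_symm, neg_neg]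
    ring
  up := by
    intro ψ φ M hψ hφ hψb hφb h
    rw [neg_map, neg_map]
    simp only [neg_neg]
    refine S.up (fun x => ψ (-x)) (fun x => φ (-x)) M (hψ.comp measurable_neg)
      (hφ.comp measurable_neg) (fun x => hψb _) (fun x => hφb _) ?_
    intro w t ht
    have := h (-w) (-t) (by rwa [abs_neg])
    rwa [neg_add]

lemma rr_refl (S : SD g κ c₁ c₂ c₃ d₀ d₁ τ δ δ₁ P ν) :
    rr (fun x => -g (-x)) (P.map (fun x => -x)) 0 = rr g P 0 := by
  unfold rr
  rw [← integral_indicator measurableSet_Ioi, ← integral_indicator measurableSet_Ioi, neg_map]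
  have i1 : Integrable ((Set.Ioi 0).indicator g) P := S.gint.indicator measurableSet_Ioi
  have h : ∫ w, ((Set.Ioi 0).indicator g w - g w) ∂P = ∫ w, (Set.Ioi 0).indicator g w ∂P := by
    rw [integral_sub i1 S.gint, S.mean, sub_zero]
  rw [← h]
  congr 1
  funext w
  rcases lt_trichotomy w 0 with hw | hw | hw
  · have a1 : w ∉ Set.Ioi (0:ℝ) := by simpa using hw.le
    have a2 : -w ∈ Set.Ioi (0:ℝ) := by simpa using hw
    rw [Set.indicator_of_mem a2, Set.indicator_of_notMem a1]; simp
  · subst hw; simp [S.G.gc.zero]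
  · have a1 : w ∈ Set.Ioi (0:ℝ) := hw
    have a2 : -w ∉ Set.Ioi (0:ℝ) := by simpa using hw.le
    rw [Set.indicator_of_mem a1, Set.indicator_of_notMem a2]; simp

lemma mills_refl (H : GC g c₁ c₂ c₃) : mills g 0 + mills (fun x => -g (-x)) 0 = 1 / c₁ := by
  unfold mills
  simp only [GC.G0, exp_zero, one_mul, GC.Grefl]
  rw [← H.expTot, integral_comp_neg_Ioi (f := fun y => exp (-(Gfun g y))), neg_zero, add_comm]
  rw [← intervalIntegral.integral_Iic_add_Ioi H.expInt.integrableOn H.expInt.integrableOn]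

lemma mass_refl (P : Measure ℝ) [IsProbabilityMeasure P] :
    P.real (Set.Ioi 0) + (P.map (fun x => -x)).real (Set.Ioi 0) + P.real {0} = 1 := by
  have h1 : (P.map (fun x => -x)).real (Set.Ioi 0) = P.real (Set.Iio 0) := by
    rw [map_measureReal_apply measurable_neg measurableSet_Ioi]
    congr 1
    ext x; simp
  have h2 : P.real (Set.Iic 0) = P.real (Set.Iio 0) + P.real {0} := by
    rw [← measureReal_union (by simp) (measurableSet_singleton _)]
    congr 1
    ext x; simp [le_iff_lt_or_eq]
  have h3 : P.real (Set.Iic 0) + P.real (Set.Ioi 0) = 1 := by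
    rw [← Set.compl_Iic, probReal_compl_eq_one_sub measurableSet_Iic]; ring
  rw [h1]; linarith

lemma r_zero (c₁ c₃ d₀ τ A : ℝ) (hc₁ : 0 < c₁) (hd₀ : 1 ≤ d₀) (hc₃ : 0 < c₃) (hτ : 0 < τ) :
    ∃ C, 0 < C ∧ ∀ (g κ : ℝ → ℝ) (c₂ d₁ δ δ₁ : ℝ) (P ν : Measure ℝ) (z : ℝ),
    SD g κ c₁ c₂ c₃ d₀ d₁ τ δ δ₁ P ν → Reg g c₃ τ δ δ₁ A z →
    |rr g P 0 - c₁| ≤ C * (δ + δ₁) := by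
  obtain ⟨Cw, hCw, Hw⟩ := window c₁ c₃ d₀ τ A hc₁ hd₀ hc₃
  obtain ⟨Cm, hCm, Hm⟩ := tail_mills c₁ c₃ d₀ τ A hc₁ hd₀ hc₃ hτ
  refine ⟨c₁ * (2 * Cm + Cw), by positivity, ?_⟩
  intro g κ c₂ d₁ δ δ₁ P ν z S R
  have := S.pP
  have hδ := S.hδ
  have hδ₁ := S.hδ₁
  have R0 := S.reg_mono R le_rfl R.z0
  have R0' : Reg (fun x => -g (-x)) c₃ τ δ δ₁ A 0 := by
    refine ⟨le_rfl, ?_, ?_, ?_⟩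
    · have := R0.a1; simpa [S.G.gc.zero] using this
    · have := R0.a2; simpa [S.G.gc.zero] using this
    · have := R0.sm; simpa [S.G.gc.zero] using this
  have h1 := Hm _ _ _ _ _ _ _ _ _ S R0
  have h2 := Hm _ _ _ _ _ _ _ _ _ S.srefl R0'
  have h3 := Hw _ _ _ _ _ _ _ _ _ S R0
  rw [S.rr_refl] at h2
  simp only [GC.G0, S.G.gc.zero, neg_zero, exp_zero, add_zero, one_rpow, mul_one, one_mul,
    zero_sub, zero_add] at h1 h2 h3
  have h4 := mass_refl P
  have h5 : P.real {0} ≤ P.real (Set.Ioc (-δ) δ) :=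
    measureReal_mono (by intro x hx; rw [Set.mem_singleton_iff] at hx; subst hx; exact ⟨by linarith, hδ.le⟩)
  have h6 : 0 ≤ P.real {(0:ℝ)} := measureReal_nonneg
  have h7 := mills_refl S.G
  have h8 := abs_le.1 h1
  have h9 := abs_le.1 h2
  have e : rr g P 0 - c₁ = c₁ * ((mills g 0 + mills (fun x => -g (-x)) 0) * rr g P 0 - 1) := by
    rw [h7]; field_simp
  rw [e, abs_mul, abs_of_pos hc₁, mul_assoc]
  apply mul_le_mul_of_nonneg_left _ hc₁.le
  have f := mul_pos hCw hδ₁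
  rw [abs_le]
  constructor <;> linarith

end SD


/-! ### Part I : the abstract theorem -/

lemma triv_case (c₁ c₃ ε s : ℝ) (hc₁ : 0 < c₁) (hε : 0 < ε) (hs : 1 ≤ s) :
    ∃ C, 0 < C ∧ ∀ (g : ℝ → ℝ) (c₂ η z p : ℝ), GC g c₁ c₂ c₃ → 0 ≤ z → ε ≤ η →
      η * (z * g z ^ s) ≤ 1 → 0 ≤ p → p ≤ 1 →
      |p / (∫ y in Set.Ioi z, pfun g c₁ y) - 1| ≤ C * η := by
  set B := (1 + c₁) * (1 + exp 1 / c₁) ^ s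
        + (1 + exp 1 / c₁) * (exp (c₃ * (exp 1 / c₁))) ^ s with hB
  have hBp : 0 < B := by positivity
  set L := B * (1 + 1 / ε) with hL
  have hLp : 0 < L := by positivity
  set F := c₁ * exp (-(L * L)) * (exp (-exp c₃) / L) with hF
  have hFp : 0 < F := by positivity
  refine ⟨(1 / F + 1) / ε, by positivity, ?_⟩
  intro g c₂ η z p H hz hη hyp hp0 hp1
  have hg := H.nonneg hz
  have h1 : z * g z ^ s ≤ 1 / ε := by
    rw [le_div_iff₀ hε]
    have : 0 ≤ z * g z ^ s := by positivity
    have := mul_le_mul_of_nonneg_right hη this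
    linarith
  have h2 : (1 + z) * (1 + g z) ^ s ≤ L := (H.compare (by linarith) hz).trans
    (mul_le_mul_of_nonneg_left (by linarith) hBp.le)
  have h3 : 1 + g z ≤ (1 + g z) ^ s := by
    have := rpow_le_rpow_of_exponent_le (show 1 ≤ 1 + g z by linarith) hs
    rwa [rpow_one] at this
  have h4 : 1 + z ≤ L := by
    have : (1 + z) * 1 ≤ (1 + z) * (1 + g z) ^ s :=
      mul_le_mul_of_nonneg_left (by linarith) (by linarith)
    linarith
  have h5 : 1 + g z ≤ L := by
    have : 1 * (1 + g z) ^ s ≤ (1 + z) * (1 + g z) ^ s :=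
      mul_le_mul_of_nonneg_right (by linarith) (by positivity)
    linarith
  have h6 : Gfun g z ≤ L * L := (H.Gle hz).trans (mul_le_mul (by linarith) (by linarith) hg hLp.le)
  have h7 : exp (-exp c₃) / L ≤ mills g z := by
    rw [div_le_iff₀ hLp]
    have a := H.mills_lower hz
    have b := mul_le_mul_of_nonneg_right h5 (GC.mills_nonneg g z)
    linarith
  have h8 : F ≤ ∫ y in Set.Ioi z, pfun g c₁ y := by
    rw [GC.mills_eq, hF]
    apply mul_le_mul _ h7 (by positivity) (by positivity)
    apply mul_le_mul_of_nonneg_left _ hc₁.le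
    apply exp_le_exp.2; linarith
  set I := ∫ y in Set.Ioi z, pfun g c₁ y with hI
  have hIp : 0 < I := hFp.trans_le h8
  have h9 : p / I ≤ 1 / F := by
    apply div_le_div₀ zero_le_one hp1 hFp h8
  have h10 : 0 ≤ p / I := by positivity
  have h11 : 1 / F + 1 ≤ (1 / F + 1) / ε * η := by
    rw [div_mul_eq_mul_div, le_div_iff₀ hε]
    exact mul_le_mul_of_nonneg_left hη (by positivity)
  have h12 : 0 < 1 / F := by positivity
  rw [abs_le]; constructor <;> linarith

namespace SD

lemma ratio (c₁ c₃ d₀ τ A : ℝ) (hc₁ : 0 < c₁) (hd₀ : 1 ≤ d₀) (hc₃ : 0 < c₃) (hτ : 0 < τ) :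
    ∃ C, 0 < C ∧ ∀ (g κ : ℝ → ℝ) (c₂ d₁ δ δ₁ : ℝ) (P ν : Measure ℝ) (z : ℝ),
    SD g κ c₁ c₂ c₃ d₀ d₁ τ δ δ₁ P ν → Reg g c₃ τ δ δ₁ A z →
    |P.real (Set.Ioi z) / (∫ y in Set.Ioi z, pfun g c₁ y) - 1| ≤
      C * (δ * ((1 + z) * (1 + g z) ^ 2) + δ₁ * ((1 + z) * (1 + g z) ^ (τ + 1))) := by
  obtain ⟨Cm, hCm, Hm⟩ := tail_mills c₁ c₃ d₀ τ A hc₁ hd₀ hc₃ hτ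
  obtain ⟨Ce, hCe, He⟩ := r_eq c₁ c₃ d₀ τ A hc₁ hd₀ hc₃
  obtain ⟨C0, hC0, H0⟩ := r_zero c₁ c₃ d₀ τ A hc₁ hd₀ hc₃ hτ
  refine ⟨(Cm * exp (exp c₃) + Ce + C0) / c₁, by positivity, ?_⟩
  intro g κ c₂ d₁ δ δ₁ P ν z S R
  have hm := Hm g κ c₂ d₁ δ δ₁ P ν z S R
  have he := He g κ c₂ d₁ δ δ₁ P ν z S R
  have h0 := H0 g κ c₂ d₁ δ δ₁ P ν z S R
  have hz := R.z0
  have hδ := S.hδ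
  have hδ₁ := S.hδ₁
  have hg := S.G.nonneg hz
  rw [GC.mills_eq]
  have hq : 0 < mills g z := by
    have := S.G.mills_lower hz
    have h2 := exp_pos (-exp c₃)
    have h3 := GC.mills_nonneg g z
    rcases h3.eq_or_lt with h | h
    · rw [← h] at this; linarith
    · exact h
  have hq1 : 1 ≤ exp (exp c₃) * ((1 + g z) * mills g z) := by
    have := mul_le_mul_of_nonneg_left (S.G.mills_lower hz) (exp_pos (exp c₃)).le
    rw [← exp_add] at this
    simpa using this
  set q := mills g z with hqd
  set E := exp (-(Gfun g z)) with hE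
  have hEp : 0 < E := exp_pos _
  set h := 1 + g z with hh
  have hh1 : 1 ≤ h := by rw [hh]; linarith
  set X := δ * ((1 + z) * h ^ 2) + δ₁ * ((1 + z) * h ^ (τ + 1)) with hX
  have hhτ : 1 ≤ h ^ (τ + 1) := one_le_rpow hh1 (by linarith)
  have hh2 : 1 ≤ h ^ 2 := one_le_pow₀ hh1
  have x1 : δ * (1 * 1) ≤ δ * ((1 + z) * h ^ 2) :=
    mul_le_mul_of_nonneg_left (mul_le_mul (by linarith) hh2 zero_le_one (by linarith)) hδ.le
  have x2 : δ₁ * (1 * 1) ≤ δ₁ * ((1 + z) * h ^ (τ + 1)) :=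
    mul_le_mul_of_nonneg_left (mul_le_mul (by linarith) hhτ zero_le_one (by linarith)) hδ₁.le
  have x3 : δ + δ₁ ≤ X := by rw [hX]; linarith
  have x4 : h * (δ * h + δ₁ * h ^ τ) ≤ X := by
    have e : h ^ (τ + 1) = h ^ τ * h := by rw [rpow_add_one (by linarith)]
    have : h * (δ * h + δ₁ * h ^ τ) = δ * (1 * h ^ 2) + δ₁ * (1 * h ^ (τ + 1)) := by
      rw [e]; ring
    rw [this, hX]
    apply add_le_add
    · exact mul_le_mul_of_nonneg_left (mul_le_mul_of_nonneg_right (by linarith) (by linarith)) hδ.le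
    · exact mul_le_mul_of_nonneg_left (mul_le_mul_of_nonneg_right (by linarith) (by linarith)) hδ₁.le
  have hXp : 0 < X := by linarith
  -- first part
  have y1 : |P.real (Set.Ioi z) - q * rr g P z| ≤ Cm * exp (exp c₃) * X * (E * q) := by
    refine hm.trans ?_
    have hY : 0 ≤ Cm * (E * (δ * h + δ₁ * h ^ τ)) := by positivity
    calc Cm * (E * (δ * h + δ₁ * h ^ τ)) ≤
          Cm * (E * (δ * h + δ₁ * h ^ τ)) * (exp (exp c₃) * (h * q)) := le_mul_of_one_le_right hY hq1
      _ = Cm * exp (exp c₃) * (E * q) * (h * (δ * h + δ₁ * h ^ τ)) := by ring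
      _ ≤ Cm * exp (exp c₃) * (E * q) * X := mul_le_mul_of_nonneg_left x4 (by positivity)
      _ = _ := by ring
  have y2 : |exp (Gfun g z) * rr g P z - c₁| ≤ (Ce + C0) * X := by
    have := abs_sub_le (exp (Gfun g z) * rr g P z) (rr g P 0) c₁
    have b := mul_le_mul_of_nonneg_left x3 hC0.le
    linarith
  have hEE : E * exp (Gfun g z) = 1 := by rw [hE, ← exp_add]; simp
  have y3 : |q * rr g P z - c₁ * E * q| ≤ (Ce + C0) * X * (E * q) := by
    have : q * rr g P z - c₁ * E * q = (E * q) * (exp (Gfun g z) * rr g P z - c₁) := by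
      linear_combination (- q * rr g P z) * hEE
    rw [this, abs_mul, abs_of_pos (by positivity), mul_comm]
    exact mul_le_mul_of_nonneg_right y2 (by positivity)
  have y4 : |P.real (Set.Ioi z) - c₁ * E * q| ≤ (Cm * exp (exp c₃) + Ce + C0) * X * (E * q) := by
    have := abs_sub_le (P.real (Set.Ioi z)) (q * rr g P z) (c₁ * E * q)
    linarith
  have hFp : 0 < c₁ * E * q := by positivity
  have e : P.real (Set.Ioi z) / (c₁ * E * q) - 1 =
      (P.real (Set.Ioi z) - c₁ * E * q) / (c₁ * E * q) := by field_simp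
  rw [e, abs_div, abs_of_pos hFp, div_le_iff₀ hFp]
  refine y4.trans (le_of_eq ?_)
  field_simp

end SD

lemma main_abs (c₁ c₃ d₀ τ : ℝ) (hc₁ : 0 < c₁) (hd₀ : 1 ≤ d₀) (hc₃ : 0 < c₃) (hτ : 0 < τ) :
    ∃ C ε, 0 < C ∧ 0 < ε ∧ ε ≤ 1 / 4 ∧ ε * (4 * exp (2 * c₃) ^ τ) ≤ 1 ∧
    ∀ (g κ : ℝ → ℝ) (c₂ d₁ δ δ₁ : ℝ) (P ν : Measure ℝ) (z : ℝ),
    SD g κ c₁ c₂ c₃ d₀ d₁ τ δ δ₁ P ν → δ ≤ ε → δ₁ ≤ ε → 0 ≤ z →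
    δ * z * g z ^ 2 + δ₁ * z * g z ^ (τ + 1) ≤ 1 →
    |P.real (Set.Ioi z) / (∫ y in Set.Ioi z, pfun g c₁ y) - 1| ≤
      C * (δ * (1 + z * g z ^ 2) + δ₁ * (1 + z * g z ^ (τ + 1))) := by
  set B2 := (1 + c₁) * (1 + exp 1 / c₁) ^ (2:ℝ)
        + (1 + exp 1 / c₁) * (exp (c₃ * (exp 1 / c₁))) ^ (2:ℝ) with hB2
  have hB2p : 0 < B2 := by positivity
  set Bt := (1 + c₁) * (1 + exp 1 / c₁) ^ (τ + 1)
        + (1 + exp 1 / c₁) * (exp (c₃ * (exp 1 / c₁))) ^ (τ + 1) with hBt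
  have hBtp : 0 < Bt := by positivity
  set A := 2 * (B2 + Bt) with hA
  have hAp : 0 < A := by positivity
  obtain ⟨C, hC, H⟩ := SD.ratio c₁ c₃ d₀ τ A hc₁ hd₀ hc₃ hτ
  set K := 4 * exp (2 * c₃) ^ τ with hK
  have hKp : 0 < K := by positivity
  set ε := min (1 / 4) (min (1 / K) (1 / (K * (K * A) ^ τ))) with hε
  have hεp : 0 < ε := by
    rw [hε]; refine lt_min (by norm_num) (lt_min (by positivity) (by positivity))
  have e1 : ε ≤ 1 / 4 := min_le_left _ _
  have e2 : ε * K ≤ 1 := by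
    rw [← le_div_iff₀ hKp]
    exact (min_le_right _ _).trans (min_le_left _ _)
  have e3 : ε * (K * (K * A) ^ τ) ≤ 1 := by
    rw [← le_div_iff₀ (by positivity)]
    exact (min_le_right _ _).trans (min_le_right _ _)
  refine ⟨C * (B2 + Bt), ε, by positivity, hεp, e1, e2, ?_⟩
  intro g κ c₂ d₁ δ δ₁ P ν z S hδε hδ₁ε hz hyp
  have hδ := S.hδ
  have hδ₁ := S.hδ₁
  have hg := S.G.nonneg hz
  have k2 := S.G.compare (s := 2) (by norm_num) hz
  have kt := S.G.compare (s := τ + 1) (by linarith) hz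
  rw [← hBt] at kt
  rw [← hB2] at k2
  simp only [rpow_two] at k2
  have p1 : 0 ≤ z * g z ^ 2 := by positivity
  have p2 : 0 ≤ z * g z ^ (τ + 1) := by positivity
  have q1 : 0 ≤ δ * (z * g z ^ 2) := by positivity
  have q2 : 0 ≤ δ₁ * (z * g z ^ (τ + 1)) := by positivity
  have hyp' : δ * (z * g z ^ 2) + δ₁ * (z * g z ^ (τ + 1)) ≤ 1 := by
    rw [← mul_assoc, ← mul_assoc]; exact hyp
  have l2 := mul_le_mul_of_nonneg_left k2 hδ.le
  have lt := mul_le_mul_of_nonneg_left kt hδ₁.le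
  have r2 : B2 * (δ + δ * (z * g z ^ 2)) ≤ B2 * 2 := mul_le_mul_of_nonneg_left (by linarith) hB2p.le
  have rt : Bt * (δ₁ + δ₁ * (z * g z ^ (τ + 1))) ≤ Bt * 2 :=
    mul_le_mul_of_nonneg_left (by linarith) hBtp.le
  have a1 : δ * ((1 + z) * (1 + g z) ^ 2) ≤ A := by rw [hA]; linarith
  have a2 : δ₁ * ((1 + z) * (1 + g z) ^ (τ + 1)) ≤ A := by rw [hA]; linarith
  have sm : δ₁ * (K * (1 + g z) ^ τ) ≤ 1 := by
    rcases le_total (1 + g z) (K * A) with h | h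
    · have : (1 + g z) ^ τ ≤ (K * A) ^ τ := rpow_le_rpow (by linarith) h hτ.le
      calc δ₁ * (K * (1 + g z) ^ τ) ≤ ε * (K * (K * A) ^ τ) :=
            mul_le_mul hδ₁ε (mul_le_mul_of_nonneg_left this hKp.le) (by positivity) hεp.le
        _ ≤ 1 := e3
    · have e : (1 + g z) ^ (τ + 1) = (1 + g z) ^ τ * (1 + g z) := rpow_add_one (by linarith) _
      rw [e] at a2
      have hx : 0 ≤ δ₁ * ((1 + g z) ^ τ * (1 + g z)) * z := by positivity
      have a3 : δ₁ * ((1 + g z) ^ τ * (1 + g z)) ≤ A := by linarith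
      have a4 := mul_le_mul_of_nonneg_left a3 hKp.le
      have hp : 0 < 1 + g z := by linarith
      have a5 : δ₁ * (K * (1 + g z) ^ τ) * (1 + g z) ≤ 1 * (1 + g z) := by linarith
      exact le_of_mul_le_mul_right a5 hp
  refine (H g κ c₂ d₁ δ δ₁ P ν z S ⟨hz, a1, a2, sm⟩).trans ?_
  rw [mul_assoc]
  apply mul_le_mul_of_nonneg_left _ hC.le
  have m1 : 0 ≤ Bt * (δ * (1 + z * g z ^ 2)) := by positivity
  have m2 : 0 ≤ B2 * (δ₁ * (1 + z * g z ^ (τ + 1))) := by positivity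
  linarith


/-! ### Part J : from the coupling to the abstract set-up -/

lemma khat_eq {Ω : Type} (W W' Gv : Ω → ℝ) {δ : ℝ} (hδ : 0 < δ) (ω : Ω) (h : |W' ω - W ω| ≤ δ) :
    KhatOneSC W W' Gv δ ω = Gv ω * (W' ω - W ω) := by
  unfold KhatOneSC
  have h' := abs_le.1 h
  set D := W' ω - W ω with hD
  rw [intervalIntegral.integral_const_mul, intervalIntegral.integral_of_le (by linarith),
    ← integral_Icc_eq_integral_Ioc]
  congr 1
  rcases le_or_gt 0 D with h0 | h0
  · have e : (fun t : ℝ => (if 0 ≤ t ∧ t ≤ D then (1:ℝ) else 0) - (if D ≤ t ∧ t < 0 then (1:ℝ) else 0)) =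
        (Set.Icc 0 D).indicator (fun _ => (1:ℝ)) := by
      funext t
      have n : ¬ (D ≤ t ∧ t < 0) := by rintro ⟨a, b⟩; linarith
      rw [if_neg n, sub_zero]
      by_cases ht : 0 ≤ t ∧ t ≤ D
      · rw [if_pos ht, Set.indicator_of_mem (show t ∈ Set.Icc 0 D from ht)]
      · rw [if_neg ht, Set.indicator_of_notMem (show t ∉ Set.Icc 0 D from ht)]
    rw [e, setIntegral_indicator measurableSet_Icc,
      Set.inter_eq_self_of_subset_right (Set.Icc_subset_Icc (by linarith) h'.2)]
    simp [h0]
  · have e : (fun t : ℝ => (if 0 ≤ t ∧ t ≤ D then (1:ℝ) else 0) - (if D ≤ t ∧ t < 0 then (1:ℝ) else 0)) =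
        (Set.Ico D 0).indicator (fun _ => (-1:ℝ)) := by
      funext t
      have n : ¬ (0 ≤ t ∧ t ≤ D) := by rintro ⟨a, b⟩; linarith
      rw [if_neg n, zero_sub]
      by_cases ht : D ≤ t ∧ t < 0
      · rw [if_pos ht, Set.indicator_of_mem (show t ∈ Set.Ico D 0 from ht)]
      · rw [if_neg ht, Set.indicator_of_notMem (show t ∉ Set.Ico D 0 from ht), neg_zero]
    have hs : Set.Ico D 0 ⊆ Set.Icc (-δ) δ := fun t ht => ⟨by linarith [ht.1], by linarith [ht.2]⟩
    rw [e, setIntegral_indicator measurableSet_Ico, Set.inter_eq_self_of_subset_right hs]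
    simp [h0.le]

lemma push {Ω : Type} [MeasurableSpace Ω] (μ : Measure Ω) [SFinite μ] {k U V : Ω → ℝ}
    (hk : Integrable k μ) (hkm : Measurable k) (hk0 : ∀ᵐ ω ∂μ, 0 ≤ k ω) (hU : Measurable U) (hV : Measurable V) :
    ∃ ν : Measure ℝ, IsFiniteMeasure ν ∧ ∀ ψ : ℝ → ℝ, Measurable ψ → (∃ M, ∀ x, |ψ x| ≤ M) →
      ∫ x, ψ x ∂ν = ∫ ω, k ω * (∫ s in (0:ℝ)..1, ψ (U ω + V ω * s)) ∂μ := by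
  have hf : IsFiniteMeasure (μ.withDensity (fun ω => ENNReal.ofReal (k ω))) :=
    isFiniteMeasure_withDensity_ofReal hk.2
  have hm : Measurable (fun p : Ω × ℝ => U p.1 + V p.1 * p.2) := by fun_prop
  refine ⟨((μ.withDensity (fun ω => ENNReal.ofReal (k ω))).prod
    (volume.restrict (Set.Ioc (0:ℝ) 1))).map (fun p => U p.1 + V p.1 * p.2),
    Measure.isFiniteMeasure_map _ _, ?_⟩
  intro ψ hψ hb
  obtain ⟨M, hM⟩ := hb
  have hi : Integrable (fun p : Ω × ℝ => ψ (U p.1 + V p.1 * p.2))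
      ((μ.withDensity (fun ω => ENNReal.ofReal (k ω))).prod (volume.restrict (Set.Ioc (0:ℝ) 1))) :=
    Integrable.of_bound (hψ.comp hm).aestronglyMeasurable M
      (Filter.Eventually.of_forall (fun p => by simpa using hM _))
  rw [integral_map hm.aemeasurable hψ.aestronglyMeasurable, integral_prod _ hi,
    integral_withDensity_eq_integral_toReal_smul hkm.ennreal_ofReal
      (Filter.Eventually.of_forall fun _ => ENNReal.ofReal_lt_top)]
  apply integral_congr_ae
  filter_upwards [hk0] with ω h0
  rw [ENNReal.toReal_ofReal h0, smul_eq_mul, intervalIntegral.integral_of_le zero_le_one]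

section coupling

variable {Ω : Type} [MeasurableSpace Ω] {μ : Measure Ω} [IsProbabilityMeasure μ]
  {W W' Gv : Ω → ℝ} {g : ℝ → ℝ} {δ : ℝ}

lemma stein_lip (hW : Measurable W) (hW' : Measurable W') (hG : Measurable Gv)
    (hS : SteinCoupling μ W W' Gv g) (hK : Integrable (fun ω => Gv ω * (W' ω - W ω)) μ)
    {f : ℝ → ℝ} {M : ℝ} (hf : Differentiable ℝ f) (hM : ∀ x y, |f y - f x| ≤ M * |y - x|)
    (hi : Integrable (fun ω => f (W ω) * g (W ω)) μ) :
    Integrable (fun ω => Gv ω * f (W' ω) - Gv ω * f (W ω)) μ ∧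
    ∫ ω, (Gv ω * f (W' ω) - Gv ω * f (W ω)) ∂μ = ∫ ω, f (W ω) * g (W ω) ∂μ := by
  have h1 : Integrable (fun ω => Gv ω * f (W' ω) - Gv ω * f (W ω)) μ := by
    have hfm := hf.continuous.measurable
    refine (hK.const_mul M).mono ?_ ?_
    · exact ((hG.mul (hfm.comp hW')).sub (hG.mul (hfm.comp hW))).aestronglyMeasurable
    · filter_upwards with ω
      have := hM (W ω) (W' ω)
      have h0 : 0 ≤ M * |W' ω - W ω| := (abs_nonneg _).trans this
      rw [← mul_sub, Real.norm_eq_abs, Real.norm_eq_abs, abs_mul, abs_mul, abs_mul]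
      calc |Gv ω| * |f (W' ω) - f (W ω)| ≤ |Gv ω| * (M * |W' ω - W ω|) :=
            mul_le_mul_of_nonneg_left this (abs_nonneg _)
        _ = M * (|Gv ω| * |W' ω - W ω|) := by ring
        _ ≤ _ := mul_le_mul_of_nonneg_right (le_abs_self M) (by positivity)
  exact ⟨h1, hS f hf h1 hi⟩

lemma trunc_lip {ε : ℝ} (hε : 0 < ε) (x y : ℝ) :
    |y / (1 + ε * y ^ 2) - x / (1 + ε * x ^ 2)| ≤ 1 * |y - x| := by
  refine mvt_abs (f := fun x : ℝ => x / (1 + ε * x ^ 2)) (x := x) (y := y) (f' := fun x => (1 * (1 + ε * x ^ 2) - x * (ε * (2 * x))) / (1 + ε * x ^ 2) ^ 2) ?_ ?_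
  · intro t _
    have h0 : 1 + ε * t ^ 2 ≠ 0 := by positivity
    have h1 : HasDerivAt (fun x : ℝ => 1 + ε * x ^ 2) (ε * (2 * t)) t := by
      have := ((hasDerivAt_pow 2 t).const_mul ε).const_add 1
      simpa using this
    exact (hasDerivAt_id t).div h1 h0
  · intro t _
    have h0 : 0 < 1 + ε * t ^ 2 := by positivity
    rw [abs_div, abs_of_pos (show 0 < (1 + ε * t ^ 2) ^ 2 by positivity), div_le_one (by positivity)]
    have h2 : 0 ≤ ε * t ^ 2 := by positivity
    have h3 : 0 ≤ (ε * t ^ 2) ^ 2 := by positivity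
    rw [abs_le]
    constructor <;> nlinarith

lemma trunc_diff {ε : ℝ} (hε : 0 < ε) : Differentiable ℝ (fun x : ℝ => x / (1 + ε * x ^ 2)) := by
  have h0 : ∀ t : ℝ, 1 + ε * t ^ 2 ≠ 0 := fun t => by positivity
  fun_prop (disch := exact h0 _)

lemma trunc_bd {ε : ℝ} (hε : 0 < ε) (x : ℝ) : |x / (1 + ε * x ^ 2)| ≤ 1 + 1 / ε := by
  have h0 : 0 < 1 + ε * x ^ 2 := by positivity
  rw [abs_div, abs_of_pos h0, div_le_iff₀ h0]
  have h1 : (1 + 1 / ε) * (1 + ε * x ^ 2) = 1 + 1 / ε + ε * x ^ 2 + x ^ 2 := by field_simp; ring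
  rw [h1]
  have h2 : 0 < 1 / ε := by positivity
  have h3 : 0 ≤ ε * x ^ 2 := by positivity
  have h4 : |x| ≤ 1 + x ^ 2 := by
    rw [abs_le]; constructor <;> nlinarith [sq_nonneg (x - 1), sq_nonneg (x + 1)]
  linarith

lemma gw_int (hW : Measurable W) (hW' : Measurable W') (hG : Measurable Gv)
    (hS : SteinCoupling μ W W' Gv g) (hK : Integrable (fun ω => Gv ω * (W' ω - W ω)) μ)
    (hg : Measurable g) (hs : ∀ y, 0 ≤ y * g y) {B : ℝ} (hB : ∀ᵐ ω ∂μ, |g (W ω)| ≤ B) :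
    Integrable (fun ω => g (W ω) * W ω) μ := by
  set k := ∫ ω, |Gv ω * (W' ω - W ω)| ∂μ with hk
  set ε : ℕ → ℝ := fun n => 1 / ((n:ℝ) + 1) with hε
  have hεp : ∀ n, 0 < ε n := fun n => by rw [hε]; positivity
  set F : ℕ → Ω → ℝ := fun n ω => (W ω / (1 + ε n * W ω ^ 2)) * g (W ω) with hF
  have hFm : ∀ n, Measurable (F n) := fun n =>
    ((trunc_diff (hεp n)).continuous.measurable.comp hW).mul (hg.comp hW)
  have hFi : ∀ n, Integrable (F n) μ := fun n => by
    refine Integrable.of_bound (hFm n).aestronglyMeasurable ((1 + 1 / ε n) * B) ?_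
    filter_upwards [hB] with ω hω
    rw [hF, norm_mul]
    have := hεp n
    exact mul_le_mul (trunc_bd (hεp n) _) hω (norm_nonneg _) (by positivity)
  have hF0 : ∀ n ω, 0 ≤ F n ω := fun n ω => by
    have h1 := hεp n
    rw [hF]
    show 0 ≤ (W ω / (1 + ε n * W ω ^ 2)) * g (W ω)
    rw [div_mul_eq_mul_div]
    exact div_nonneg (hs _) (by positivity)
  have hFk : ∀ n, ∫ ω, F n ω ∂μ ≤ k := fun n => by
    obtain ⟨i1, e⟩ := stein_lip hW hW' hG hS hK (trunc_diff (hεp n)) (trunc_lip (hεp n)) (hFi n)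
    have : ∫ ω, F n ω ∂μ = ∫ ω, (W ω / (1 + ε n * W ω ^ 2)) * g (W ω) ∂μ := rfl
    rw [this, ← e, hk]
    apply integral_mono i1 hK.abs
    intro ω
    have := trunc_lip (hεp n) (W ω) (W' ω)
    show Gv ω * (W' ω / (1 + ε n * W' ω ^ 2)) - Gv ω * (W ω / (1 + ε n * W ω ^ 2)) ≤
      |Gv ω * (W' ω - W ω)|
    rw [← mul_sub, abs_mul]
    refine (le_abs_self _).trans ?_
    rw [abs_mul]
    exact mul_le_mul_of_nonneg_left (by linarith) (abs_nonneg _)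
  have hlim : ∀ ω, Filter.Tendsto (fun n => ENNReal.ofReal (F n ω)) Filter.atTop
      (nhds (ENNReal.ofReal (g (W ω) * W ω))) := by
    intro ω
    apply ENNReal.tendsto_ofReal
    have h1 : Filter.Tendsto ε Filter.atTop (nhds 0) := tendsto_one_div_add_atTop_nhds_zero_nat
    have h2 : Filter.Tendsto (fun n => 1 + ε n * W ω ^ 2) Filter.atTop (nhds (1 + 0 * W ω ^ 2)) :=
      (h1.mul_const _).const_add 1
    have h3 := (Filter.Tendsto.div (tendsto_const_nhds (x := W ω)) h2 (by simp)).mul_const (g (W ω))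
    have e : W ω / (1 + 0 * W ω ^ 2) * g (W ω) = g (W ω) * W ω := by simp [mul_comm]
    rw [e] at h3
    exact h3
  refine ⟨((hg.comp hW).mul hW).aestronglyMeasurable, ?_⟩
  have h0 : ∀ ω, 0 ≤ g (W ω) * W ω := fun ω => by rw [mul_comm]; exact hs _
  rw [hasFiniteIntegral_iff_ofReal (Filter.Eventually.of_forall h0)]
  have fat := lintegral_liminf_le (μ := μ) (u := Filter.atTop) (f := fun n ω => ENNReal.ofReal (F n ω))
    (fun n => (hFm n).ennreal_ofReal)
  have e1 : ∀ ω, Filter.liminf (fun n => ENNReal.ofReal (F n ω)) Filter.atTop =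
      ENNReal.ofReal (g (W ω) * W ω) := fun ω => (hlim ω).liminf_eq
  simp only [e1] at fat
  refine (fat.trans ?_).trans_lt (ENNReal.ofReal_lt_top (r := k))
  apply Filter.liminf_le_of_le
  · isBoundedDefault
  · intro b hb
    obtain ⟨n, hn⟩ := hb.exists
    refine hn.trans ?_
    rw [← ofReal_integral_eq_lintegral_ofReal (hFi n) (Filter.Eventually.of_forall (hF0 n))]
    exact ENNReal.ofReal_le_ofReal (hFk n)

end coupling


/-! ### Part K : assembling -/

section coupling2

variable {Ω : Type} [MeasurableSpace Ω] {μ : Measure Ω} [IsProbabilityMeasure μ]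
  {W W' Gv : Ω → ℝ} {g : ℝ → ℝ} {δ : ℝ}

/-- a differentiable step that is constant near the support kills the sign part -/
lemma step_zero (hW : Measurable W) (hS : SteinCoupling μ W W' Gv g) (hg : Measurable g)
    {B : ℝ} (hB : ∀ᵐ ω ∂μ, |g (W ω)| ≤ B) (σ : ℝ) (hσ : σ = 1 ∨ σ = -1)
    (hs : ∀ y, 0 < y → 0 < σ * g (σ * y)) (hd : ∀ᵐ ω ∂μ, |W' ω - W ω| ≤ 1)
    (h2 : ∀ᵐ ω ∂μ, 2 < |W ω|) : ∀ᵐ ω ∂μ, σ * W ω ≤ 0 := by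
  set f : ℝ → ℝ := fun x => smoothTransition (σ * x) with hf
  have hfd : Differentiable ℝ f := by
    have : Differentiable ℝ smoothTransition :=
      (smoothTransition.contDiff (n := 1)).differentiable (by simp)
    exact this.comp (differentiable_id.const_mul σ)
  have hσ2 : σ * σ = 1 := by rcases hσ with h | h <;> rw [h] <;> norm_num
  have hσa : |σ| = 1 := by rcases hσ with h | h <;> rw [h] <;> simp
  have hfb : ∀ x, |f x| ≤ 1 := fun x => by
    rw [abs_of_nonneg (smoothTransition.nonneg _)]; exact smoothTransition.le_one _
  have hz : ∀ᵐ ω ∂μ, Gv ω * f (W' ω) - Gv ω * f (W ω) = 0 := by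
    filter_upwards [hd, h2] with ω h1 h2
    have e : |σ * W' ω - σ * W ω| ≤ 1 := by rw [← mul_sub, abs_mul, hσa, one_mul]; exact h1
    have e2 : 2 < |σ * W ω| := by rw [abs_mul, hσa, one_mul]; exact h2
    have e3 := abs_le.1 e
    have : f (W' ω) = f (W ω) := by
      show smoothTransition (σ * W' ω) = smoothTransition (σ * W ω)
      rcases lt_abs.1 e2 with h | h
      · rw [smoothTransition.one_of_one_le (by linarith), smoothTransition.one_of_one_le (by linarith)]
      · rw [smoothTransition.zero_of_nonpos (by linarith), smoothTransition.zero_of_nonpos (by linarith)]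
    rw [this, sub_self]
  have i1 : Integrable (fun ω => Gv ω * f (W' ω) - Gv ω * f (W ω)) μ :=
    (integrable_zero Ω ℝ μ).congr (by filter_upwards [hz] with ω h; exact h.symm)
  have i2 : Integrable (fun ω => f (W ω) * g (W ω)) μ := by
    refine Integrable.of_bound ((hfd.continuous.measurable.comp hW).mul
      (hg.comp hW)).aestronglyMeasurable (1 * B) ?_
    filter_upwards [hB] with ω hω
    rw [norm_mul]
    exact mul_le_mul (hfb _) hω (norm_nonneg _) zero_le_one
  have e := hS f hfd i1 i2
  rw [integral_congr_ae (g := fun _ => (0:ℝ)) hz, integral_zero] at e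
  have e' : ∫ ω, σ * (f (W ω) * g (W ω)) ∂μ = 0 := by rw [integral_const_mul, ← e, mul_zero]
  have hpt : ∀ ω, 0 < σ * W ω → 0 < σ * g (W ω) := fun ω h => by
    have := hs (σ * W ω) h
    rwa [← mul_assoc, hσ2, one_mul] at this
  have h0 : ∀ ω, 0 ≤ σ * (f (W ω) * g (W ω)) := fun ω => by
    rcases le_or_gt (σ * W ω) 0 with h | h
    · have : f (W ω) = 0 := smoothTransition.zero_of_nonpos h
      rw [this]; simp
    · have a := hpt ω h
      have b : 0 ≤ f (W ω) := smoothTransition.nonneg _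
      have := mul_nonneg b a.le
      linarith
  have hae := (integral_eq_zero_iff_of_nonneg (fun ω => h0 ω) (i2.const_mul σ)).1 e'
  filter_upwards [hae] with ω hω
  by_contra hc
  have h := not_le.1 hc
  have a := hpt ω h
  have b : 0 < f (W ω) := smoothTransition.pos_of_pos h
  have := mul_pos b a
  have hω' : σ * (f (W ω) * g (W ω)) = 0 := hω
  linarith

lemma k_integrable {c₁ c₂ c₃ τ δ₁ B : ℝ} {K : Ω → ℝ} (H : GC g c₁ c₂ c₃) (hτ : 0 < τ) (hW : Measurable W)
    (hS : SteinCoupling μ W W' Gv g) (hB : ∀ᵐ ω ∂μ, |g (W ω)| ≤ B) (hδ₁ : 0 < δ₁)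
    (hd : ∀ᵐ ω ∂μ, |W' ω - W ω| ≤ 1) (hsm : δ₁ * (4 * exp (2 * c₃) ^ τ) ≤ 1)
    (hK1 : ∀ᵐ ω ∂μ, |(μ[K | MeasurableSpace.comap W Real.measurableSpace]) ω - 1|
            ≤ δ₁ * (|g (W ω)| ^ τ + 1)) : Integrable K μ := by
  by_contra hn
  rw [condExp_of_not_integrable hn] at hK1
  have hc := H.c3pos
  have h2 : ∀ᵐ ω ∂μ, 2 < |W ω| := by
    filter_upwards [hK1] with ω hω
    by_contra hc2
    have h := abs_le.1 (not_lt.1 hc2)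
    have hg : |g (W ω)| ≤ exp (2 * c₃) := by
      rcases le_total 0 (W ω) with h0 | h0
      · have a := H.growth0 h0
        have b : exp (c₃ * W ω) ≤ exp (2 * c₃) := by
          apply exp_le_exp.2
          have := mul_le_mul_of_nonneg_left h.2 hc.le
          linarith
        rw [abs_of_nonneg (H.nonneg h0)]; linarith
      · have a := H.growth_neg h0
        have b : exp (c₃ * (-W ω)) ≤ exp (2 * c₃) := by
          apply exp_le_exp.2
          have := mul_le_mul_of_nonneg_left (show -W ω ≤ 2 by linarith) hc.le
          linarith
        linarith
    have h3 : |g (W ω)| ^ τ ≤ exp (2 * c₃) ^ τ := rpow_le_rpow (abs_nonneg _) hg hτ.le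
    have h4 : 1 ≤ exp (2 * c₃) ^ τ := one_le_rpow (one_le_exp (by positivity)) hτ.le
    have h5 : δ₁ * (|g (W ω)| ^ τ + 1) ≤ δ₁ * (2 * exp (2 * c₃) ^ τ) :=
      mul_le_mul_of_nonneg_left (by linarith) hδ₁.le
    simp only [Pi.zero_apply, zero_sub, abs_neg, abs_one] at hω
    linarith
  have hgm := H.cont.measurable
  have p := step_zero hW hS hgm hB 1 (Or.inl rfl) (fun y hy => by
    have := H.gc.sign y hy.ne'
    rw [one_mul, one_mul]
    exact pos_of_mul_pos_right this hy.le) hd h2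
  have n := step_zero hW hS hgm hB (-1) (Or.inr rfl) (fun y hy => by
    have := H.gc.sign (-y) (by linarith)
    rw [neg_one_mul, neg_one_mul]
    have : 0 < y * (-g (-y)) := by linarith
    exact pos_of_mul_pos_right this hy.le) hd h2
  have hF : ∀ᵐ ω ∂μ, False := by
    filter_upwards [p, n, h2] with ω a b c
    have : W ω = 0 := by linarith
    rw [this] at c
    simp at c
    linarith
  simp at hF
  exact IsProbabilityMeasure.ne_zero μ hF

lemma build_SD {c₁ c₂ c₃ d₀ d₁ τ δ₁ : ℝ} (H : GC g c₁ c₂ c₃) (hd₀ : 1 ≤ d₀) (hd₁ : 0 < d₁)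
    (hτ : 0 < τ) (hδ : 0 < δ) (hδ4 : δ ≤ 1 / 4) (hδ₁ : 0 < δ₁)
    (hsm : δ₁ * (4 * exp (2 * c₃) ^ τ) ≤ 1)
    (hW : Measurable W) (hW' : Measurable W') (hG : Measurable Gv)
    (hS : SteinCoupling μ W W' Gv g) (hD : ∀ ω, |W' ω - W ω| ≤ δ)
    (hK0 : ∀ᵐ ω ∂μ, 0 ≤ KhatOneSC W W' Gv δ ω)
    (hK1 : ∀ᵐ ω ∂μ,
          |(μ[KhatOneSC W W' Gv δ | MeasurableSpace.comap W Real.measurableSpace]) ω - 1|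
            ≤ δ₁ * (|g (W ω)| ^ τ + 1))
    (hKd : ∀ᵐ ω ∂μ,
          (μ[KhatOneSC W W' Gv δ | MeasurableSpace.comap W Real.measurableSpace]) ω ≤ d₀)
    (hgd : ∀ᵐ ω ∂μ, δ * |g (W ω)| ≤ d₁) :
    ∃ (κ : ℝ → ℝ) (ν : Measure ℝ), SD g κ c₁ c₂ c₃ d₀ d₁ τ δ δ₁ (μ.map W) ν := by
  have hgm := H.cont.measurable
  have eK : KhatOneSC W W' Gv δ = fun ω => Gv ω * (W' ω - W ω) := funext fun ω => khat_eq W W' Gv hδ ω (hD ω)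
  have hB : ∀ᵐ ω ∂μ, |g (W ω)| ≤ d₁ / δ := by
    filter_upwards [hgd] with ω h
    rw [le_div_iff₀ hδ]; linarith
  have hKi := k_integrable H hτ hW hS hB hδ₁
    (Filter.Eventually.of_forall fun ω => (hD ω).trans (by linarith)) hsm hK1
  rw [eK] at hKi hK0 hK1 hKd
  set K : Ω → ℝ := fun ω => Gv ω * (W' ω - W ω) with hKdef
  have hKm : Measurable K := hG.mul (hW'.sub hW)
  have hle : MeasurableSpace.comap W Real.measurableSpace ≤ ‹MeasurableSpace Ω› := hW.comap_le
  obtain ⟨κ, hκs, hκ⟩ := (stronglyMeasurable_condExp (μ := μ) (f := K)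
    (m := MeasurableSpace.comap W Real.measurableSpace)).exists_eq_measurable_comp
  have hκm : Measurable κ := hκs.measurable
  have hκ0 := condExp_nonneg (m := MeasurableSpace.comap W Real.measurableSpace) hK0
  rw [hκ] at hK1 hKd hκ0
  have hgwi : Integrable (fun ω => g (W ω) * W ω) μ :=
    gw_int hW hW' hG hS hKi hgm (fun y => by
      rcases eq_or_ne y 0 with h | h
      · rw [h]; simp
      · exact (H.gc.sign y h).le) hB
  have hgw0 : ∀ ω, 0 ≤ g (W ω) * W ω := fun ω => by
    rcases eq_or_ne (W ω) 0 with h | h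
    · rw [h]; simp
    · rw [mul_comm]; exact (H.gc.sign _ h).le
  obtain ⟨ν, hνf, hν⟩ := push μ hKi hKm hK0 hW (hW'.sub hW)
  obtain ⟨ν', hνf', hν'⟩ := push μ hgwi ((hgm.comp hW).mul hW) (Filter.Eventually.of_forall hgw0)
    (measurable_const (a := (0:ℝ))) hW
  have hν'2 : ∀ ψ : ℝ → ℝ, Measurable ψ → (∃ M, ∀ x, |ψ x| ≤ M) →
      ∫ x, ψ x ∂ν' = ∫ ω, g (W ω) * (∫ x in (0:ℝ)..W ω, ψ x) ∂μ := by
    intro ψ hψ hb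
    rw [hν' ψ hψ hb]
    congr 1
    funext ω
    rw [mul_assoc, intervalIntegral.mul_integral_comp_add_mul]
    simp
  have heq : ν = ν' := by
    apply ext_of_forall_integral_eq_of_IsFiniteMeasure
    intro ψ
    have hψc : Continuous ψ := ψ.continuous
    have hψm := hψc.measurable
    have hψb : ∀ x, |ψ x| ≤ ‖ψ‖ := fun x => ψ.norm_coe_le_norm x
    rw [hν ψ hψm ⟨_, hψb⟩, hν'2 ψ hψm ⟨_, hψb⟩]
    set f : ℝ → ℝ := fun x => ∫ t in (0:ℝ)..x, ψ t with hf
    have hfd : ∀ x, HasDerivAt f (ψ x) x := fun x =>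
      intervalIntegral.integral_hasDerivAt_right (hψc.intervalIntegrable _ _)
        (hψc.stronglyMeasurableAtFilter _ _) hψc.continuousAt
    have hfD : Differentiable ℝ f := fun x => (hfd x).differentiableAt
    have hlip : ∀ x y, |f y - f x| ≤ ‖ψ‖ * |y - x| := fun x y =>
      mvt_abs (fun t _ => hfd t) (fun t _ => hψb t)
    have hfi : Integrable (fun ω => f (W ω) * g (W ω)) μ := by
      refine (hgwi.const_mul ‖ψ‖).mono ((hfD.continuous.measurable.comp hW).mul
        (hgm.comp hW)).aestronglyMeasurable ?_
      filter_upwards with ω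
      have h1 := hlip 0 (W ω)
      have h2 : f 0 = 0 := by simp [hf]
      rw [h2, sub_zero, sub_zero] at h1
      rw [norm_mul, norm_mul, norm_mul, Real.norm_eq_abs (f _), Real.norm_eq_abs ‖ψ‖,
        abs_of_nonneg (norm_nonneg ψ), Real.norm_eq_abs (W ω)]
      calc |f (W ω)| * ‖g (W ω)‖ ≤ (‖ψ‖ * |W ω|) * ‖g (W ω)‖ :=
            mul_le_mul_of_nonneg_right h1 (norm_nonneg _)
        _ = _ := by ring
    obtain ⟨_, e⟩ := stein_lip hW hW' hG hS hKi hfD hlip hfi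
    have e1 : ∫ ω, g (W ω) * (∫ x in (0:ℝ)..W ω, ψ x) ∂μ = ∫ ω, f (W ω) * g (W ω) ∂μ := by
      congr 1
      funext ω
      rw [mul_comm]
    rw [e1, ← e]
    congr 1
    funext ω
    rw [hKdef]
    show Gv ω * (W' ω - W ω) * ∫ s in (0:ℝ)..1, ψ (W ω + (W' ω - W ω) * s) = _
    rw [mul_assoc, intervalIntegral.mul_integral_comp_add_mul, ← mul_sub, hf]
    show _ = Gv ω * ((∫ t in (0:ℝ)..W' ω, ψ t) - ∫ t in (0:ℝ)..W ω, ψ t)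
    rw [intervalIntegral.integral_interval_sub_left (hψc.intervalIntegrable _ _)
      (hψc.intervalIntegrable _ _)]
    simp
  have hmean : ∫ ω, g (W ω) ∂μ = 0 := by
    have hgi : Integrable (fun ω => (1:ℝ) * g (W ω)) μ := by
      refine Integrable.of_bound ((hgm.comp hW).const_mul 1).aestronglyMeasurable (d₁ / δ) ?_
      filter_upwards [hB] with ω hω
      simpa using hω
    have := hS (fun _ => 1) (differentiable_const _) (by simp) hgi
    simpa using this.symm
  refine ⟨κ, ν, ?_⟩
  refine
    { G := H
      hd₀ := hd₀
      hd₁ := hd₁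
      hτ := hτ
      hδ := hδ
      hδ4 := hδ4
      hδ₁ := hδ₁
      pP := Measure.isProbabilityMeasure_map hW.aemeasurable
      fν := hνf
      κm := hκm
      κ0 := ?_
      κd := ?_
      κ1 := ?_
      gd := ?_
      mean := ?_
      gw := ?_
      id := ?_
      up := ?_ }
  · exact (ae_map_iff hW.aemeasurable (measurableSet_le measurable_const hκm)).2 hκ0
  · exact (ae_map_iff hW.aemeasurable (measurableSet_le hκm measurable_const)).2 hKd
  · refine (ae_map_iff hW.aemeasurable (measurableSet_le ?_ ?_)).2 hK1
    · exact (hκm.sub_const 1).abs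
    · exact ((hgm.abs.pow_const τ).add_const 1).const_mul δ₁
  · exact (ae_map_iff hW.aemeasurable (measurableSet_le (hgm.abs.const_mul δ) measurable_const)).2 hgd
  · rw [integral_map hW.aemeasurable hgm.aestronglyMeasurable]
    exact hmean
  · refine (integrable_map_measure (hgm.mul measurable_id).aestronglyMeasurable hW.aemeasurable).2 ?_
    exact hgwi
  · intro ψ hψ hb
    rw [heq, hν'2 ψ hψ hb]
    obtain ⟨M, hM⟩ := hb
    have hc : Continuous (fun w => ∫ x in (0:ℝ)..w, ψ x) := by
      apply intervalIntegral.continuous_primitive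
      intro a b
      rw [intervalIntegrable_iff]
      exact Measure.integrableOn_of_bounded (M := M) (by simp) hψ.aestronglyMeasurable
        (Filter.Eventually.of_forall (by simpa using hM))
    have hm2 : Measurable (fun w => g w * ∫ x in (0:ℝ)..w, ψ x) := hgm.mul hc.measurable
    rw [integral_map hW.aemeasurable hm2.aestronglyMeasurable]
  · intro ψ φ M hψ hφ hψb hφb h
    have hφW : Measurable (fun ω => φ (W ω)) := hφ.comp hW
    have iφK : Integrable (fun ω => φ (W ω) * K ω) μ :=
      hKi.bdd_mul (c := M) hφW.aestronglyMeasurable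
        (Filter.Eventually.of_forall fun ω => hφb _)
    have e1 : ∫ w, φ w * κ w ∂(μ.map W) = ∫ ω, φ (W ω) * K ω ∂μ := by
      have hm3 : Measurable (fun w => φ w * κ w) := hφ.mul hκm
      rw [integral_map hW.aemeasurable hm3.aestronglyMeasurable,
        ← integral_condExp hle (f := fun ω => φ (W ω) * K ω)]
      apply integral_congr_ae
      have hsm' : StronglyMeasurable[MeasurableSpace.comap W Real.measurableSpace]
          (fun ω => φ (W ω)) := by
        apply Measurable.stronglyMeasurable
        exact hφ.comp (comap_measurable W)
      have := condExp_mul_of_stronglyMeasurable_left (μ := μ) hsm' iφK hKi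
      filter_upwards [this] with ω hω
      have hω' : (μ[fun ω => φ (W ω) * K ω | MeasurableSpace.comap W Real.measurableSpace]) ω =
          φ (W ω) * (μ[K | MeasurableSpace.comap W Real.measurableSpace]) ω := hω
      rw [hω', hκ]
      rfl
    rw [e1, hν ψ hψ ⟨M, hψb⟩]
    have hInt1 : ∀ ω, IntervalIntegrable (fun s => ψ (W ω + (W' ω - W ω) * s)) volume 0 1 := by
      intro ω
      rw [intervalIntegrable_iff]
      exact Measure.integrableOn_of_bounded (M := M) (by simp)
        (hψ.comp ((measurable_id.const_mul _).const_add _)).aestronglyMeasurable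
        (Filter.Eventually.of_forall (fun s => by simpa using hψb _))
    have hpt : ∀ ω, ∫ s in (0:ℝ)..1, ψ (W ω + (W' ω - W ω) * s) ≤ φ (W ω) := by
      intro ω
      have := intervalIntegral.integral_mono_on zero_le_one (hInt1 ω)
        (intervalIntegrable_const (μ := volume) (c := φ (W ω))) (fun s hs => h (W ω) ((W' ω - W ω) * s) (by
          rw [abs_mul, abs_of_nonneg hs.1]
          calc |W' ω - W ω| * s ≤ δ * 1 := mul_le_mul (hD ω) hs.2 hs.1 hδ.le
            _ = δ := mul_one _))
      simpa using this
    have hJm : Measurable (fun ω => ∫ s in (0:ℝ)..1, ψ (W ω + (W' ω - W ω) * s)) := by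
      simp only [intervalIntegral.integral_of_le zero_le_one]
      have hjm : Measurable (fun p : Ω × ℝ => ψ (W p.1 + (W' p.1 - W p.1) * p.2)) := by
        apply hψ.comp
        fun_prop
      exact (hjm.stronglyMeasurable.integral_prod_right').measurable
    have hJb : ∀ ω, ‖∫ s in (0:ℝ)..1, ψ (W ω + (W' ω - W ω) * s)‖ ≤ M := by
      intro ω
      have := intervalIntegral.norm_integral_le_of_norm_le_const (a := (0:ℝ)) (b := 1) (C := M)
        (f := fun s => ψ (W ω + (W' ω - W ω) * s)) (fun s _ => by simpa using hψb _)
      simpa using this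
    have iJ : Integrable (fun ω => (∫ s in (0:ℝ)..1, ψ (W ω + (W' ω - W ω) * s)) * K ω) μ :=
      hKi.bdd_mul (c := M) hJm.aestronglyMeasurable (Filter.Eventually.of_forall hJb)
    have e2 : ∫ ω, K ω * (∫ s in (0:ℝ)..1, ψ (W ω + (W' - W) ω * s)) ∂μ =
        ∫ ω, (∫ s in (0:ℝ)..1, ψ (W ω + (W' ω - W ω) * s)) * K ω ∂μ := by
      congr 1
      funext ω
      rw [mul_comm]
      rfl
    refine le_trans (le_of_eq e2) ?_
    apply integral_mono_ae iJ iφK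
    filter_upwards [hK0] with ω h0
    exact mul_le_mul_of_nonneg_right (hpt ω) h0

end coupling2


theorem stmt_2 (c₁ c₂ c₃ d₀ d₁ τ₁ μ₁ : ℝ)
    (hd₀ : 1 ≤ d₀) (hd₁ : 0 < d₁) (hτ₁ : 0 < τ₁) :
    ∃ C : ℝ, 0 < C ∧
      ∀ (Ω : Type) [MeasurableSpace Ω] (μ : Measure Ω),
        IsProbabilityMeasure μ →
        ∀ (W W' Gv : Ω → ℝ) (g : ℝ → ℝ) (δ δ₁ : ℝ),
        Measurable W → Measurable W' → Measurable Gv →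
        GCond g c₂ c₃ →
        0 < c₁ → (∫ y : ℝ, pfun g c₁ y) = 1 →
        max (g 1) |g (-1)| = μ₁ →
        0 < δ → 0 < δ₁ →
        SteinCoupling μ W W' Gv g →
        (∀ ω, |W' ω - W ω| ≤ δ) →
        -- `K̂₁ ≥ 0`
        (∀ᵐ ω ∂μ, 0 ≤ KhatOneSC W W' Gv δ ω) →
        -- condition (2.6)
        (∀ᵐ ω ∂μ,
          |(μ[KhatOneSC W W' Gv δ | MeasurableSpace.comap W Real.measurableSpace]) ω - 1|
            ≤ δ₁ * (|g (W ω)| ^ τ₁ + 1)) →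
        -- condition (2.8)
        (∀ᵐ ω ∂μ,
          (μ[KhatOneSC W W' Gv δ | MeasurableSpace.comap W Real.measurableSpace]) ω ≤ d₀) →
        -- condition (2.9)
        (∀ᵐ ω ∂μ, δ * |g (W ω)| ≤ d₁) →
        ∀ z : ℝ, 0 ≤ z →
          δ * z * g z ^ 2 + δ₁ * z * g z ^ (τ₁ + 1) ≤ 1 →
          |(μ {ω | z < W ω}).toReal / (∫ y in Set.Ioi z, pfun g c₁ y) - 1|
            ≤ C * (δ * (1 + z * g z ^ 2) + δ₁ * (1 + z * g z ^ (τ₁ + 1))) := by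
  by_cases hc₁ : 0 < c₁
  swap
  · exact ⟨1, one_pos, fun Ω _ μ _ W W' Gv g δ δ₁ _ _ _ _ h => absurd h hc₁⟩
  by_cases hc₃ : 1 ≤ c₃
  swap
  · exact ⟨1, one_pos, fun Ω _ μ _ W W' Gv g δ δ₁ _ _ _ h => absurd h.c₃ge hc₃⟩
  obtain ⟨C, ε, hC, hε, hε4, hεs, hmain⟩ :=
    main_abs c₁ c₃ d₀ τ₁ hc₁ hd₀ (by linarith) hτ₁
  obtain ⟨C2, hC2, ht2⟩ := triv_case c₁ c₃ ε 2 hc₁ hε (by norm_num)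
  obtain ⟨Ct, hCt, htt⟩ := triv_case c₁ c₃ ε (τ₁ + 1) hc₁ hε (by linarith)
  refine ⟨C + C2 + Ct, by positivity, ?_⟩
  intro Ω _ μ hμ W W' Gv g δ δ₁ hW hW' hG hg _ hnrm _ hδ hδ₁ hS hD hK0 hK1 hKd hgd z hz hyp
  have H : GC g c₁ c₂ c₃ := ⟨hg, hc₁, hnrm⟩
  have hgz : 0 ≤ g z := H.nonneg hz
  have ha : 0 ≤ z * g z ^ 2 := by positivity
  have hb : 0 ≤ z * g z ^ (τ₁ + 1) := mul_nonneg hz (Real.rpow_nonneg hgz _)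
  have hda : 0 ≤ δ * (z * g z ^ 2) := mul_nonneg hδ.le ha
  have hdb : 0 ≤ δ₁ * (z * g z ^ (τ₁ + 1)) := mul_nonneg hδ₁.le hb
  have hp1 : (μ {ω | z < W ω}).toReal ≤ 1 := by
    have := measureReal_le_one (μ := μ) (s := {ω | z < W ω})
    exact this
  have hp0 : 0 ≤ (μ {ω | z < W ω}).toReal := ENNReal.toReal_nonneg
  set R := δ * (1 + z * g z ^ 2) + δ₁ * (1 + z * g z ^ (τ₁ + 1)) with hR
  have hRδ : δ ≤ R := by rw [hR]; nlinarith
  have hRδ₁ : δ₁ ≤ R := by rw [hR]; nlinarith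
  have hRp : 0 < R := lt_of_lt_of_le hδ hRδ
  rcases le_or_gt ε δ with h1 | h1
  · have := ht2 g c₂ δ z _ H hz h1 (by rw [Real.rpow_two]; nlinarith) hp0 hp1
    refine this.trans ?_
    calc C2 * δ ≤ C2 * R := mul_le_mul_of_nonneg_left hRδ hC2.le
      _ ≤ _ := mul_le_mul_of_nonneg_right (by linarith) hRp.le
  rcases le_or_gt ε δ₁ with h2 | h2
  · have := htt g c₂ δ₁ z _ H hz h2 (by nlinarith) hp0 hp1
    refine this.trans ?_
    calc Ct * δ₁ ≤ Ct * R := mul_le_mul_of_nonneg_left hRδ₁ hCt.le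
      _ ≤ _ := mul_le_mul_of_nonneg_right (by linarith) hRp.le
  obtain ⟨κ, ν, hSD⟩ := build_SD H hd₀ hd₁ hτ₁ hδ (h1.le.trans hε4) hδ₁
    ((mul_le_mul_of_nonneg_right h2.le (by positivity)).trans hεs)
    hW hW' hG hS hD hK0 hK1 hKd hgd
  have := hmain g κ c₂ d₁ δ δ₁ (μ.map W) ν z hSD h1.le h2.le hz hyp
  have e : (μ.map W).real (Set.Ioi z) = (μ {ω | z < W ω}).toReal := by
    rw [Measure.real, Measure.map_apply hW measurableSet_Ioi]
    rfl
  rw [e] at this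
  refine this.trans ?_
  exact mul_le_mul_of_nonneg_right (by linarith) hRp.le
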